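/- The space X_iw is reflexive, contains no isomorphic copy of ℓ1 or of c0, and for every block subspace Y of X_iw and every p ∈ [1,∞], the unit vector basis of ℓp (of c0 when p = ∞) is finitely block representable in Y; that is, the Krivine set of every block subspace of X_iw equals [1,∞]. -/

import Mathlib

/-!
The argument revolves around *special convex combinations* (`IW.IsScc`): convex combinations of
blocks giving little mass to sets of level `n` in the Schreier hierarchy.

**Lower estimates.**  Every normalized block sequence has a subsequence `v` with
`∑ b_k ≤ C m_j ‖∑ b_k v_k‖` for `b ≥ 0` supported on `S_{n_j}` sets (`IW.exists_lowerEst`).  Either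
the blocks are almost normed by functionals of unbounded weights, and these can be made very fast
growing, or the weights are bounded, and then the pieces of the norming functionals, without the
first ones, form a very fast growing family.

**Rapidly increasing sequences.**  Special convex combinations of level `n_{j₀}` satisfy uniform
bounds against all admissible families of weight below `m_{j₀}` (`IW.FamBound`).  If all of these had
norm at most `1 - η`, iterating them would contradict the lower estimates, because
`D ^ n_j / m_j → ∞` for `D > 1`.  So some have norm almost one (`IW.exists_seed`); these are almost
normed by functionals of large weight and form a rapidly increasing sequence (`IW.exists_ris`).

**Maxima of weighted `ℓ₁` norms.**  Given nonnegative `lam r i`, take weights `m_{j_1} ≪ m_{j_2} ≪ ⋯`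
and the vectors `z_i = ∑_r lam_{r,i} m_{j_r} y_{r,i}`, where `y_{r,i}` is a special convex combination
of level `n_{j_r} - 1` of a rapidly increasing sequence.  A functional of weight `m_{j_r}` reads off
the `r`-th row, and no functional does better, so `‖∑ a_i z_i‖` is about
`max_r ∑_i lam_{r,i} |a_i|` (`IW.grid_lower`, `IW.grid_upper`, `IW.exists_blocks`).

**Conclusion.**  The norm of `ℓ_q^n` is approximately such a maximum (`IW.finLqNorm_net`), which gives
all Krivine exponents in every block subspace (`IW.krivine`).  The case of `ℓ_∞^n`, represented by
positive combinations, shows that the basis is shrinking (`IW.shrinking`), and the lower estimates show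
that it is boundedly complete (`IW.boundedly_complete`); hence the space is reflexive
(`IW.reflexive`) and contains neither `ℓ₁` nor `c₀` (`IW.not_l1`, `IW.not_c0`).
-/

open Filter Topology
open scoped ENNReal

noncomputable section

/-! ### Abstract Banach space notions -/

section Abstract

variable {X : Type*} [NormedAddCommGroup X] [NormedSpace ℝ X]

/-- A sequence is normalized if every term has norm one. -/
def Normalized (x : ℕ → X) : Prop := ∀ i, ‖x i‖ = 1

/-- A sequence is weakly null if it tends to `0` in the weak topology. -/
def WeaklyNull (x : ℕ → X) : Prop :=
  ∀ f : X →L[ℝ] ℝ, Tendsto (fun i => f (x i)) atTop (𝓝 (0 : ℝ))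

end Abstract

/-- The ℓ₁ norm of finite coefficient vectors (the norms of finite linear
combinations of the unit vector basis of ℓ₁). -/
def l1Norm : ∀ m : ℕ, (Fin m → ℝ) → ℝ := fun _ a => ∑ i, |a i|

/-- The sup norm of finite coefficient vectors (the norms of finite linear
combinations of the unit vector basis of c₀). -/
def supNorm : ∀ m : ℕ, (Fin m → ℝ) → ℝ := fun _ a => ⨆ i, |a i|

/-- The ℓ_p norm of finite coefficient vectors, `1 ≤ p < ∞`. -/
def lpNormFin (p : ℝ) : ∀ m : ℕ, (Fin m → ℝ) → ℝ := fun _ a => (∑ i, |a i| ^ p) ^ (1 / p)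

/-- The ℓ_q norms of finite coefficient vectors, `q ∈ [1,∞]`, where `q = ∞`
corresponds to `c₀`. -/
def finLqNorm (q : ℝ≥0∞) : ∀ m : ℕ, (Fin m → ℝ) → ℝ := fun m a =>
  if q = ⊤ then supNorm m a else lpNormFin q.toReal m a

/-- The family of seminorms `ν` (of finite combinations of a sequence in a seminormed
space) is `C`-equivalent to the family `μ`:  there are `A B > 0` with `A * B ≤ C` and
`(1/A) * μ ≤ ν ≤ B * μ`. -/
def NormFamEquiv (C : ℝ) (μ ν : ∀ m : ℕ, (Fin m → ℝ) → ℝ) : Prop :=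
  ∃ A B : ℝ, 0 < A ∧ 0 < B ∧ A * B ≤ C ∧
    ∀ (m : ℕ) (a : Fin m → ℝ), (1 / A) * μ m a ≤ ν m a ∧ ν m a ≤ B * μ m a

section Abstract2

variable {X : Type*} [NormedAddCommGroup X] [NormedSpace ℝ X]

/-- The sequence `x` generates the spreading model whose finite-combination
seminorms are given by the family `ν`. -/
def GeneratesSpreadingModel (x : ℕ → X) (ν : ∀ m : ℕ, (Fin m → ℝ) → ℝ) : Prop :=
  ∀ (m : ℕ) (a : Fin m → ℝ), ∀ ε > (0 : ℝ), ∃ N : ℕ, ∀ j : Fin m → ℕ,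
    StrictMono j → (∀ i, N ≤ j i) → |‖∑ i, a i • x (j i)‖ - ν m a| < ε

/-- The array of sequences `A` (row `A i` is the `i`-th sequence) generates the
asymptotic model whose finite-combination seminorms are given by `ν`. -/
def GeneratesAsymptoticModel (A : ℕ → ℕ → X) (ν : ∀ l : ℕ, (Fin l → ℝ) → ℝ) : Prop :=
  ∀ (l : ℕ) (a : Fin l → ℝ), ∀ ε > (0 : ℝ), ∃ N : ℕ, ∀ j : Fin l → ℕ,
    StrictMono j → (∀ i, N ≤ j i) → |‖∑ i, a i • A i (j i)‖ - ν l a| < ε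

/-- `e` is a Schauder basis of `X`. -/
def IsSchauderBasis (e : ℕ → X) : Prop :=
  ∀ x : X, ∃! a : ℕ → ℝ,
    Tendsto (fun n => ∑ i ∈ Finset.range n, a i • e i) atTop (𝓝 x)

/-- The basis `e` is 1-unconditional. -/
def OneUnconditional (e : ℕ → X) : Prop :=
  ∀ (F : Finset ℕ) (a ε : ℕ → ℝ), (∀ i, ε i = 1 ∨ ε i = -1) →
    ‖∑ i ∈ F, (ε i * a i) • e i‖ = ‖∑ i ∈ F, a i • e i‖

/-- `x` is a block sequence with respect to the basis `e`. -/
def IsBlockSeq (e : ℕ → X) (x : ℕ → X) : Prop :=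
  ∃ F : ℕ → Finset ℕ, (∀ k, (F k).Nonempty) ∧
    (∀ k l : ℕ, k < l → ∀ i ∈ F k, ∀ j ∈ F l, i < j) ∧
    ∀ k, x k ≠ 0 ∧ x k ∈ Submodule.span ℝ (e '' ↑(F k))

/-- `z` is a finite block sequence with respect to the basis `e`. -/
def IsFinBlockSeq (e : ℕ → X) {n : ℕ} (z : Fin n → X) : Prop :=
  ∃ F : Fin n → Finset ℕ, (∀ k, (F k).Nonempty) ∧
    (∀ k l : Fin n, k < l → ∀ i ∈ F k, ∀ j ∈ F l, i < j) ∧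
    ∀ k, z k ≠ 0 ∧ z k ∈ Submodule.span ℝ (e '' ↑(F k))

/-- `Y` is a block subspace of `X` (with respect to the basis `e`): the closed
linear span of an infinite normalized block sequence. -/
def IsBlockSubspace (e : ℕ → X) (Y : Set X) : Prop :=
  ∃ y : ℕ → X, IsBlockSeq e y ∧ Normalized y ∧
    Y = closure (↑(Submodule.span ℝ (Set.range y)) : Set X)

/-- The finite sequence `z` is `C`-equivalent to a finite basic sequence whose
finite-combination norms are given by `μ`. -/
def FinSeqEquiv (C : ℝ) {n : ℕ} (μ : (Fin n → ℝ) → ℝ) (z : Fin n → X) : Prop :=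
  ∃ A B : ℝ, 0 < A ∧ 0 < B ∧ A * B ≤ C ∧
    ∀ a : Fin n → ℝ, (1 / A) * μ a ≤ ‖∑ i, a i • z i‖ ∧ ‖∑ i, a i • z i‖ ≤ B * μ a

/-- The finite basic sequence with combination norms `μ` is block representable
in `Y ⊆ X`. -/
def BlockRepresentableIn (e : ℕ → X) (Y : Set X) {n : ℕ} (μ : (Fin n → ℝ) → ℝ) : Prop :=
  ∀ ε > (0 : ℝ), ∃ z : Fin n → X, (∀ i, z i ∈ Y) ∧ IsFinBlockSeq e z ∧
    FinSeqEquiv (1 + ε) μ z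

/-- `x` is a (Schauder) basic sequence. -/
def IsBasicSeq (x : ℕ → X) : Prop :=
  (∀ i, x i ≠ 0) ∧ ∃ K : ℝ, 0 < K ∧ ∀ (a : ℕ → ℝ) (m n : ℕ), m ≤ n →
    ‖∑ i ∈ Finset.range m, a i • x i‖ ≤ K * ‖∑ i ∈ Finset.range n, a i • x i‖

end Abstract2

/-- A plegma of `k` strictly increasing `l`-tuples of naturals. -/
def IsPlegma (k l : ℕ) (s : Fin k → Fin l → ℕ) : Prop :=
  (∀ i, StrictMono (s i)) ∧
  (∀ i₁ i₂ : Fin k, ∀ j₁ j₂ : Fin l, j₁ < j₂ → s i₁ j₁ < s i₂ j₂) ∧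
  (∀ i₁ i₂ : Fin k, i₁ < i₂ → ∀ j, s i₁ j ≤ s i₂ j)

/-- A strict plegma: a plegma with pairwise disjoint tuples. -/
def IsStrictPlegma (k l : ℕ) (s : Fin k → Fin l → ℕ) : Prop :=
  IsPlegma k l s ∧ ∀ i₁ i₂ : Fin k, i₁ ≠ i₂ → ∀ j₁ j₂ : Fin l, s i₁ j₁ ≠ s i₂ j₂

section Abstract3

variable {X : Type*} [NormedAddCommGroup X] [NormedSpace ℝ X]

/-- The `l`-array `x` generates the joint spreading model with finite-combination
seminorms `ν`. -/
def GeneratesJSM (l : ℕ) (x : Fin l → ℕ → X)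
    (ν : ∀ k : ℕ, (Fin l → Fin k → ℝ) → ℝ) : Prop :=
  ∀ (k : ℕ) (a : Fin l → Fin k → ℝ), ∀ ε > (0 : ℝ), ∃ N : ℕ,
    ∀ s : Fin l → Fin k → ℕ, IsStrictPlegma l k s → (∀ i j, N ≤ s i j) →
      |‖∑ i, ∑ j, a i j • x i (s i j)‖ - ν k a| < ε

/-- `X` admits a unique joint spreading model with respect to the family of
sequences `F`. -/
def UniqueJSM (F : Set (ℕ → X)) : Prop :=
  ∃ C : ℝ, 1 ≤ C ∧ ∀ (l : ℕ) (x y : Fin l → ℕ → X),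
    (∀ i, x i ∈ F) → (∀ i, y i ∈ F) →
    ∀ ν μ, GeneratesJSM l x ν → GeneratesJSM l y μ →
      ∃ A B : ℝ, 0 < A ∧ 0 < B ∧ A * B ≤ C ∧
        ∀ (k : ℕ) (a : Fin l → Fin k → ℝ),
          (1 / A) * μ k a ≤ ν k a ∧ ν k a ≤ B * μ k a

/-- `X` admits a unique asymptotic model with respect to the family of
sequences `F`. -/
def UniqueAM (F : Set (ℕ → X)) : Prop :=
  ∀ x y : ℕ → ℕ → X, (∀ i, x i ∈ F) → (∀ i, y i ∈ F) →
    ∀ ν μ, GeneratesAsymptoticModel x ν → GeneratesAsymptoticModel y μ →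
      ∃ C : ℝ, 1 ≤ C ∧ NormFamEquiv C μ ν

end Abstract3

/-- A bundled Banach-space candidate. -/
structure BanachPkg : Type 1 where
  X : Type
  [grp : NormedAddCommGroup X]
  [mod : NormedSpace ℝ X]

attribute [instance] BanachPkg.grp BanachPkg.mod

/-! ### c₀₀ and the norming sets -/

/-- The finitely supported real sequences. -/
abbrev c00 : Type := ℕ →₀ ℝ

/-- Minimum of the support (0 for the zero vector). -/
def minSupp (x : c00) : ℕ := if h : x.support.Nonempty then x.support.min' h else 0

/-- Maximum of the support (0 for the zero vector). -/
def maxSupp (x : c00) : ℕ := if h : x.support.Nonempty then x.support.max' h else 0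

/-- Minimum of a finset of naturals (0 if empty). -/
def finsetMin (F : Finset ℕ) : ℕ := if h : F.Nonempty then F.min' h else 0

/-- `x < y` as successive (block) vectors. -/
def Blocks (x y : c00) : Prop := maxSupp x < minSupp y

/-- The Schreier families. -/
def Schreier : ℕ → Set (Finset ℕ)
  | 0 => {F | ∃ i : ℕ, F = {i}}
  | n + 1 => {F | ∃ (d : ℕ) (G : Fin d → Finset ℕ),
      (∀ k, G k ∈ Schreier n) ∧
      (∀ k l : Fin d, k < l → ∀ i ∈ G k, ∀ j ∈ G l, i < j) ∧
      (∀ i ∈ F, d ≤ i) ∧ F = Finset.univ.biUnion G}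

/-- The family `A_m` of sets of cardinality at most `m`. -/
def SchreierA (m : ℕ) : Set (Finset ℕ) := {F | F.card ≤ m}

/-- The operation `A * B` on families of finite sets. -/
def famStar (A B : Set (Finset ℕ)) : Set (Finset ℕ) :=
  {F | ∃ (d : ℕ) (G : Fin d → Finset ℕ),
      (∀ k, G k ∈ B) ∧ (∀ k, (G k).Nonempty) ∧
      (∀ k l : Fin d, k < l → ∀ i ∈ G k, ∀ j ∈ G l, i < j) ∧
      (Finset.univ.image fun k => finsetMin (G k)) ∈ A ∧ F = Finset.univ.biUnion G}

/-- A finite block sequence in `c00` is `S`-admissible. -/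
def Admissible (S : Set (Finset ℕ)) {d : ℕ} (f : Fin d → c00) : Prop :=
  (∀ q, (f q).support.Nonempty) ∧
  (∀ q r : Fin d, q < r → Blocks (f q) (f r)) ∧
  (Finset.univ.image fun q => minSupp (f q)) ∈ S

/-- The two fixed sequences `(m_j)`, `(n_j)` (indexed here starting at `0`, so that
`m 0` plays the role of `m_1` etc.) together with their growth conditions. -/
structure IWParams where
  m : ℕ → ℕ
  n : ℕ → ℕ
  m_mono : StrictMono m
  n_mono : StrictMono n
  m_first : m 0 = 2
  n_first : n 0 = 1
  growth_exp : ∀ C : ℝ, 1 < C → Tendsto (fun j => C ^ (n j) / (m j : ℝ)) atTop atTop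
  growth_ratio : Tendsto (fun j => (m j : ℝ) / (m (j + 1) : ℝ)) atTop (𝓝 0)
  growth_sum : ∀ (l : ℕ) (js : Fin l → ℕ) (j : ℕ), (∀ i, js i ≤ j) →
    (∏ i, m (js i)) < m (j + 1) ^ 2 → (∑ i, n (js i)) + 1 < n (j + 1)

/-- The action of a functional `f ∈ c00` on a vector `x ∈ c00`. -/
def evalPair (f x : c00) : ℝ := f.sum fun i a => a * x i

/-- The norming set `W_iw`, together with admissible weights: `WIW P f w` means
that `f` belongs to the norming set and `w` is a weight of (one representation of)
`f`; the unit functionals `±e_i^*` have weight `∞`. -/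
inductive WIW (P : IWParams) : c00 → ℕ∞ → Prop
  | unit (i : ℕ) (s : ℝ) (hs : s = 1 ∨ s = -1) : WIW P (Finsupp.single i s) ⊤
  | op (l : ℕ) (hl : 0 < l) (js : Fin l → ℕ) (d : ℕ) (f : Fin d → c00) (w : Fin d → ℕ∞)
      (hf : ∀ q, WIW P (f q) (w q))
      (hadm : Admissible (Schreier (∑ i, P.n (js i))) f)
      (hvfg : ∀ q r : Fin d, (q : ℕ) + 1 = (r : ℕ) → (maxSupp (f q) : ℕ∞) < w r) :
      WIW P (((∏ i, P.m (js i) : ℕ) : ℝ)⁻¹ • ∑ q, f q) ((∏ i, P.m (js i) : ℕ) : ℕ∞)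

/-- Membership in the norming set `W_iw`. -/
def memWIW (P : IWParams) (f : c00) : Prop := ∃ w, WIW P f w

/-- The norm of `X_iw`, on finitely supported vectors. -/
def iwNorm (P : IWParams) (x : c00) : ℝ :=
  sSup {r | ∃ f, memWIW P f ∧ r = evalPair f x}

/-- The dual norm of a finitely supported functional, as an element of `X_iw^*`. -/
def iwDualNorm (P : IWParams) (f : c00) : ℝ :=
  sSup {r | ∃ x : c00, iwNorm P x ≤ 1 ∧ r = evalPair f x}

/-- The auxiliary norming set `W_aux^N` together with admissible weights. -/
inductive WAux (P : IWParams) (N : ℕ) : c00 → ℕ∞ → Prop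
  | unit (i : ℕ) (s : ℝ) (hs : s = 1 ∨ s = -1) : WAux P N (Finsupp.single i s) ⊤
  | op (l : ℕ) (hl : 0 < l) (js : Fin l → ℕ) (d : ℕ) (f : Fin d → c00) (w : Fin d → ℕ∞)
      (hf : ∀ q, WAux P N (f q) (w q))
      (hadm : Admissible (famStar (Schreier (∑ i, P.n (js i))) (SchreierA 3)) f)
      (hlarge : ∀ q : Fin d, 0 < (q : ℕ) → (N : ℕ∞) < w q) :
      WAux P N (((∏ i, P.m (js i) : ℕ) : ℝ)⁻¹ • ∑ q, f q) ((∏ i, P.m (js i) : ℕ) : ℕ∞)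

/-- An `(n, ε)` basic special convex combination. -/
def IsBasicSCC (n : ℕ) (ε : ℝ) (x : c00) : Prop :=
  ∃ F : Finset ℕ, x.support ⊆ F ∧ F ∈ Schreier n ∧ (∀ i, 0 ≤ x i) ∧
    (∑ i ∈ F, x i) = 1 ∧ ∀ G ⊆ F, G ∈ Schreier (n - 1) → (∑ i ∈ G, x i) < ε

/-- An `(n, ε)` special convex combination `∑ c i • x i`. -/
def IsSCC (n : ℕ) (ε : ℝ) {m : ℕ} (c : Fin m → ℝ) (x : Fin m → c00) : Prop :=
  (∀ i, (x i).support.Nonempty) ∧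
  (∀ i j : Fin m, i < j → Blocks (x i) (x j)) ∧
  IsBasicSCC n ε (∑ i, c i • Finsupp.single (minSupp (x i)) (1 : ℝ))

/-- `x` generates, with respect to the norm function `Nrm` on `c00`, the spreading
model whose finite-combination seminorms are `ν`. -/
def GeneratesSMwith (Nrm : c00 → ℝ) (x : ℕ → c00) (ν : ∀ m : ℕ, (Fin m → ℝ) → ℝ) : Prop :=
  ∀ (m : ℕ) (a : Fin m → ℝ), ∀ ε > (0 : ℝ), ∃ N : ℕ, ∀ j : Fin m → ℕ,
    StrictMono j → (∀ i, N ≤ j i) → |Nrm (∑ i, a i • x (j i)) - ν m a| < ε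

/-- The array `A` generates, with respect to the norm function `Nrm` on `c00`, the
asymptotic model whose finite-combination seminorms are `ν`. -/
def GeneratesAMwith (Nrm : c00 → ℝ) (A : ℕ → ℕ → c00) (ν : ∀ l : ℕ, (Fin l → ℝ) → ℝ) : Prop :=
  ∀ (l : ℕ) (a : Fin l → ℝ), ∀ ε > (0 : ℝ), ∃ N : ℕ, ∀ j : Fin l → ℕ,
    StrictMono j → (∀ i, N ≤ j i) → |Nrm (∑ i, a i • A i (j i)) - ν l a| < ε

/-- A normalized block sequence in `c00` with respect to a norm function. -/
def IsNormBlockSeq (Nrm : c00 → ℝ) (y : ℕ → c00) : Prop :=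
  (∀ k, (y k).support.Nonempty) ∧ (∀ k, Blocks (y k) (y (k + 1))) ∧ ∀ k, Nrm (y k) = 1

/-- A `(C, (j_i)_{i ∈ I})` rapidly increasing sequence, `I` a (finite) interval. -/
def IsRIS (P : IWParams) (C : ℝ) (I : Finset ℕ) (j : ℕ → ℕ) (x : ℕ → c00) : Prop :=
  (∀ a ∈ I, ∀ b ∈ I, ∀ c : ℕ, a ≤ c → c ≤ b → c ∈ I) ∧
  (∀ a ∈ I, ∀ b ∈ I, a < b → j a < j b) ∧
  (∀ i ∈ I, (x i).support.Nonempty) ∧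
  (∀ a ∈ I, ∀ b ∈ I, a < b → Blocks (x a) (x b)) ∧
  (∀ i ∈ I, iwNorm P (x i) ≤ C) ∧
  (∀ i ∈ I, ∀ i' ∈ I, i' + 1 = i → (maxSupp (x i') : ℝ) < Real.sqrt (P.m (j i))) ∧
  (∀ i ∈ I, ∀ f w, WIW P f w → w < ((P.m (j i) : ℕ) : ℕ∞) →
    |evalPair f (x i)| ≤ C / (w.toNat : ℝ))

/-- An infinite `(C, (j_i)_i)` rapidly increasing sequence. -/
def IsRISNat (P : IWParams) (C : ℝ) (j : ℕ → ℕ) (x : ℕ → c00) : Prop :=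
  StrictMono j ∧ (∀ i, (x i).support.Nonempty) ∧ (∀ i, Blocks (x i) (x (i + 1))) ∧
  (∀ i, iwNorm P (x i) ≤ C) ∧
  (∀ i, (maxSupp (x i) : ℝ) < Real.sqrt (P.m (j (i + 1)))) ∧
  (∀ i, ∀ f w, WIW P f w → w < ((P.m (j i) : ℕ) : ℕ∞) →
    |evalPair f (x i)| ≤ C / (w.toNat : ℝ))

/-- `X` together with the basis `e` is a realization of the space `X_iw`: a Banach
space in which `c00` sits isometrically (w.r.t. `iwNorm`) and densely. -/
structure IsIWRealization (P : IWParams) (X : Type*) [NormedAddCommGroup X]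
    [NormedSpace ℝ X] (e : ℕ → X) : Prop where
  complete : CompleteSpace X
  dense : DenseRange fun a : c00 => ∑ i ∈ a.support, a i • e i
  norm_eq : ∀ a : c00, ‖∑ i ∈ a.support, a i • e i‖ = iwNorm P a

/-- The conjugate exponent of `p`. -/
def conjExp (p : ℝ) : ℝ := p / (p - 1)

/-- The norming set `W_iw^p` together with admissible weights. -/
inductive WIWp (P : IWParams) (p : ℝ) : c00 → ℕ∞ → Prop
  | unit (i : ℕ) (s : ℝ) (hs : s = 1 ∨ s = -1) : WIWp P p (Finsupp.single i s) ⊤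
  | op (l : ℕ) (hl : 0 < l) (js : Fin l → ℕ) (d : ℕ) (f : Fin d → c00) (w : Fin d → ℕ∞)
      (lam : Fin d → ℝ) (hlam : (∑ q, |lam q| ^ conjExp p) ≤ 1)
      (hf : ∀ q, WIWp P p (f q) (w q))
      (hadm : Admissible (Schreier (∑ i, P.n (js i))) f)
      (hvfg : ∀ q r : Fin d, (q : ℕ) + 1 = (r : ℕ) → (maxSupp (f q) : ℕ∞) < w r) :
      WIWp P p (((∏ i, P.m (js i) : ℕ) : ℝ)⁻¹ • ∑ q, lam q • f q)
        ((∏ i, P.m (js i) : ℕ) : ℕ∞)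

/-- The norm of `X_iw^p` on finitely supported vectors. -/
def iwpNorm (P : IWParams) (p : ℝ) (x : c00) : ℝ :=
  sSup {r | ∃ f, (∃ w, WIWp P p f w) ∧ r = evalPair f x}

/-- The norming set of the space `X̃_iw`, together with admissible weights. -/
inductive WT (P : IWParams) : c00 → ℕ∞ → Prop
  | unit (i : ℕ) (s : ℝ) (hs : s = 1 ∨ s = -1) : WT P (Finsupp.single i s) ⊤
  | op (j : ℕ) (d : ℕ) (f : Fin d → c00) (w : Fin d → ℕ∞)
      (hf : ∀ q, WT P (f q) (w q))
      (hadm : Admissible (Schreier (P.n j)) f)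
      (hvfg : ∀ q r : Fin d, (q : ℕ) + 1 = (r : ℕ) → (maxSupp (f q) : ℕ∞) < w r) :
      WT P ((P.m j : ℝ)⁻¹ • ∑ q, f q) ((P.m j : ℕ) : ℕ∞)

/-- The norm of `X̃_iw` on finitely supported vectors. -/
def tNorm (P : IWParams) (x : c00) : ℝ :=
  sSup {r | ∃ f, (∃ w, WT P f w) ∧ r = evalPair f x}

end

namespace IW

/-! ### Schreier families on index sets -/

/-- `Sch p n F`: the set of markers `{p a : a ∈ F}` belongs to the `n`-th Schreier family (or is
empty).  The decomposition of `F` into successive pieces is encoded by a monotone colouring `κ`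
whose values lie below `min p(F)`. -/
def Sch {ι : Type} [LinearOrder ι] (p : ι → ℕ) : ℕ → Finset ι → Prop
  | 0, F => F.card ≤ 1
  | n + 1, F => ∃ κ : ι → ℕ, (∀ a ∈ F, ∀ b ∈ F, a ≤ b → κ a ≤ κ b) ∧
      (∀ a ∈ F, ∀ b ∈ F, κ a < p b) ∧ ∀ k, Sch p n (F.filter (fun a => κ a = k))

/-- `F` is a union of at most `d` successive sets of `n`-th Schreier type. -/
def ColSch {ι : Type} [LinearOrder ι] (p : ι → ℕ) (n d : ℕ) (F : Finset ι) : Prop :=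
  ∃ κ : ι → ℕ, (∀ a ∈ F, ∀ b ∈ F, a ≤ b → κ a ≤ κ b) ∧
      (∀ a ∈ F, κ a < d) ∧ ∀ k, Sch p n (F.filter (fun a => κ a = k))

section
variable {ι ι' : Type} [LinearOrder ι] [LinearOrder ι']

/-- Schreier families are hereditary and spreading. -/
theorem Sch.spread {p : ι → ℕ} {p' : ι' → ℕ} (h : ι' → ι) :
    ∀ {n : ℕ} {F : Finset ι} {F' : Finset ι'}, Sch p n F →
    (∀ b ∈ F', h b ∈ F) → (∀ b ∈ F', ∀ b' ∈ F', b < b' → h b < h b') →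
    (∀ b ∈ F', p (h b) ≤ p' b) → Sch p' n F'
  | 0, F, F', hF, h1, h2, _ => by
    refine le_trans (Finset.card_le_card_of_injOn h h1 ?_) hF
    intro a ha b hb hab
    rcases lt_trichotomy a b with h | h | h
    · exact absurd hab (h2 a ha b hb h).ne
    · exact h
    · exact absurd hab.symm (h2 b hb a ha h).ne
  | n + 1, F, F', hF, h1, h2, h3 => by
    obtain ⟨κ, k1, k2, k3⟩ := hF
    refine ⟨fun b => κ (h b), ?_, ?_, ?_⟩
    · intro a ha b hb hab
      refine k1 _ (h1 a ha) _ (h1 b hb) ?_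
      rcases hab.lt_or_eq with hh | hh
      · exact (h2 a ha b hb hh).le
      · rw [hh]
    · intro a ha b hb
      exact lt_of_lt_of_le (k2 _ (h1 a ha) _ (h1 b hb)) (h3 b hb)
    · intro k
      refine Sch.spread h (k3 k) ?_ ?_ ?_
      · intro b hb
        rw [Finset.mem_filter] at hb ⊢
        exact ⟨h1 b hb.1, hb.2⟩
      · intro b hb b' hb'
        exact h2 b (Finset.mem_filter.1 hb).1 b' (Finset.mem_filter.1 hb').1
      · intro b hb
        exact h3 b (Finset.mem_filter.1 hb).1

theorem Sch.subset {p : ι → ℕ} {n : ℕ} {F F' : Finset ι} (hF : Sch p n F) (h : F' ⊆ F) :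
    Sch p n F' :=
  hF.spread id (fun b hb => h hb) (fun _ _ _ _ h => h) (fun _ _ => le_rfl)

theorem Sch.empty (p : ι → ℕ) : ∀ n, Sch p n (∅ : Finset ι)
  | 0 => by simp [Sch]
  | n + 1 => ⟨fun _ => 0, by simp, by simp, by simpa using Sch.empty p n⟩

theorem Sch.succ {p : ι → ℕ} {n : ℕ} {F : Finset ι} (hF : Sch p n F) (h : ∀ a ∈ F, 1 ≤ p a) :
    Sch p (n + 1) F :=
  ⟨fun _ => 0, by simp, fun _ _ b hb => h b hb, fun _ => hF.subset (Finset.filter_subset _ _)⟩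

theorem Sch.mono {p : ι → ℕ} {n n' : ℕ} {F : Finset ι} (hF : Sch p n F) (hn : n ≤ n')
    (h : ∀ a ∈ F, 1 ≤ p a) : Sch p n' F := by
  induction hn with
  | refl => exact hF
  | step _ ih => exact ih.succ h

theorem Sch.singleton (p : ι → ℕ) (n : ℕ) (a : ι) (h : 1 ≤ p a) : Sch p n {a} :=
  Sch.mono (n := 0) (by simp [Sch]) (Nat.zero_le _) (by simpa using h)

/-- The composition rule `S_n[S_k] ⊆ S_{k+n}`, where the map `π` sends an index to its group. -/
theorem Sch.comp {p : ι → ℕ} {p' : ι' → ℕ} (π : ι → ι') {k : ℕ} :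
    ∀ {n : ℕ} {F : Finset ι}, (∀ a ∈ F, ∀ b ∈ F, a ≤ b → π a ≤ π b) →
      (∀ a ∈ F, p' (π a) ≤ p a) → Sch p' n (F.image π) →
      (∀ s, Sch p k (F.filter (fun a => π a = s))) → Sch p (k + n) F
  | 0, F, _, _, h3, h4 => by
    rcases F.eq_empty_or_nonempty with rfl | ⟨a, ha⟩
    · exact Sch.empty _ _
    · refine (h4 (π a)).subset ?_
      intro b hb
      rw [Finset.mem_filter]
      exact ⟨hb, Finset.card_le_one.1 h3 _ (Finset.mem_image_of_mem _ hb) _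
        (Finset.mem_image_of_mem _ ha)⟩
  | n + 1, F, h1, h2, h3, h4 => by
    obtain ⟨κ, k1, k2, k3⟩ := h3
    refine ⟨fun a => κ (π a), ?_, ?_, ?_⟩
    · intro a ha b hb hab
      exact k1 _ (Finset.mem_image_of_mem _ ha) _ (Finset.mem_image_of_mem _ hb)
        (h1 a ha b hb hab)
    · intro a ha b hb
      exact lt_of_lt_of_le (k2 _ (Finset.mem_image_of_mem _ ha) _ (Finset.mem_image_of_mem _ hb))
        (h2 b hb)
    · intro c
      refine Sch.comp (p' := p') π (n := n) ?_ ?_ ?_ ?_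
      · intro a ha b hb
        exact h1 a (Finset.mem_filter.1 ha).1 b (Finset.mem_filter.1 hb).1
      · intro a ha
        exact h2 a (Finset.mem_filter.1 ha).1
      · refine (k3 c).subset ?_
        intro s hs
        obtain ⟨a, ha, rfl⟩ := Finset.mem_image.1 hs
        rw [Finset.mem_filter] at ha ⊢
        exact ⟨Finset.mem_image_of_mem _ ha.1, ha.2⟩
      · intro s
        refine (h4 s).subset ?_
        exact Finset.filter_subset_filter _ (Finset.filter_subset _ _)

theorem ColSch.sch {p : ι → ℕ} {n d : ℕ} {F : Finset ι} (h : ColSch p n d F)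
    (hd : ∀ a ∈ F, d ≤ p a) : Sch p (n + 1) F := by
  obtain ⟨κ, k1, k2, k3⟩ := h
  exact ⟨κ, k1, fun a ha b hb => lt_of_lt_of_le (k2 a ha) (hd b hb), k3⟩

theorem Sch.col {p : ι → ℕ} {n : ℕ} {F : Finset ι} (h : Sch p n F) : ColSch p n 1 F :=
  ⟨fun _ => 0, by simp, by simp, fun _ => h.subset (Finset.filter_subset _ _)⟩

theorem ColSch.append {p : ι → ℕ} {n d d' : ℕ} {F F' : Finset ι} (h : ColSch p n d F)
    (h' : ColSch p n d' F') (hlt : ∀ a ∈ F, ∀ b ∈ F', a < b) :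
    ColSch p n (d + d') (F ∪ F') := by
  classical
  obtain ⟨κ, k1, k2, k3⟩ := h
  obtain ⟨κ', k1', k2', k3'⟩ := h'
  have hnot : ∀ b ∈ F', b ∉ F := fun b hb hb' => lt_irrefl _ (hlt b hb' b hb)
  refine ⟨fun a => if a ∈ F then κ a else d + κ' a, ?_, ?_, ?_⟩
  · intro a ha b hb hab
    rcases Finset.mem_union.1 ha with ha | ha <;> rcases Finset.mem_union.1 hb with hb | hb
    · simpa [ha, hb] using k1 a ha b hb hab
    · have := k2 a ha
      simp only [ha, hnot b hb, if_true, if_false]; omega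
    · exact absurd (hlt b hb a ha) (not_lt.2 hab)
    · simpa [hnot a ha, hnot b hb] using k1' a ha b hb hab
  · intro a ha
    rcases Finset.mem_union.1 ha with ha | ha
    · have := k2 a ha
      simp only [ha, if_true]; omega
    · have := k2' a ha
      simp only [hnot a ha, if_false]; omega
  · intro k
    by_cases hk : k < d
    · refine (k3 k).subset ?_
      intro a ha
      rw [Finset.mem_filter, Finset.mem_union] at ha
      rw [Finset.mem_filter]
      by_cases haF : a ∈ F
      · simpa [haF] using ha.2
      · have := ha.2
        simp only [haF, if_false] at this; omega
    · refine (k3' (k - d)).subset ?_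
      intro a ha
      rw [Finset.mem_filter, Finset.mem_union] at ha
      rw [Finset.mem_filter]
      by_cases haF : a ∈ F
      · have h1 := ha.2
        have h2 := k2 a haF
        simp only [haF, if_true] at h1; omega
      · have h1 := ha.2
        simp only [haF, if_false] at h1
        exact ⟨ha.1.resolve_left haF, by omega⟩

end

/-! ### Comparison with the families `Schreier n` -/

theorem sch_of_schreier : ∀ {n : ℕ} {F : Finset ℕ}, F ∈ Schreier n → Sch id n F
  | 0, F, hF => by
    obtain ⟨i, rfl⟩ := hF
    simp [Sch]
  | n + 1, F, hF => by
    classical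
    obtain ⟨d, G, h1, h2, h3, rfl⟩ := hF
    have hk : ∀ a ∈ Finset.univ.biUnion G, ∃ k, a ∈ G k := by
      intro a ha
      simpa using ha
    let κ : ℕ → ℕ := fun a => if h : ∃ k, a ∈ G k then (h.choose : ℕ) else 0
    have hκ : ∀ a ∈ Finset.univ.biUnion G, ∃ k : Fin d, a ∈ G k ∧ κ a = k := by
      intro a ha
      have h := hk a ha
      exact ⟨h.choose, h.choose_spec, by simp only [κ, dif_pos h]⟩
    refine ⟨κ, ?_, ?_, ?_⟩
    · intro a ha b hb hab
      obtain ⟨k, hk, hk'⟩ := hκ a ha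
      obtain ⟨l, hl, hl'⟩ := hκ b hb
      rw [hk', hl']
      by_contra hlt
      have := h2 l k (by simpa using hlt) b hl a hk
      omega
    · intro a ha b hb
      obtain ⟨k, hk, hk'⟩ := hκ a ha
      rw [hk']
      exact lt_of_lt_of_le k.2 (h3 b hb)
    · intro k
      by_cases hkd : k < d
      · refine (sch_of_schreier (h1 ⟨k, hkd⟩)).subset ?_
        intro a ha
        rw [Finset.mem_filter] at ha
        obtain ⟨l, hl, hl'⟩ := hκ a ha.1
        have : l = ⟨k, hkd⟩ := Fin.ext (by rw [← hl', ha.2])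
        rwa [← this]
      · convert Sch.empty id n
        rw [Finset.filter_eq_empty_iff]
        intro a ha hak
        obtain ⟨l, hl, hl'⟩ := hκ a ha
        have := l.2
        omega

theorem empty_mem_schreier (n : ℕ) : (∅ : Finset ℕ) ∈ Schreier (n + 1) :=
  ⟨0, fun k => k.elim0, fun k => k.elim0, fun k => k.elim0, by simp, by simp⟩

theorem schreier_of_sch : ∀ {n : ℕ} {F : Finset ℕ}, F.Nonempty → Sch id n F → F ∈ Schreier n
  | 0, F, hne, hF => by
    have : F.card = 1 := le_antisymm hF (Finset.card_pos.2 hne)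
    exact Finset.card_eq_one.1 this
  | 1, F, hne, hF => by
    obtain ⟨κ, k1, k2, k3⟩ := hF
    refine ⟨F.card, fun k => {F.orderEmbOfFin rfl k}, fun k => ⟨_, rfl⟩, ?_, ?_, ?_⟩
    · intro k l hkl i hi j hj
      rw [Finset.mem_singleton] at hi hj
      rw [hi, hj]
      exact (F.orderEmbOfFin rfl).strictMono hkl
    · intro i hi
      have : F.card ≤ (Finset.range i).card := by
        refine Finset.card_le_card_of_injOn κ ?_ ?_
        · intro a ha
          simpa using k2 a ha i hi
        · intro a ha b hb hab
          exact Finset.card_le_one.1 (k3 (κ b)) a (by simpa using ⟨ha, hab⟩) b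
            (by simpa using hb)
      simpa using this
    · ext a
      simp only [Finset.mem_biUnion, Finset.mem_univ, true_and, Finset.mem_singleton]
      constructor
      · intro h
        have hr := Finset.range_orderEmbOfFin F rfl
        have h' : a ∈ Set.range (F.orderEmbOfFin rfl) := by rw [hr]; exact h
        obtain ⟨k, hk⟩ := h'
        exact ⟨k, hk.symm⟩
      · rintro ⟨k, rfl⟩
        exact Finset.orderEmbOfFin_mem F rfl k
  | n + 2, F, hne, hF => by
    obtain ⟨κ, k1, k2, k3⟩ := hF
    refine ⟨F.min' hne, fun k => F.filter (fun a => κ a = k), ?_, ?_, ?_, ?_⟩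
    · intro k
      rcases (F.filter (fun a => κ a = k)).eq_empty_or_nonempty with h | h
      · change F.filter (fun a => κ a = (k : ℕ)) ∈ _
        rw [h]; exact empty_mem_schreier n
      · exact schreier_of_sch h (k3 k)
    · intro k l hkl i hi j hj
      rw [Finset.mem_filter] at hi hj
      by_contra hij
      have := k1 j hj.1 i hi.1 (by omega)
      have : (k : ℕ) < l := hkl
      omega
    · intro i hi
      exact Finset.min'_le _ _ hi
    · ext a
      simp only [Finset.mem_biUnion, Finset.mem_univ, true_and, Finset.mem_filter]
      constructor
      · intro ha
        exact ⟨⟨κ a, k2 a ha _ (Finset.min'_mem _ _)⟩, ha, rfl⟩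
      · rintro ⟨_, h, _⟩
        exact h

/-! ### Special convex combinations -/

/-- `c` is a probability vector on `F` giving mass at most `ε` to sets of `n`-th Schreier type. -/
structure IsScc (p : ℕ → ℕ) (n : ℕ) (ε : ℝ) (F : Finset ℕ) (c : ℕ → ℝ) : Prop where
  nonneg : ∀ t, 0 ≤ c t
  zero : ∀ t, t ∉ F → c t = 0
  sum : ∑ t ∈ F, c t = 1
  small : ∀ G ⊆ F, Sch p n G → ∑ t ∈ G, c t ≤ ε

theorem IsScc.nonempty {p : ℕ → ℕ} {n : ℕ} {ε : ℝ} {F : Finset ℕ} {c : ℕ → ℝ}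
    (h : IsScc p n ε F c) : F.Nonempty := by
  rw [Finset.nonempty_iff_ne_empty]
  rintro rfl
  simpa using h.sum

theorem IsScc.le {p : ℕ → ℕ} {n : ℕ} {ε : ℝ} {F : Finset ℕ} {c : ℕ → ℝ}
    (h : IsScc p n ε F c) (hε : 0 ≤ ε) {t : ℕ} (hp : 1 ≤ p t) : c t ≤ ε := by
  by_cases ht : t ∈ F
  · simpa using h.small {t} (by simpa using ht) (Sch.singleton p n t hp)
  · rw [h.zero t ht]; exact hε

/-- Successive averages of level `n` pile up so that a set of level `n` sees essentially only one
of them: the pieces are chosen with mass so spread out that a set which begins at or before an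
earlier piece captures at most `η` of a later one. -/
theorem scc_aux {p : ℕ → ℕ} {n : ℕ}
    (hA : ∀ ε : ℝ, 0 < ε → ∀ T : ℕ, ∃ (F : Finset ℕ) (c : ℕ → ℝ), (∀ t ∈ F, T ≤ t) ∧
      (∀ t, 0 ≤ c t) ∧ (∀ t, t ∉ F → c t = 0) ∧ ∑ t ∈ F, c t = 1 ∧ Sch p n F ∧
      ∀ n', n = n' + 1 → ∀ G ⊆ F, Sch p n' G → ∑ t ∈ G, c t ≤ ε)
    (η : ℝ) (hη : 0 < η) (T : ℕ) (r : ℕ) :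
    ∃ (F : Finset ℕ) (c : ℕ → ℝ), (∀ t ∈ F, T ≤ t) ∧
      (∀ t, 0 ≤ c t) ∧ (∀ t, t ∉ F → c t = 0) ∧ ∑ t ∈ F, c t = r ∧ ColSch p n r F ∧
      ∀ G ⊆ F, Sch p n G → ∑ t ∈ G, c t ≤ 1 + r * η := by
  classical
  induction r with
  | zero =>
    refine ⟨∅, fun _ => 0, by simp, by simp, by simp, by simp,
      ⟨fun _ => 0, by simp, by simp, fun k => ?_⟩, ?_⟩
    · simpa using Sch.empty p n
    · intro G _ _; simp
  | succ r ih =>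
    obtain ⟨F, c, h1, h2, h3, h4, h5, h6⟩ := ih
    -- an upper bound for the markers of the part already built
    set Pm : ℕ := F.sup p + 1 with hPm
    have hPpos : (0 : ℝ) < Pm := by exact_mod_cast Nat.succ_pos _
    obtain ⟨F', c', h1', h2', h3', h4', h5', h6'⟩ :=
      hA (η / Pm) (div_pos hη hPpos) (max T (F.sup id + 1))
    have hlt : ∀ a ∈ F, ∀ b ∈ F', a < b := by
      intro a ha b hb
      have := h1' b hb
      have h' : a ≤ F.sup id := Finset.le_sup (f := id) ha
      omega
    have hdisj : Disjoint F F' := by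
      rw [Finset.disjoint_left]
      intro a ha ha'
      exact lt_irrefl _ (hlt a ha a ha')
    refine ⟨F ∪ F', fun t => c t + c' t, ?_, ?_, ?_, ?_, h5.append h5'.col hlt, ?_⟩
    · intro t ht
      rcases Finset.mem_union.1 ht with ht | ht
      · exact h1 t ht
      · exact le_trans (le_max_left _ _) (h1' t ht)
    · intro t; exact add_nonneg (h2 t) (h2' t)
    · intro t ht
      rw [Finset.mem_union, not_or] at ht
      simp [h3 t ht.1, h3' t ht.2]
    · have e1 : ∑ t ∈ F, (c t + c' t) = ∑ t ∈ F, c t :=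
        Finset.sum_congr rfl (fun t ht => by simp [h3' t (Finset.disjoint_left.1 hdisj ht)])
      have e2 : ∑ t ∈ F', (c t + c' t) = ∑ t ∈ F', c' t :=
        Finset.sum_congr rfl (fun t ht => by simp [h3 t (Finset.disjoint_right.1 hdisj ht)])
      rw [Finset.sum_union hdisj, e1, e2, h4, h4']; push_cast; ring
    · intro G hG hS
      have hsplit : ∑ t ∈ G, (c t + c' t) = ∑ t ∈ G ∩ F, c t + ∑ t ∈ G ∩ F', c' t := by
        rw [Finset.sum_add_distrib]
        congr 1
        · symm
          refine Finset.sum_subset Finset.inter_subset_left ?_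
          intro t ht ht'
          exact h3 t (fun hh => ht' (Finset.mem_inter.2 ⟨ht, hh⟩))
        · symm
          refine Finset.sum_subset Finset.inter_subset_left ?_
          intro t ht ht'
          exact h3' t (fun hh => ht' (Finset.mem_inter.2 ⟨ht, hh⟩))
      rw [hsplit]
      have hF := h6 (G ∩ F) Finset.inter_subset_right (hS.subset Finset.inter_subset_left)
      push_cast
      rcases (G ∩ F).eq_empty_or_nonempty with he | ⟨a, ha⟩
      · rw [he, Finset.sum_empty]
        have : ∑ t ∈ G ∩ F', c' t ≤ ∑ t ∈ F', c' t :=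
          Finset.sum_le_sum_of_subset_of_nonneg Finset.inter_subset_right (fun t _ _ => h2' t)
        have h0 : 0 ≤ (r : ℝ) * η := by positivity
        nlinarith
      · have haG := (Finset.mem_inter.1 ha).1
        have haF := (Finset.mem_inter.1 ha).2
        have key : ∑ t ∈ G ∩ F', c' t ≤ η := by
          cases n with
          | zero =>
            have : G ∩ F' = ∅ := by
              rw [Finset.eq_empty_iff_forall_notMem]
              intro b hb
              have hb' := Finset.mem_inter.1 hb
              have := Finset.card_le_one.1 hS a haG b hb'.1
              have h'' := hlt a haF b hb'.2
              omega
            rw [this, Finset.sum_empty]; exact hη.le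
          | succ n' =>
            obtain ⟨κ, k1, k2, k3⟩ := hS
            have hmaps : ∀ t ∈ G ∩ F', κ t ∈ Finset.range Pm := by
              intro t ht
              have := k2 t (Finset.mem_inter.1 ht).1 a haG
              have h' : p a ≤ F.sup p := Finset.le_sup haF
              rw [Finset.mem_range]; omega
            rw [← Finset.sum_fiberwise_of_maps_to hmaps]
            have : ∀ k ∈ Finset.range Pm,
                ∑ t ∈ (G ∩ F').filter (fun t => κ t = k), c' t ≤ η / Pm := by
              intro k _
              refine h6' n' rfl _ ?_ ?_
              · exact (Finset.filter_subset _ _).trans Finset.inter_subset_right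
              · exact (k3 k).subset (Finset.filter_subset_filter _ Finset.inter_subset_left)
            refine (Finset.sum_le_sum this).trans ?_
            rw [Finset.sum_const, Finset.card_range, nsmul_eq_mul]
            field_simp
            exact le_rfl
        linarith

/-- The average of `d > 2 / ε` successive pieces is a special convex combination: a set of level `n`
sees essentially only one of the pieces, that is, mass about `1 / d`. -/
theorem scc_step {p : ℕ → ℕ} {n : ℕ}
    (hA : ∀ ε : ℝ, 0 < ε → ∀ T : ℕ, ∃ (F : Finset ℕ) (c : ℕ → ℝ), (∀ t ∈ F, T ≤ t) ∧
      (∀ t, 0 ≤ c t) ∧ (∀ t, t ∉ F → c t = 0) ∧ ∑ t ∈ F, c t = 1 ∧ Sch p n F ∧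
      ∀ n', n = n' + 1 → ∀ G ⊆ F, Sch p n' G → ∑ t ∈ G, c t ≤ ε) (ε : ℝ) (hε : 0 < ε) :
    ∃ d : ℕ, ∀ T : ℕ, ∃ (F : Finset ℕ) (c : ℕ → ℝ), (∀ t ∈ F, T ≤ t) ∧
      ColSch p n d F ∧ IsScc p n ε F c := by
  obtain ⟨d, hd⟩ := exists_nat_gt (2 / ε)
  have hdpos : (0 : ℝ) < d := lt_trans (by positivity) hd
  refine ⟨d, fun T => ?_⟩
  obtain ⟨F, c, h1, h2, h3, h4, h5, h6⟩ := scc_aux hA (1 / d) (by positivity) T d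
  refine ⟨F, fun t => c t / d, h1, h5, ⟨fun t => div_nonneg (h2 t) hdpos.le, ?_, ?_, ?_⟩⟩
  · intro t ht; simp [h3 t ht]
  · rw [← Finset.sum_div, h4, div_self hdpos.ne']
  · intro G hG hS
    rw [← Finset.sum_div, div_le_iff₀ hdpos]
    refine (h6 G hG hS).trans ?_
    rw [mul_one_div_cancel hdpos.ne']
    rw [div_lt_iff₀ hε] at hd
    linarith

/-- Probability vectors on sets of level `n` which are spread out at the preceding level, by induction
on `n`. -/
theorem scc_base {p : ℕ → ℕ} (hp : StrictMono p) (n : ℕ) :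
    ∀ ε : ℝ, 0 < ε → ∀ T : ℕ, ∃ (F : Finset ℕ) (c : ℕ → ℝ), (∀ t ∈ F, T ≤ t) ∧
      (∀ t, 0 ≤ c t) ∧ (∀ t, t ∉ F → c t = 0) ∧ ∑ t ∈ F, c t = 1 ∧ Sch p n F ∧
      ∀ n', n = n' + 1 → ∀ G ⊆ F, Sch p n' G → ∑ t ∈ G, c t ≤ ε := by
  classical
  induction n with
  | zero =>
    intro ε hε T
    refine ⟨{T}, fun t => if t = T then 1 else 0, by simp, ?_, ?_, by simp, by simp [Sch], ?_⟩
    · intro t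
      dsimp only
      split_ifs <;> norm_num
    · intro t ht
      rw [Finset.mem_singleton] at ht
      simp [ht]
    · intro n' hn'; omega
  | succ n ih =>
    intro ε hε T
    obtain ⟨d, hd⟩ := scc_step ih ε hε
    obtain ⟨F, c, h1, h2, h3⟩ := hd (max T d)
    refine ⟨F, c, fun t ht => le_trans (le_max_left _ _) (h1 t ht), h3.nonneg, h3.zero, h3.sum,
      h2.sch ?_, ?_⟩
    · intro a ha
      exact le_trans (le_trans (le_max_right _ _) (h1 a ha)) hp.le_apply
    · intro n' hn' G hG hS
      have : n = n' := by omega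
      subst this
      exact h3.small G hG hS

/-- Special convex combinations exist; the number `d` of level-`n` pieces does not depend on the
starting point `T`. -/
theorem scc_exists {p : ℕ → ℕ} (hp : StrictMono p) (n : ℕ) (ε : ℝ) (hε : 0 < ε) :
    ∃ d : ℕ, ∀ T : ℕ, ∃ (F : Finset ℕ) (c : ℕ → ℝ), (∀ t ∈ F, T ≤ t) ∧
      ColSch p n d F ∧ IsScc p n ε F c :=
  scc_step (scc_base hp n) ε hε

end IW

namespace IW

/-! ### The pairing and pointwise multiplication -/

theorem evalPair_eq_sum (f x : c00) {S : Finset ℕ} (h : f.support ⊆ S) :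
    evalPair f x = ∑ i ∈ S, f i * x i := by
  refine Finset.sum_subset h ?_
  intro i _ hi
  simp [Finsupp.notMem_support_iff.1 hi]

theorem evalPair_eq_sum' (f x : c00) {S : Finset ℕ} (h : x.support ⊆ S) :
    evalPair f x = ∑ i ∈ S, f i * x i := by
  classical
  rw [evalPair_eq_sum f x (Finset.subset_union_left (s₂ := S))]
  symm
  refine Finset.sum_subset Finset.subset_union_right ?_
  intro i _ hi
  rw [Finsupp.notMem_support_iff.1 (fun hh => hi (h hh)), mul_zero]

theorem evalPair_add (f x y : c00) : evalPair f (x + y) = evalPair f x + evalPair f y := by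
  simp [evalPair, Finsupp.sum, mul_add, Finset.sum_add_distrib]

theorem evalPair_smul (f : c00) (c : ℝ) (x : c00) : evalPair f (c • x) = c * evalPair f x := by
  simp only [evalPair, Finsupp.sum, Finset.mul_sum, Finsupp.smul_apply, smul_eq_mul]
  exact Finset.sum_congr rfl fun i _ => by ring

theorem add_evalPair (f g x : c00) : evalPair (f + g) x = evalPair f x + evalPair g x := by
  rw [evalPair_eq_sum' _ x subset_rfl, evalPair_eq_sum' f x subset_rfl,
    evalPair_eq_sum' g x subset_rfl, ← Finset.sum_add_distrib]
  exact Finset.sum_congr rfl fun i _ => by simp [add_mul]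

theorem smul_evalPair (f : c00) (c : ℝ) (x : c00) : evalPair (c • f) x = c * evalPair f x := by
  rw [evalPair_eq_sum' _ x subset_rfl, evalPair_eq_sum' f x subset_rfl, Finset.mul_sum]
  exact Finset.sum_congr rfl fun i _ => by simp [mul_assoc]

theorem evalPair_zero (f : c00) : evalPair f 0 = 0 := by simp [evalPair, Finsupp.sum]

theorem zero_evalPair (x : c00) : evalPair 0 x = 0 := by simp [evalPair]

theorem evalPair_sum {α : Type*} (f : c00) (S : Finset α) (x : α → c00) :
    evalPair f (∑ a ∈ S, x a) = ∑ a ∈ S, evalPair f (x a) := by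
  classical
  induction S using Finset.induction_on with
  | empty => simp [evalPair_zero]
  | insert a S ha ih => rw [Finset.sum_insert ha, Finset.sum_insert ha, evalPair_add, ih]

theorem sum_evalPair {α : Type*} (S : Finset α) (f : α → c00) (x : c00) :
    evalPair (∑ a ∈ S, f a) x = ∑ a ∈ S, evalPair (f a) x := by
  classical
  induction S using Finset.induction_on with
  | empty => simp [zero_evalPair]
  | insert a S ha ih => rw [Finset.sum_insert ha, Finset.sum_insert ha, add_evalPair, ih]

theorem evalPair_single (i : ℕ) (s : ℝ) (x : c00) : evalPair (Finsupp.single i s) x = s * x i := by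
  simp [evalPair]

/-- If a functional does not vanish on `x`, the supports meet. -/
theorem exists_mem_of_evalPair_ne_zero {f x : c00} (h : evalPair f x ≠ 0) :
    ∃ i, i ∈ f.support ∧ i ∈ x.support := by
  by_contra hcon
  push Not at hcon
  refine h (Finset.sum_eq_zero fun i hi => ?_)
  simp [Finsupp.notMem_support_iff.1 (hcon i hi)]

/-- Pointwise multiplication of a finitely supported sequence by an arbitrary sequence. -/
noncomputable def mulv (θ : ℕ → ℝ) (f : c00) : c00 :=
  Finsupp.onFinset f.support (fun i => θ i * f i) (fun i hi => by
    rw [Finsupp.mem_support_iff]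
    intro h
    rw [h, mul_zero] at hi
    exact hi rfl)

@[simp] theorem mulv_apply (θ : ℕ → ℝ) (f : c00) (i : ℕ) : mulv θ f i = θ i * f i := rfl

theorem mulv_support_subset (θ : ℕ → ℝ) (f : c00) : (mulv θ f).support ⊆ f.support :=
  Finsupp.support_onFinset_subset

theorem mulv_sum {α : Type*} (θ : ℕ → ℝ) (S : Finset α) (f : α → c00) :
    mulv θ (∑ a ∈ S, f a) = ∑ a ∈ S, mulv θ (f a) := by
  ext i
  simp [Finsupp.finsetSum_apply, Finset.mul_sum]

theorem mulv_smul (θ : ℕ → ℝ) (c : ℝ) (f : c00) : mulv θ (c • f) = c • mulv θ f := by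
  ext i
  simp only [mulv_apply, Finsupp.smul_apply, smul_eq_mul]
  ring

theorem evalPair_mulv (θ : ℕ → ℝ) (f x : c00) : evalPair (mulv θ f) x = evalPair f (mulv θ x) := by
  rw [evalPair_eq_sum _ x (mulv_support_subset θ f), evalPair_eq_sum f _ subset_rfl]
  exact Finset.sum_congr rfl fun i _ => by simp only [mulv_apply]; ring

/-- The `ℓ₁` norm on `c00`. -/
noncomputable def l1 (x : c00) : ℝ := ∑ i ∈ x.support, |x i|

theorem l1_nonneg (x : c00) : 0 ≤ l1 x := Finset.sum_nonneg fun _ _ => abs_nonneg _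

/-! ### Weights and admissible very fast growing families -/

/-- `w` is a product `m_{j_1}⋯m_{j_l}` and `k` the corresponding sum `n_{j_1}+⋯+n_{j_l}`. -/
def IsWt (P : IWParams) (w k : ℕ) : Prop :=
  ∃ l, 0 < l ∧ ∃ js : Fin l → ℕ, w = ∏ i, P.m (js i) ∧ k = ∑ i, P.n (js i)

section
variable {P : IWParams}

theorem two_le_m (j : ℕ) : 2 ≤ P.m j := by
  rw [← P.m_first]; exact P.m_mono.monotone (Nat.zero_le _)

theorem one_le_n (j : ℕ) : 1 ≤ P.n j := by
  rw [← P.n_first]; exact P.n_mono.monotone (Nat.zero_le _)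

theorem m_le_prod {l : ℕ} (js : Fin l → ℕ) (i : Fin l) : P.m (js i) ≤ ∏ i, P.m (js i) :=
  Finset.single_le_prod' (f := fun i => P.m (js i))
    (fun i _ => le_trans one_le_two (two_le_m (js i))) (Finset.mem_univ i)

theorem IsWt.two_le {w k : ℕ} (h : IsWt P w k) : 2 ≤ w := by
  obtain ⟨l, hl, js, rfl, rfl⟩ := h
  exact (two_le_m _).trans (m_le_prod js ⟨0, hl⟩)

theorem IsWt.one_le {w k : ℕ} (h : IsWt P w k) : 1 ≤ k := by
  obtain ⟨l, hl, js, rfl, rfl⟩ := h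
  exact (one_le_n (js ⟨0, hl⟩)).trans
    (Finset.single_le_sum (f := fun i => P.n (js i)) (fun i _ => Nat.zero_le _)
      (Finset.mem_univ _))

theorem IsWt.lt {w k j : ℕ} (h : IsWt P w k) (hj : w < P.m j) : k + 1 < P.n j := by
  have h2 := h.two_le
  obtain ⟨l, hl, js, rfl, rfl⟩ := h
  cases j with
  | zero => rw [P.m_first] at hj; omega
  | succ j =>
    refine P.growth_sum l js j ?_ ?_
    · intro i
      have := P.m_mono.lt_iff_lt.1 (lt_of_le_of_lt (m_le_prod js i) hj)
      omega
    · refine hj.trans_le ?_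
      rw [sq]
      exact Nat.le_mul_self _

theorem isWt_single (j : ℕ) : IsWt P (P.m j) (P.n j) :=
  ⟨1, one_pos, fun _ => j, by simp, by simp⟩

theorem isWt_pair (j j' : ℕ) : IsWt P (P.m j * P.m j') (P.n j + P.n j') :=
  ⟨2, two_pos, ![j, j'], by simp [Fin.prod_univ_two], by simp [Fin.sum_univ_two]⟩

end

/-- A very fast growing family of weighted functionals of `W_iw`, indexed by a finite subset `Q`
of a linear order, which is admissible for the `k`-th Schreier family. -/
structure IsFam (P : IWParams) {ι : Type} [LinearOrder ι] (k : ℕ) (Q : Finset ι) (f : ι → c00)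
    (w : ι → ℕ∞) : Prop where
  mem : ∀ q ∈ Q, WIW P (f q) (w q)
  ne : ∀ q ∈ Q, (f q).support.Nonempty
  lt : ∀ q ∈ Q, ∀ r ∈ Q, q < r → ∀ i ∈ (f q).support, ∀ i' ∈ (f r).support, i < i'
  sch : Sch (fun q => minSupp (f q)) k Q
  vfg : ∀ q ∈ Q, ∀ r ∈ Q, q < r → ∀ i ∈ (f q).support, (i : ℕ∞) < w r

theorem minSupp_mem {f : c00} (h : f.support.Nonempty) : minSupp f ∈ f.support := by
  rw [minSupp, dif_pos h]; exact Finset.min'_mem _ _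

theorem minSupp_le {f : c00} {i : ℕ} (h : i ∈ f.support) : minSupp f ≤ i := by
  rw [minSupp, dif_pos ⟨i, h⟩]; exact Finset.min'_le _ _ h

theorem maxSupp_mem {f : c00} (h : f.support.Nonempty) : maxSupp f ∈ f.support := by
  rw [maxSupp, dif_pos h]; exact Finset.max'_mem _ _

theorem le_maxSupp {f : c00} {i : ℕ} (h : i ∈ f.support) : i ≤ maxSupp f := by
  rw [maxSupp, dif_pos ⟨i, h⟩]; exact Finset.le_max' _ _ h

section
variable {P : IWParams} {ι : Type} [LinearOrder ι] {k : ℕ} {Q : Finset ι} {f : ι → c00}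
  {w : ι → ℕ∞}

/-- Shrinking supports, and discarding members, preserves admissible families. -/
theorem IsFam.modify (h : IsFam P k Q f w) {Q' : Finset ι} (hQ : Q' ⊆ Q) {f' : ι → c00}
    (hmem : ∀ q ∈ Q', WIW P (f' q) (w q)) (hne : ∀ q ∈ Q', (f' q).support.Nonempty)
    (hsub : ∀ q ∈ Q', (f' q).support ⊆ (f q).support) : IsFam P k Q' f' w where
  mem := hmem
  ne := hne
  lt q hq r hr hqr i hi i' hi' :=
    h.lt q (hQ hq) r (hQ hr) hqr i (hsub q hq hi) i' (hsub r hr hi')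
  sch := h.sch.spread id (fun q hq => hQ hq) (fun _ _ _ _ h => h)
    (fun q hq => minSupp_le (hsub q hq (minSupp_mem (hne q hq))))
  vfg q hq r hr hqr i hi := h.vfg q (hQ hq) r (hQ hr) hqr i (hsub q hq hi)

theorem IsFam.subset (h : IsFam P k Q f w) {Q' : Finset ι} (hQ : Q' ⊆ Q) : IsFam P k Q' f w :=
  h.modify hQ (fun q hq => h.mem q (hQ hq)) (fun q hq => h.ne q (hQ hq)) (fun _ _ => subset_rfl)

/-- Admissible families produce weighted functionals. -/
theorem IsFam.op (h : IsFam P k Q f w) {W : ℕ} (hW : IsWt P W k) :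
    WIW P ((W : ℝ)⁻¹ • ∑ q ∈ Q, f q) W := by
  classical
  have hk := hW.one_le
  obtain ⟨l, hl, js, rfl, rfl⟩ := hW
  set E := Q.orderEmbOfFin rfl with hE
  have hEm : ∀ q, E q ∈ Q := fun q => Finset.orderEmbOfFin_mem Q rfl q
  have hsum : ∑ q ∈ Q, f q = ∑ q, f (E q) := by
    conv_lhs => rw [← Finset.map_orderEmbOfFin_univ Q rfl]
    rw [Finset.sum_map]; rfl
  rw [hsum]
  refine WIW.op l hl js Q.card (fun q => f (E q)) (fun q => w (E q)) (fun q => h.mem _ (hEm q))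
    ⟨fun q => h.ne _ (hEm q), ?_, ?_⟩ ?_
  · intro q r hqr
    exact h.lt _ (hEm q) _ (hEm r) (E.strictMono hqr) _ (maxSupp_mem (h.ne _ (hEm q))) _
      (minSupp_mem (h.ne _ (hEm r)))
  · have himg : (Finset.univ.image fun q => minSupp (f (E q))) = Q.image fun q => minSupp (f q) := by
      conv_rhs => rw [← Finset.map_orderEmbOfFin_univ Q rfl]
      rw [Finset.map_eq_image, Finset.image_image]; rfl
    rw [himg]
    rcases Q.eq_empty_or_nonempty with hQ | hQ
    · rw [hQ, Finset.image_empty]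
      obtain ⟨k', hk'⟩ := Nat.exists_eq_add_of_le' hk
      rw [hk']
      exact empty_mem_schreier k'
    · refine schreier_of_sch (hQ.image _) ?_
      have hinv : ∀ b : ℕ, ∃ q : ι, b ∈ Q.image (fun q => minSupp (f q)) →
          q ∈ Q ∧ minSupp (f q) = b := by
        intro b
        by_cases hb : b ∈ Q.image (fun q => minSupp (f q))
        · obtain ⟨q, hq, hq'⟩ := Finset.mem_image.1 hb
          exact ⟨q, fun _ => ⟨hq, hq'⟩⟩
        · exact ⟨hQ.choose, fun h => absurd h hb⟩
      choose g hg using hinv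
      refine h.sch.spread g (fun b hb => (hg b hb).1) ?_ (fun b hb => (hg b hb).2.le)
      intro b hb b' hb' hbb
      by_contra hcon
      rcases (not_lt.1 hcon).lt_or_eq with h1 | h1
      · have := h.lt _ (hg b' hb').1 _ (hg b hb).1 h1 _ (minSupp_mem (h.ne _ (hg b' hb').1)) _
          (minSupp_mem (h.ne _ (hg b hb).1))
        rw [(hg b hb).2, (hg b' hb').2] at this
        omega
      · have h2 := (hg b hb).2
        rw [← h1, (hg b' hb').2] at h2
        omega
  · intro q r hqr
    have hlt : q < r := by rw [Fin.lt_def]; omega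
    exact h.vfg _ (hEm q) _ (hEm r) (E.strictMono hlt) _ (maxSupp_mem (h.ne _ (hEm q)))

/-- The members of a weighted functional of `W_iw` form an admissible very fast growing family. -/
theorem isFam_of_op {k d : ℕ} {f : Fin d → c00} {w : Fin d → ℕ∞} (hf : ∀ q, WIW P (f q) (w q))
    (hadm : Admissible (Schreier k) f)
    (hvfg : ∀ q r : Fin d, (q : ℕ) + 1 = (r : ℕ) → (maxSupp (f q) : ℕ∞) < w r) :
    IsFam P k Finset.univ f w where
  mem q _ := hf q
  ne q _ := hadm.1 q
  lt q _ r _ hqr i hi i' hi' :=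
    lt_of_le_of_lt (le_maxSupp hi) ((hadm.2.1 q r hqr).trans_le (minSupp_le hi'))
  sch := by
    refine (sch_of_schreier hadm.2.2).spread (fun q => minSupp (f q))
      (fun q hq => Finset.mem_image_of_mem _ hq) ?_ (fun _ _ => le_rfl)
    intro q _ r _ hqr
    exact lt_of_le_of_lt (le_maxSupp (minSupp_mem (hadm.1 q))) (hadm.2.1 q r hqr)
  vfg q _ r _ hqr i hi := by
    have hr : (r : ℕ) - 1 < d := by omega
    have hqr' : (q : ℕ) < r := hqr
    refine lt_of_le_of_lt ?_ (hvfg ⟨r - 1, hr⟩ r (by simp only; omega))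
    have : i ≤ maxSupp (f ⟨r - 1, hr⟩) := by
      rcases Nat.lt_or_ge (q : ℕ) ((r : ℕ) - 1) with h1 | h1
      · exact (lt_of_le_of_lt (le_maxSupp hi) ((hadm.2.1 q ⟨r - 1, hr⟩ h1).trans_le
          (le_maxSupp (minSupp_mem (hadm.1 _))))).le
      · have : q = ⟨r - 1, hr⟩ := Fin.ext (by simp only; omega)
        rw [← this]; exact le_maxSupp hi
    exact_mod_cast this

end

variable {P : IWParams}

/-- A member of `W_iw` is a signed unit functional or a weighted average of an admissible family. -/
theorem _root_.WIW.cases {f : c00} {w : ℕ∞} (h : WIW P f w) :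
    (∃ i s, (s = 1 ∨ s = -1) ∧ f = Finsupp.single i s ∧ w = ⊤) ∨
    ∃ (W k d : ℕ) (g : ℕ → c00) (v : ℕ → ℕ∞), IsWt P W k ∧ w = (W : ℕ∞) ∧
      IsFam P k (Finset.range d) g v ∧ f = (W : ℝ)⁻¹ • ∑ q ∈ Finset.range d, g q := by
  cases h with
  | unit i s hs => exact Or.inl ⟨i, s, hs, rfl, rfl⟩
  | op l hl js d f w hf hadm hvfg =>
    right
    have hfam := isFam_of_op hf hadm hvfg
    refine ⟨_, _, d, fun q => if h : q < d then f ⟨q, h⟩ else 0,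
      fun q => if h : q < d then w ⟨q, h⟩ else 0, ⟨l, hl, js, rfl, rfl⟩, rfl, ?_, ?_⟩
    · constructor
      · intro q hq
        rw [Finset.mem_range] at hq
        simpa [hq] using hf ⟨q, hq⟩
      · intro q hq
        rw [Finset.mem_range] at hq
        simpa [hq] using hadm.1 ⟨q, hq⟩
      · intro q hq r hr hqr i hi i' hi'
        rw [Finset.mem_range] at hq hr
        simp only [hq, hr, dif_pos] at hi hi'
        exact hfam.lt ⟨q, hq⟩ (Finset.mem_univ _) ⟨r, hr⟩ (Finset.mem_univ _) hqr i hi i' hi'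
      · cases d with
        | zero => exact Sch.empty _ _
        | succ d =>
          refine hfam.sch.spread (fun q => ⟨min q d, by omega⟩) (fun _ _ => Finset.mem_univ _)
            ?_ ?_
          · intro q hq r hr hqr
            rw [Finset.mem_range] at hq hr
            rw [Fin.lt_def]; simp only; omega
          · intro q hq
            rw [Finset.mem_range] at hq
            have : min q d = q := by omega
            simp [hq, this]
      · intro q hq r hr hqr i hi
        rw [Finset.mem_range] at hq hr
        simp only [hq, hr, dif_pos] at hi ⊢
        exact hfam.vfg ⟨q, hq⟩ (Finset.mem_univ _) ⟨r, hr⟩ (Finset.mem_univ _) hqr i hi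
    · rw [Finset.sum_range]
      simp

/-- `W_iw` is closed under coordinatewise multiplication by `-1`, `0`, `1`. -/
theorem _root_.WIW.mulv {f : c00} {w : ℕ∞} (h : WIW P f w) (θ : ℕ → ℝ)
    (hθ : ∀ i, θ i = 1 ∨ θ i = -1 ∨ θ i = 0) :
    IW.mulv θ f = 0 ∨ WIW P (IW.mulv θ f) w := by
  classical
  induction h with
  | unit i s hs =>
    have he : IW.mulv θ (Finsupp.single i s) = Finsupp.single i (θ i * s) := by
      ext j
      by_cases hj : i = j
      · subst hj; simp
      · simp [hj]
    rw [he]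
    rcases hθ i with h | h | h
    · right; rw [h, one_mul]; exact WIW.unit i s hs
    · right; rw [h]; refine WIW.unit i _ ?_
      rcases hs with rfl | rfl <;> norm_num
    · left; rw [h]; simp
  | op l hl js d f w hf hadm hvfg ih =>
    right
    have hfam := isFam_of_op hf hadm hvfg
    rw [mulv_smul, mulv_sum]
    set Q' : Finset (Fin d) := Finset.univ.filter (fun q => IW.mulv θ (f q) ≠ 0) with hQ'
    have hs : ∑ q, IW.mulv θ (f q) = ∑ q ∈ Q', IW.mulv θ (f q) := by
      rw [hQ', Finset.sum_filter_ne_zero]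
    rw [hs]
    refine (hfam.modify (Finset.subset_univ Q') (f' := fun q => IW.mulv θ (f q)) ?_ ?_ ?_).op
      ⟨l, hl, js, rfl, rfl⟩
    · intro q hq
      exact (ih q).resolve_left (Finset.mem_filter.1 hq).2
    · intro q hq
      exact Finsupp.support_nonempty_iff.2 (Finset.mem_filter.1 hq).2
    · intro q _
      exact mulv_support_subset _ _

theorem _root_.WIW.sign {f : c00} {w : ℕ∞} (h : WIW P f w) (s : ℝ) (hs : s = 1 ∨ s = -1) :
    WIW P (s • f) w := by
  have he : IW.mulv (fun _ => s) f = s • f := by ext i; simp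
  rcases h.mulv (fun _ => s) (fun _ => hs.imp id Or.inl) with h0 | h1
  · have : f = 0 := by
      rw [he] at h0
      rcases hs with rfl | rfl
      · simpa using h0
      · simpa using h0
    rw [this, smul_zero]
    rwa [this] at h
  · rwa [he] at h1

theorem IsFam.sum_abs_apply_le_aux {ι : Type} [LinearOrder ι] {k : ℕ} {Q : Finset ι} {f : ι → c00}
    {w : ι → ℕ∞} (h : IsFam P k Q f w) (hb : ∀ q ∈ Q, ∀ i, |f q i| ≤ 1) (i : ℕ) :
    ∑ q ∈ Q, |f q i| ≤ 1 := by
  by_cases hex : ∃ q ∈ Q, i ∈ (f q).support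
  · obtain ⟨q, hq, hi⟩ := hex
    rw [Finset.sum_eq_single_of_mem q hq]
    · exact hb q hq i
    · intro r hr hne
      rw [abs_eq_zero]
      by_contra hcon
      have hir : i ∈ (f r).support := Finsupp.mem_support_iff.2 hcon
      rcases lt_or_gt_of_ne hne with hlt | hlt
      · exact lt_irrefl _ (h.lt r hr q hq hlt i hir i hi)
      · exact lt_irrefl _ (h.lt q hq r hr hlt i hi i hir)
  · push Not at hex
    rw [Finset.sum_eq_zero]
    · exact zero_le_one
    · intro q hq
      rw [Finsupp.notMem_support_iff.1 (hex q hq), abs_zero]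

theorem _root_.WIW.abs_apply_le {f : c00} {w : ℕ∞} (h : WIW P f w) (i : ℕ) : |f i| ≤ 1 := by
  induction h generalizing i with
  | unit j s hs =>
    rw [Finsupp.single_apply]
    split_ifs
    · rcases hs with rfl | rfl <;> norm_num
    · norm_num
  | op l hl js d f w hf hadm hvfg ih =>
    have hfam := isFam_of_op hf hadm hvfg
    have hsum := hfam.sum_abs_apply_le_aux (fun q _ i => ih q i) i
    have h2 : (1 : ℝ) ≤ ((∏ i, P.m (js i) : ℕ) : ℝ) := by
      exact_mod_cast le_trans one_le_two (IsWt.two_le ⟨l, hl, js, rfl, rfl⟩)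
    rw [Finsupp.smul_apply, Finsupp.finsetSum_apply, smul_eq_mul, abs_mul, abs_inv,
      Nat.abs_cast]
    calc _ ≤ (1 : ℝ) * 1 := by
          refine mul_le_mul (inv_le_one_of_one_le₀ h2) ?_ (abs_nonneg _) zero_le_one
          exact (Finset.abs_sum_le_sum_abs _ _).trans hsum
      _ = 1 := one_mul 1

theorem IsFam.sum_abs_le_l1 {ι : Type} [LinearOrder ι] {k : ℕ} {Q : Finset ι} {f : ι → c00}
    {w : ι → ℕ∞} (h : IsFam P k Q f w) (x : c00) : ∑ q ∈ Q, |evalPair (f q) x| ≤ l1 x := by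
  have h1 : ∀ q ∈ Q, |evalPair (f q) x| ≤ ∑ i ∈ x.support, |f q i| * |x i| := by
    intro q _
    rw [evalPair_eq_sum' _ x subset_rfl]
    refine (Finset.abs_sum_le_sum_abs _ _).trans (le_of_eq ?_)
    exact Finset.sum_congr rfl fun i _ => abs_mul _ _
  refine (Finset.sum_le_sum h1).trans ?_
  rw [Finset.sum_comm]
  refine Finset.sum_le_sum fun i _ => ?_
  rw [← Finset.sum_mul]
  exact mul_le_of_le_one_left (abs_nonneg _)
    (h.sum_abs_apply_le_aux (fun q hq i => (h.mem q hq).abs_apply_le i) i)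

theorem _root_.WIW.abs_le_l1 {f : c00} {w : ℕ∞} (h : WIW P f w) (x : c00) : |evalPair f x| ≤ l1 x := by
  rw [evalPair_eq_sum' _ x subset_rfl]
  refine (Finset.abs_sum_le_sum_abs _ _).trans (Finset.sum_le_sum fun i _ => ?_)
  rw [abs_mul]
  exact mul_le_of_le_one_left (abs_nonneg _) (h.abs_apply_le i)

theorem abs_avg_le {ι : Type} {W : ℕ} {Q : Finset ι} {f : ι → c00} (x : c00) :
    |evalPair ((W : ℝ)⁻¹ • ∑ q ∈ Q, f q) x| ≤ (∑ q ∈ Q, |evalPair (f q) x|) / W := by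
  rw [smul_evalPair, sum_evalPair, abs_mul, abs_inv, Nat.abs_cast, div_eq_inv_mul]
  exact mul_le_mul_of_nonneg_left (Finset.abs_sum_le_sum_abs _ _) (by positivity)

/-- A functional of finite weight `W` has coordinates bounded by `W⁻¹`, hence this bound on its
values. -/
theorem _root_.WIW.abs_le_l1_div {f : c00} {W : ℕ} (h : WIW P f W) (x : c00) :
    |evalPair f x| ≤ l1 x / W := by
  rcases h.cases with ⟨i, s, _, _, h⟩ | ⟨W', k, d, g, v, hW, hw, hfam, rfl⟩
  · exact absurd h (ENat.natCast_ne_top W)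
  · have : W = W' := by exact_mod_cast hw
    subst this
    refine (abs_avg_le x).trans ?_
    exact div_le_div_of_nonneg_right (hfam.sum_abs_le_l1 x) (Nat.cast_nonneg _)

/-! ### The norm -/

section norm
variable (P)

theorem norm_bddAbove (x : c00) : BddAbove {r | ∃ f, memWIW P f ∧ r = evalPair f x} := by
  refine ⟨l1 x, ?_⟩
  rintro r ⟨f, ⟨w, hf⟩, rfl⟩
  exact (le_abs_self _).trans (hf.abs_le_l1 x)

variable {P}

theorem _root_.WIW.le_norm {f : c00} {w : ℕ∞} (h : WIW P f w) (x : c00) : evalPair f x ≤ iwNorm P x :=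
  le_csSup (norm_bddAbove P x) ⟨f, ⟨w, h⟩, rfl⟩

theorem _root_.WIW.abs_le_norm {f : c00} {w : ℕ∞} (h : WIW P f w) (x : c00) :
    |evalPair f x| ≤ iwNorm P x := by
  refine abs_le'.2 ⟨h.le_norm x, ?_⟩
  have := (h.sign (-1) (Or.inr rfl)).le_norm x
  rwa [smul_evalPair, neg_one_mul] at this

theorem norm_le {x : c00} {r : ℝ} (h : ∀ f w, WIW P f w → evalPair f x ≤ r) : iwNorm P x ≤ r := by
  refine csSup_le ⟨_, Finsupp.single 0 1, ⟨⊤, WIW.unit 0 1 (Or.inl rfl)⟩, rfl⟩ ?_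
  rintro _ ⟨f, ⟨w, hf⟩, rfl⟩
  exact h f w hf

theorem abs_apply_le_norm (x : c00) (i : ℕ) : |x i| ≤ iwNorm P x := by
  have := (WIW.unit (P := P) i 1 (Or.inl rfl)).abs_le_norm x
  rwa [evalPair_single, one_mul] at this

theorem norm_nonneg' (x : c00) : 0 ≤ iwNorm P x := (abs_nonneg _).trans (abs_apply_le_norm x 0)

theorem norm_le_l1 (x : c00) : iwNorm P x ≤ l1 x :=
  norm_le fun _ _ hf => (le_abs_self _).trans (hf.abs_le_l1 x)

theorem norm_add_le' (x y : c00) : iwNorm P (x + y) ≤ iwNorm P x + iwNorm P y :=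
  norm_le fun f w hf => by
    rw [evalPair_add]; exact add_le_add (hf.le_norm x) (hf.le_norm y)

theorem norm_zero' : iwNorm P 0 = 0 :=
  le_antisymm (norm_le fun f w _ => by rw [evalPair_zero]) (norm_nonneg' 0)

theorem norm_smul_le' (c : ℝ) (x : c00) : iwNorm P (c • x) ≤ |c| * iwNorm P x :=
  norm_le fun f w hf => by
    rw [evalPair_smul]
    refine (le_abs_self _).trans ?_
    rw [abs_mul]
    exact mul_le_mul_of_nonneg_left (hf.abs_le_norm x) (abs_nonneg _)

theorem norm_smul' (c : ℝ) (x : c00) : iwNorm P (c • x) = |c| * iwNorm P x := by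
  refine le_antisymm (norm_smul_le' c x) ?_
  rcases eq_or_ne c 0 with rfl | hc
  · simp [norm_nonneg']
  · have := norm_smul_le' (P := P) c⁻¹ (c • x)
    rw [smul_smul, inv_mul_cancel₀ hc, one_smul, abs_inv] at this
    have hc' : 0 < |c| := abs_pos.2 hc
    rwa [inv_mul_eq_div, le_div_iff₀ hc', mul_comm] at this

theorem norm_sum_le' {α : Type*} (S : Finset α) (x : α → c00) :
    iwNorm P (∑ a ∈ S, x a) ≤ ∑ a ∈ S, iwNorm P (x a) :=
  norm_le fun f w hf => by
    rw [evalPair_sum]; exact Finset.sum_le_sum fun a _ => hf.le_norm (x a)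

theorem norm_mulv_le {θ : ℕ → ℝ} (hθ : ∀ i, θ i = 1 ∨ θ i = -1 ∨ θ i = 0) (x : c00) :
    iwNorm P (mulv θ x) ≤ iwNorm P x :=
  norm_le fun f w hf => by
    rw [← evalPair_mulv]
    rcases hf.mulv θ hθ with h | h
    · rw [h, zero_evalPair]; exact norm_nonneg' x
    · exact h.le_norm x

theorem norm_pos' {x : c00} (h : x ≠ 0) : 0 < iwNorm P x := by
  obtain ⟨i, hi⟩ := Finsupp.support_nonempty_iff.2 h
  exact (abs_pos.2 (Finsupp.mem_support_iff.1 hi)).trans_le (abs_apply_le_norm x i)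

/-- Almost norming functionals can be taken with support inside that of the vector. -/
theorem exists_norming {x : c00} {c : ℝ} (hc : 0 ≤ c) (h : c < iwNorm P x) :
    ∃ f w, WIW P f w ∧ f.support.Nonempty ∧ f.support ⊆ x.support ∧ c < evalPair f x := by
  classical
  obtain ⟨f, w, hf, hlt⟩ : ∃ f w, WIW P f w ∧ c < evalPair f x := by
    by_contra hcon
    push Not at hcon
    exact absurd (norm_le hcon) (not_le.2 h)
  set θ : ℕ → ℝ := fun i => if i ∈ x.support then 1 else 0 with hθ
  have hx : mulv θ x = x := by
    ext i
    simp only [mulv_apply, hθ]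
    split_ifs with hi
    · rw [one_mul]
    · rw [Finsupp.notMem_support_iff.1 hi, mul_zero]
  have hev : evalPair (mulv θ f) x = evalPair f x := by rw [evalPair_mulv, hx]
  have hne : mulv θ f ≠ 0 := by
    intro h0
    rw [h0, zero_evalPair] at hev
    linarith
  refine ⟨mulv θ f, w, (hf.mulv θ (fun i => ?_)).resolve_left hne,
    Finsupp.support_nonempty_iff.2 hne, ?_, by rwa [hev]⟩
  · simp only [hθ]; split_ifs <;> simp
  · intro i hi
    by_contra hcon
    rw [Finsupp.mem_support_iff] at hi
    simp [hθ, Finsupp.notMem_support_iff.1 hcon] at hi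

theorem exists_sign (a : ℝ) : ∃ s : ℝ, (s = 1 ∨ s = -1) ∧ s * a = |a| := by
  rcases le_total 0 a with h | h
  · exact ⟨1, Or.inl rfl, by rw [one_mul, abs_of_nonneg h]⟩
  · exact ⟨-1, Or.inr rfl, by rw [abs_of_nonpos h]; ring⟩

/-- Signs may be attached to the members of an admissible family. -/
theorem IsFam.sum_abs_le {ι : Type} [LinearOrder ι] {k : ℕ} {Q : Finset ι} {f : ι → c00}
    {w : ι → ℕ∞} (h : IsFam P k Q f w) {W : ℕ} (hW : IsWt P W k) (x : c00) :
    ∑ q ∈ Q, |evalPair (f q) x| ≤ W * iwNorm P x := by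
  choose s hs1 hs2 using exists_sign
  have hfam : IsFam P k Q (fun q => s (evalPair (f q) x) • f q) w := by
    have hsupp : ∀ q, (s (evalPair (f q) x) • f q).support = (f q).support := by
      intro q
      refine Finsupp.support_smul_eq ?_
      rcases hs1 (evalPair (f q) x) with h | h <;> rw [h] <;> norm_num
    refine h.modify subset_rfl (fun q hq => (h.mem q hq).sign _ (hs1 _)) ?_ ?_
    · intro q hq
      rw [hsupp]; exact h.ne q hq
    · intro q _
      rw [hsupp]
  have := (hfam.op hW).le_norm x
  rw [smul_evalPair, sum_evalPair] at this
  simp only [smul_evalPair, hs2] at this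
  have hWp : (0 : ℝ) < W := by exact_mod_cast lt_of_lt_of_le two_pos hW.two_le
  rwa [inv_mul_le_iff₀ hWp] at this

end norm

/-! ### Block sequences with markers -/

/-- `x` is a block sequence with `supp x_t ⊆ [p_t, p_{t+1})`. -/
structure Blk (p : ℕ → ℕ) (x : ℕ → c00) : Prop where
  mono : StrictMono p
  one_le : 1 ≤ p 0
  mem : ∀ t, ∀ i ∈ (x t).support, p t ≤ i ∧ i < p (t + 1)

theorem Blk.one_le' {p : ℕ → ℕ} {x : ℕ → c00} (h : Blk p x) (t : ℕ) : 1 ≤ p t :=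
  h.one_le.trans (h.mono.monotone (Nat.zero_le t))

theorem Blk.lt {p : ℕ → ℕ} {x : ℕ → c00} (h : Blk p x) {t t' : ℕ} (ht : t < t') {i i' : ℕ}
    (hi : i ∈ (x t).support) (hi' : i' ∈ (x t').support) : i < i' :=
  lt_of_lt_of_le ((h.mem t i hi).2) ((h.mono.monotone (Nat.succ_le_of_lt ht)).trans
    (h.mem t' i' hi').1)

end IW

namespace IW

/-! ### The action of admissible families on special convex combinations -/

section
variable {P : IWParams} {ι : Type} [LinearOrder ι] {k n : ℕ} {Q : Finset ι} {f : ι → c00}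
  {w : ι → ℕ∞} {p : ℕ → ℕ} {x : ℕ → c00} {ε : ℝ} {F : Finset ℕ} {c : ℕ → ℝ}

/-- Members of a family that meet later blocks come later. -/
theorem IsFam.hit_le (h : IsFam P k Q f w) (hx : Blk p x) {t t' : ℕ} (ht : t < t') {q q' : ι}
    (hq : q ∈ Q) (hq' : q' ∈ Q) (h1 : evalPair (f q) (x t) ≠ 0)
    (h2 : evalPair (f q') (x t') ≠ 0) : q ≤ q' := by
  obtain ⟨i, hi, hi'⟩ := exists_mem_of_evalPair_ne_zero h1
  obtain ⟨j, hj, hj'⟩ := exists_mem_of_evalPair_ne_zero h2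
  by_contra hcon
  exact lt_asymm (h.lt q' hq' q hq (not_le.1 hcon) j hj i hi) (hx.lt ht hi' hj')

/-- If the blocks in `T` can be matched injectively and monotonically with members of a family of
level `k ≤ n` meeting them, then, apart from its first element, `T` is itself of level `n`:
match each block with the member assigned to its predecessor, which starts earlier. -/
theorem IsFam.sum_matched_le (h : IsFam P k Q f w) (hx : Blk p x) (hc : IsScc p n ε F c)
    (hε : 0 ≤ ε) (hkn : k ≤ n) {T : Finset ℕ} (hT : T ⊆ F) (q : ℕ → ι) (hq : ∀ t ∈ T, q t ∈ Q)
    (hhit : ∀ t ∈ T, evalPair (f (q t)) (x t) ≠ 0)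
    (hmono : ∀ t ∈ T, ∀ t' ∈ T, t < t' → q t < q t') : ∑ t ∈ T, c t ≤ 2 * ε := by
  classical
  rcases T.eq_empty_or_nonempty with rfl | hne
  · simpa using hε
  set t₀ := T.min' hne with ht₀
  have hmem : t₀ ∈ T := Finset.min'_mem _ _
  rw [← Finset.add_sum_erase _ _ hmem]
  have hpred : ∀ t, ∃ s, t ∈ T.erase t₀ → s ∈ T ∧ s < t ∧ ∀ s' ∈ T, s' < t → s' ≤ s := by
    intro t
    by_cases ht : t ∈ T.erase t₀
    · have hlt : t₀ < t := lt_of_le_of_ne (Finset.min'_le _ _ (Finset.mem_of_mem_erase ht))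
        (Finset.ne_of_mem_erase ht).symm
      have hfne : (T.filter (· < t)).Nonempty := ⟨t₀, Finset.mem_filter.2 ⟨hmem, hlt⟩⟩
      refine ⟨(T.filter (· < t)).max' hfne, fun _ => ?_⟩
      have := Finset.mem_filter.1 (Finset.max'_mem _ hfne)
      exact ⟨this.1, this.2, fun s' hs' hlt' =>
        Finset.le_max' _ _ (Finset.mem_filter.2 ⟨hs', hlt'⟩)⟩
    · exact ⟨0, fun h => absurd h ht⟩
  choose pr hpr using hpred
  have hS : Sch p k (T.erase t₀) := by
    refine h.sch.spread (fun t => q (pr t)) (fun t ht => hq _ (hpr t ht).1) ?_ ?_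
    · intro t ht t' ht' htt
      refine hmono _ (hpr t ht).1 _ (hpr t' ht').1 ?_
      exact lt_of_lt_of_le (hpr t ht).2.1 ((hpr t' ht').2.2 t (Finset.mem_of_mem_erase ht) htt)
    · intro t ht
      obtain ⟨i, hi, hi'⟩ := exists_mem_of_evalPair_ne_zero (hhit _ (hpr t ht).1)
      refine (minSupp_le hi).trans ((hx.mem _ i hi').2.le.trans ?_)
      exact hx.mono.monotone (Nat.succ_le_of_lt (hpr t ht).2.1)
  have h1 := hc.small _ ((Finset.erase_subset _ _).trans hT)
    (hS.mono hkn (fun a _ => hx.one_le' a))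
  have h2 := hc.le hε (hx.one_le' t₀)
  linarith

/-- On a special convex combination of level `n` of blocks of norm at most one, the total action of a
family of level at most `n` is bounded by `B` up to a small error, provided each member exceeds `B`
on at most one block: the blocks met by two members, and those on which some member is large, carry
little mass. -/
theorem IsFam.core (h : IsFam P k Q f w) {W : ℕ} (hW : IsWt P W k) (hx : Blk p x)
    (hN : ∀ t ∈ F, iwNorm P (x t) ≤ 1) (hc : IsScc p n ε F c) (hε : 0 ≤ ε) (hkn : k ≤ n)
    {B : ℝ} (hB : 0 ≤ B) (hres : ∀ q ∈ Q, ∀ t ∈ F, ∀ t' ∈ F, B < |evalPair (f q) (x t)| →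
      B < |evalPair (f q) (x t')| → t = t') :
    ∑ t ∈ F, c t * ∑ q ∈ Q, |evalPair (f q) (x t)| ≤ B + 4 * W * ε := by
  classical
  have hWp : (0 : ℝ) ≤ W := Nat.cast_nonneg _
  rcases Q.eq_empty_or_nonempty with rfl | ⟨q₀, -⟩
  · simp only [Finset.sum_empty, mul_zero, Finset.sum_const_zero]
    positivity
  set hits : ℕ → Finset ι := fun t => Q.filter (fun q => evalPair (f q) (x t) ≠ 0) with hhits
  set T1 := F.filter (fun t => 2 ≤ (hits t).card) with hT1
  set T2 := F.filter (fun t => ∃ q ∈ Q, B < |evalPair (f q) (x t)|) with hT2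
  have hmh : ∀ {t q}, q ∈ hits t → q ∈ Q ∧ evalPair (f q) (x t) ≠ 0 :=
    fun hq => Finset.mem_filter.1 hq
  -- blocks met by two members, matched with the last member meeting them
  have hs1 : ∑ t ∈ T1, c t ≤ 2 * ε := by
    have : ∀ t, ∃ q, t ∈ T1 → q ∈ hits t ∧ (∃ q' ∈ hits t, q' < q) := by
      intro t
      by_cases ht : t ∈ T1
      · have hcard := (Finset.mem_filter.1 ht).2
        have hne : (hits t).Nonempty := Finset.card_pos.1 (by omega)
        exact ⟨(hits t).max' hne, fun _ => ⟨Finset.max'_mem _ _, (hits t).min' hne,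
          Finset.min'_mem _ _, Finset.min'_lt_max'_of_card _ (by omega)⟩⟩
      · exact ⟨q₀, fun h => absurd h ht⟩
    choose q hq using this
    refine h.sum_matched_le hx hc hε hkn (Finset.filter_subset _ _) q
      (fun t ht => (hmh (hq t ht).1).1) (fun t ht => (hmh (hq t ht).1).2) ?_
    intro t ht t' ht' htt
    obtain ⟨q', hq', hlt⟩ := (hq t' ht').2
    have h1 := hmh (hq t ht).1
    have h2 := hmh hq'
    exact lt_of_le_of_lt (h.hit_le hx htt h1.1 h2.1 h1.2 h2.2) hlt
  -- blocks on which some member is large, matched with such a member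
  have hs2 : ∑ t ∈ T2, c t ≤ 2 * ε := by
    have : ∀ t, ∃ q, t ∈ T2 → q ∈ Q ∧ B < |evalPair (f q) (x t)| := by
      intro t
      by_cases ht : t ∈ T2
      · obtain ⟨q, hq⟩ := (Finset.mem_filter.1 ht).2
        exact ⟨q, fun _ => hq⟩
      · exact ⟨q₀, fun h => absurd h ht⟩
    choose q hq using this
    have hnz : ∀ t ∈ T2, evalPair (f (q t)) (x t) ≠ 0 := by
      intro t ht
      exact abs_pos.1 (lt_of_le_of_lt hB (hq t ht).2)
    refine h.sum_matched_le hx hc hε hkn (Finset.filter_subset _ _) q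
      (fun t ht => (hq t ht).1) hnz ?_
    intro t ht t' ht' htt
    refine lt_of_le_of_ne (h.hit_le hx htt (hq t ht).1 (hq t' ht').1 (hnz t ht) (hnz t' ht')) ?_
    intro heq
    have h2 := (hq t' ht').2
    rw [← heq] at h2
    exact htt.ne (hres _ (hq t ht).1 t (Finset.mem_filter.1 ht).1 t' (Finset.mem_filter.1 ht').1
      (hq t ht).2 h2)
  have hA : ∀ t ∈ F, c t * ∑ q ∈ Q, |evalPair (f q) (x t)| ≤
      c t * B + ((if 2 ≤ (hits t).card then W * c t else 0) +
        (if ∃ q ∈ Q, B < |evalPair (f q) (x t)| then W * c t else 0)) := by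
    intro t ht
    have hct := hc.nonneg t
    have hW1 : c t * ∑ q ∈ Q, |evalPair (f q) (x t)| ≤ W * c t := by
      rw [mul_comm]
      refine mul_le_mul_of_nonneg_right ((h.sum_abs_le hW (x t)).trans ?_) hct
      exact mul_le_of_le_one_right hWp (hN t ht)
    have hcB : 0 ≤ c t * B := mul_nonneg hct hB
    have hWc : 0 ≤ W * c t := mul_nonneg hWp hct
    split_ifs with h1 h2 h2
    · linarith
    · linarith
    · linarith
    · rw [add_zero, add_zero]
      refine mul_le_mul_of_nonneg_left ?_ hct
      push Not at h1 h2
      have hsum : ∑ q ∈ Q, |evalPair (f q) (x t)| = ∑ q ∈ hits t, |evalPair (f q) (x t)| := by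
        symm
        refine Finset.sum_subset (Finset.filter_subset _ _) ?_
        intro q hq hq'
        by_contra hne
        exact hq' (Finset.mem_filter.2 ⟨hq, fun h0 => hne (by rw [h0, abs_zero])⟩)
      rw [hsum]
      rcases (hits t).eq_empty_or_nonempty with he | ⟨r, hr⟩
      · rw [he, Finset.sum_empty]; exact hB
      · have : hits t = {r} := by
          refine Finset.eq_singleton_iff_unique_mem.2 ⟨hr, fun r' hr' => ?_⟩
          exact Finset.card_le_one.1 (by omega) r' hr' r hr
        rw [this, Finset.sum_singleton]
        exact h2 r (hmh hr).1
  refine (Finset.sum_le_sum hA).trans ?_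
  rw [Finset.sum_add_distrib, Finset.sum_add_distrib, ← Finset.sum_mul, hc.sum,
    ← Finset.sum_filter, ← Finset.sum_filter, ← Finset.mul_sum, ← Finset.mul_sum]
  nlinarith

end

end IW

namespace IW

/-! ### Lower `ℓ₁`-estimates on Schreier sets -/

section
variable {P : IWParams}

theorem Blk.evalPair_eq_zero {p : ℕ → ℕ} {x : ℕ → c00} (hx : Blk p x) {f : c00} {s t : ℕ}
    (hf : f.support ⊆ (x s).support) (hst : s ≠ t) : evalPair f (x t) = 0 := by
  by_contra hne
  obtain ⟨i, hi, hi'⟩ := exists_mem_of_evalPair_ne_zero hne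
  rcases lt_or_gt_of_ne hst with h | h
  · exact lt_irrefl _ (hx.lt h (hf hi) hi')
  · exact lt_irrefl _ (hx.lt h hi' (hf hi))

/-- The lower bound obtained from an admissible family whose members live inside single blocks. -/
theorem IsFam.lower {ι : Type} [LinearOrder ι] {k : ℕ} {Q : Finset ι} {f : ι → c00}
    {w : ι → ℕ∞} (h : IsFam P k Q f w) {W : ℕ} (hW : IsWt P W k) {p : ℕ → ℕ} {x : ℕ → c00}
    (hx : Blk p x) {F : Finset ℕ} (π : ι → ℕ) (hπ : ∀ q ∈ Q, π q ∈ F)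
    (hs : ∀ q ∈ Q, (f q).support ⊆ (x (π q)).support) (b : ℕ → ℝ) :
    ∑ q ∈ Q, |b (π q)| * |evalPair (f q) (x (π q))| ≤ W * iwNorm P (∑ t ∈ F, b t • x t) := by
  refine le_trans (le_of_eq ?_) (h.sum_abs_le hW _)
  refine Finset.sum_congr rfl fun q hq => ?_
  rw [evalPair_sum, Finset.sum_eq_single_of_mem (π q) (hπ q hq), evalPair_smul, abs_mul]
  intro t _ ht
  rw [evalPair_smul, hx.evalPair_eq_zero (hs q hq) ht.symm, mul_zero]

theorem IsFam.support_subset {ι : Type} [LinearOrder ι] {k : ℕ} {Q : Finset ι} {f : ι → c00}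
    {w : ι → ℕ∞} (h : IsFam P k Q f w) {W : ℕ} (hW : IsWt P W k) {q : ι} (hq : q ∈ Q) :
    (f q).support ⊆ ((W : ℝ)⁻¹ • ∑ q ∈ Q, f q).support := by
  intro i hi
  have hWp : (W : ℝ) ≠ 0 := by
    have := hW.two_le
    exact_mod_cast (by omega : W ≠ 0)
  rw [Finsupp.mem_support_iff, Finsupp.smul_apply, Finsupp.finsetSum_apply,
    Finset.sum_eq_single_of_mem q hq]
  · exact smul_ne_zero (inv_ne_zero hWp) (Finsupp.mem_support_iff.1 hi)
  · intro r hr hne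
    by_contra hcon
    have hir : i ∈ (f r).support := Finsupp.mem_support_iff.2 hcon
    rcases lt_or_gt_of_ne hne with hlt | hlt
    · exact lt_irrefl _ (h.lt r hr q hq hlt i hir i hi)
    · exact lt_irrefl _ (h.lt q hq r hr hlt i hi i hir)

theorem Blk.comp {p : ℕ → ℕ} {x : ℕ → c00} (hx : Blk p x) {σ : ℕ → ℕ} (hσ : StrictMono σ) :
    Blk (fun t => p (σ t)) (fun t => x (σ t)) where
  mono := hx.mono.comp hσ
  one_le := hx.one_le' _
  mem t i hi := ⟨(hx.mem _ i hi).1, (hx.mem _ i hi).2.trans_le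
    (hx.mono.monotone (Nat.succ_le_of_lt (hσ (Nat.lt_succ_self t))))⟩

/-- The lower estimate `∑ b ≤ C m_j ‖∑ b_k v_k‖` on sets of level `n_j`. -/
def LowerEst (P : IWParams) (p : ℕ → ℕ) (v : ℕ → c00) (C : ℝ) : Prop :=
  ∀ (j : ℕ) (F : Finset ℕ) (b : ℕ → ℝ), (∀ t, 0 ≤ b t) → Sch p (P.n j) F →
    ∑ t ∈ F, b t ≤ C * P.m j * iwNorm P (∑ t ∈ F, b t • v t)

/-- The lower estimate when the blocks admit almost norming functionals of rapidly increasing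
weights: these form a very fast growing sequence themselves. -/
theorem lowerEst_of_unbounded {p : ℕ → ℕ} {v : ℕ → c00} (hv : Blk p v)
    (h : ∀ T, ∃ k, T ≤ k ∧ ∃ f w, WIW P f w ∧ f.support.Nonempty ∧ f.support ⊆ (v k).support ∧
      1 / 2 ≤ evalPair f (v k) ∧ (p T : ℕ∞) < w) :
    ∃ σ : ℕ → ℕ, StrictMono σ ∧ LowerEst P (fun t => p (σ t)) (fun t => v (σ t)) 2 := by
  choose κ hκ f w hf hne hsub hval hw using h
  let τ : ℕ → ℕ := fun t => Nat.rec 0 (fun _ s => κ s + 1) t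
  have hτs : ∀ t, τ (t + 1) = κ (τ t) + 1 := fun t => rfl
  have hτm : StrictMono τ := strictMono_nat_of_lt_succ fun t => by
    rw [hτs]; exact Nat.lt_succ_of_le (hκ _)
  have hσ : StrictMono fun t => κ (τ t) := strictMono_nat_of_lt_succ fun t => by
    exact lt_of_lt_of_le (Nat.lt_succ_self _) ((hτs t).symm.le.trans (hκ _))
  refine ⟨fun t => κ (τ t), hσ, ?_⟩
  intro j F b hb hF
  have hx := hv.comp hσ
  have hfam : IsFam P (P.n j) F (fun t => f (τ t)) (fun t => w (τ t)) := by
    constructor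
    · intro t _; exact hf _
    · intro t _; exact hne _
    · intro t _ t' _ htt i hi i' hi'
      exact hx.lt htt (hsub _ hi) (hsub _ hi')
    · refine hF.spread id (fun _ h => h) (fun _ _ _ _ h => h) ?_
      intro t _
      exact (hx.mem t _ (hsub _ (minSupp_mem (hne _)))).1
    · intro t _ t' _ htt i hi
      have h1 : i < p (τ t') := by
        refine (hv.mem _ i (hsub _ hi)).2.trans_le (hv.mono.monotone ?_)
        rw [← hτs]
        exact hτm.monotone (Nat.succ_le_of_lt htt)
      exact lt_trans (by exact_mod_cast h1) (hw _)
  have := hfam.lower (isWt_single j) hx id (fun _ h => h) (fun t _ => hsub _) b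
  have h2 : ∑ t ∈ F, b t * (1 / 2) ≤
      ∑ t ∈ F, |b (id t)| * |evalPair (f (τ t)) (v (κ (τ (id t))))| := by
    refine Finset.sum_le_sum fun t _ => ?_
    rw [id, abs_of_nonneg (hb t)]
    exact mul_le_mul_of_nonneg_left ((hval _).trans (le_abs_self _)) (hb t)
  rw [← Finset.sum_mul] at h2
  linarith

/-- The lower estimate when almost norming functionals have bounded weights: their pieces, apart
from the first ones, have rapidly increasing weights and can be put together. -/
theorem lowerEst_of_bounded {p : ℕ → ℕ} {v : ℕ → c00} (hv : Blk p v)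
    (hN : ∀ k, iwNorm P (v k) = 1) (K : ℕ)
    (h : ∀ k, ∀ f w, WIW P f w → f.support.Nonempty → f.support ⊆ (v k).support →
      1 / 2 ≤ evalPair f (v k) → w ≤ (K : ℕ∞)) :
    ∃ C : ℝ, 0 < C ∧ LowerEst P p v C := by
  classical
  have hj1 : K < P.m (K + 1) := lt_of_lt_of_le (Nat.lt_succ_self K) P.m_mono.le_apply
  -- since a functional of weight `W ≥ 2` almost norming `v k` sums its pieces to more than `3 W / 4`,
  -- the first piece can be dropped
  have hdec : ∀ k, ∃ (W l d : ℕ) (g : ℕ → c00) (u : ℕ → ℕ∞), IsWt P W l ∧ W < P.m (K + 1) ∧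
      IsFam P l (Finset.range d) g u ∧ (∀ q ∈ Finset.range d, (g q).support ⊆ (v k).support) ∧
      1 / 2 ≤ ∑ q ∈ Finset.Ico 1 d, |evalPair (g q) (v k)| := by
    intro k
    obtain ⟨f, w, hf, hne, hsub, hval⟩ := exists_norming (P := P) (x := v k) (c := 3 / 4)
      (by norm_num) (by rw [hN]; norm_num)
    have hwK := h k f w hf hne hsub (by linarith)
    rcases hf.cases with ⟨i, s, _, _, rfl⟩ | ⟨W, l, d, g, u, hW, rfl, hfam, rfl⟩
    · exact absurd hwK (by simp)
    have hWK : W ≤ K := by exact_mod_cast hwK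
    refine ⟨W, l, d, g, u, hW, by omega, hfam,
      fun q hq => (hfam.support_subset hW hq).trans hsub, ?_⟩
    have hW2 : (2 : ℝ) ≤ W := by exact_mod_cast hW.two_le
    have h1 : 3 / 4 * (W : ℝ) < ∑ q ∈ Finset.range d, |evalPair (g q) (v k)| := by
      have := lt_of_lt_of_le hval ((le_abs_self _).trans (abs_avg_le (v k)))
      rwa [lt_div_iff₀ (by linarith)] at this
    have hd : 0 < d := by
      rcases Nat.eq_zero_or_pos d with rfl | h
      · simp at h1; linarith
      · exact h
    rw [Finset.range_eq_Ico, Finset.sum_eq_sum_Ico_succ_bot hd] at h1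
    have h0 : |evalPair (g 0) (v k)| ≤ 1 := by
      rw [← hN k]
      exact (hfam.mem 0 (Finset.mem_range.2 hd)).abs_le_norm _
    simp only [zero_add] at h1
    linarith
  choose W l d g u hW hWK hfam hsub hval using hdec
  refine ⟨2 * P.m (K + 1), by have := two_le_m (P := P) (K + 1); positivity, ?_⟩
  intro j F b hb hF
  -- the family of all remaining pieces over `k ∈ F`, ordered lexicographically
  let emb : (Σ _ : ℕ, ℕ) ↪ ℕ ×ₗ ℕ := ⟨fun a => toLex (a.1, a.2), by
    rintro ⟨a, a'⟩ ⟨b, b'⟩ hab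
    have := toLex.injective hab
    simpa using this⟩
  let Q : Finset (ℕ ×ₗ ℕ) := (F.sigma fun k => Finset.Ico 1 (d k)).map emb
  have hQ : ∀ a ∈ Q, (ofLex a).1 ∈ F ∧ 1 ≤ (ofLex a).2 ∧ (ofLex a).2 < d (ofLex a).1 := by
    intro a ha
    obtain ⟨s, hs, rfl⟩ := Finset.mem_map.1 ha
    rw [Finset.mem_sigma, Finset.mem_Ico] at hs
    exact hs
  have hQr : ∀ a ∈ Q, (ofLex a).2 ∈ Finset.range (d (ofLex a).1) :=
    fun a ha => Finset.mem_range.2 (hQ a ha).2.2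
  let G : ℕ ×ₗ ℕ → c00 := fun a => g (ofLex a).1 (ofLex a).2
  have hGs : ∀ a ∈ Q, (G a).support ⊆ (v (ofLex a).1).support :=
    fun a ha => hsub _ _ (hQr a ha)
  have hGne : ∀ a ∈ Q, (G a).support.Nonempty := fun a ha => (hfam _).ne _ (hQr a ha)
  have hmin : ∀ a ∈ Q, p (ofLex a).1 ≤ minSupp (G a) :=
    fun a ha => (hv.mem _ _ (hGs a ha (minSupp_mem (hGne a ha)))).1
  have hFam : IsFam P (P.n (K + 1) + P.n j) Q G (fun a => u (ofLex a).1 (ofLex a).2) := by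
    constructor
    · intro a ha
      exact (hfam _).mem _ (hQr a ha)
    · exact hGne
    · intro a ha a' ha' hlt i hi i' hi'
      rcases Prod.Lex.lt_iff.1 hlt with h1 | ⟨h1, h2⟩
      · exact hv.lt h1 (hGs a ha hi) (hGs a' ha' hi')
      · have ha1 := hQr a ha
        have hi1 : i ∈ (g (ofLex a).1 (ofLex a).2).support := hi
        rw [h1] at ha1 hi1
        exact (hfam _).lt _ ha1 _ (hQr a' ha') h2 i hi1 i' hi'
    · refine Sch.comp (p' := p) (fun a => (ofLex a).1) (n := P.n j) ?_ hmin ?_ ?_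
      · intro a _ a' _ hle
        rcases Prod.Lex.le_iff.1 hle with h1 | ⟨h1, _⟩
        · exact h1.le
        · exact h1.le
      · refine hF.subset ?_
        intro s hs
        obtain ⟨a, ha, rfl⟩ := Finset.mem_image.1 hs
        exact (hQ a ha).1
      · intro s
        have hl : l s ≤ P.n (K + 1) := by
          have := (hW s).lt (hWK s)
          omega
        refine Sch.mono (Sch.spread (fun a => (ofLex a).2) (hfam s).sch ?_ ?_ ?_) hl ?_
        · intro a ha
          obtain ⟨haQ, rfl⟩ := Finset.mem_filter.1 ha
          exact hQr a haQ
        · intro a ha a' ha' hlt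
          have h1 := (Finset.mem_filter.1 ha).2
          have h2 := (Finset.mem_filter.1 ha').2
          rcases Prod.Lex.lt_iff.1 hlt with h3 | ⟨_, h3⟩
          · omega
          · exact h3
        · intro a ha
          obtain ⟨haQ, rfl⟩ := Finset.mem_filter.1 ha
          exact le_rfl
        · intro a ha
          obtain ⟨haQ, rfl⟩ := Finset.mem_filter.1 ha
          exact (hv.one_le' _).trans (hmin a haQ)
    · intro a ha a' ha' hlt i hi
      -- the weight of a piece beyond the first exceeds the support of the first piece
      have h0 : 0 ∈ Finset.range (d (ofLex a').1) := by
        have := hQ a' ha'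
        rw [Finset.mem_range]; omega
      rcases Prod.Lex.lt_iff.1 hlt with h1 | ⟨h1, h2⟩
      · have hm := minSupp_mem ((hfam (ofLex a').1).ne 0 h0)
        have h3 := (hfam (ofLex a').1).vfg 0 h0 _ (hQr a' ha') (hQ a' ha').2.1 _ hm
        have h4 := hv.lt h1 (hGs a ha hi) (hsub _ _ h0 hm)
        exact lt_trans (by exact_mod_cast h4) h3
      · have ha1 := hQr a ha
        have hi1 : i ∈ (g (ofLex a).1 (ofLex a).2).support := hi
        rw [h1] at ha1 hi1
        exact (hfam _).vfg _ ha1 _ (hQr a' ha') h2 i hi1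
  have := hFam.lower (isWt_pair (K + 1) j) hv (fun a => (ofLex a).1) (fun a ha => (hQ a ha).1)
    hGs b
  rw [Finset.sum_map, Finset.sum_sigma] at this
  have h2 : ∑ k ∈ F, b k * (1 / 2) ≤
      ∑ k ∈ F, ∑ q ∈ Finset.Ico 1 (d k), |b k| * |evalPair (g k q) (v k)| := by
    refine Finset.sum_le_sum fun k _ => ?_
    rw [← Finset.mul_sum, abs_of_nonneg (hb k)]
    exact mul_le_mul_of_nonneg_left (hval k) (hb k)
  rw [← Finset.sum_mul] at h2
  have h3 := h2.trans this
  push_cast at h3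
  linarith

/-- Every normalized block sequence has a subsequence with lower `ℓ₁`-estimates on Schreier sets. -/
theorem exists_lowerEst {p : ℕ → ℕ} {v : ℕ → c00} (hv : Blk p v)
    (hN : ∀ k, iwNorm P (v k) = 1) :
    ∃ (C : ℝ) (σ : ℕ → ℕ), 0 < C ∧ StrictMono σ ∧
      LowerEst P (fun t => p (σ t)) (fun t => v (σ t)) C := by
  by_cases h : ∀ T, ∃ k, T ≤ k ∧ ∃ f w, WIW P f w ∧ f.support.Nonempty ∧
      f.support ⊆ (v k).support ∧ 1 / 2 ≤ evalPair f (v k) ∧ (p T : ℕ∞) < w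
  · obtain ⟨σ, hσ, hL⟩ := lowerEst_of_unbounded hv h
    exact ⟨2, σ, two_pos, hσ, hL⟩
  · push Not at h
    obtain ⟨T, hT⟩ := h
    have hσ : StrictMono fun t => T + t := fun a b hab => by simpa using hab
    obtain ⟨C, hC, hL⟩ := lowerEst_of_bounded (P := P) (hv.comp hσ) (fun k => hN _) (p T)
      (fun k f w h1 h2 h3 h4 => hT _ (Nat.le_add_right T k) f w h1 h2 h3 h4)
    exact ⟨C, _, hC, hσ, hL⟩

end

end IW

namespace IW

/-! ### Vectors of norm almost one with uniform family bounds -/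

section
variable {P : IWParams}

/-- `∑ |f_q(y)| ≤ 1 + η` for every admissible very fast growing family of the level that goes with a
weight below `M`. -/
def FamBound (P : IWParams) (M : ℕ) (η : ℝ) (y : c00) : Prop :=
  ∀ (W k : ℕ) (Q : Finset ℕ) (f : ℕ → c00) (w : ℕ → ℕ∞), IsWt P W k → W < M →
    IsFam P k Q f w → ∑ q ∈ Q, |evalPair (f q) y| ≤ 1 + η

/-- Special convex combinations of level `n_{j₀}` of blocks of norm at most one satisfy `FamBound`
with `M = m_{j₀}`: families of weight below `m_{j₀}` have level below `n_{j₀}`. -/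
theorem famBound_scc {j₀ : ℕ} {η : ℝ} (hη : 0 < η) {p : ℕ → ℕ} {y : ℕ → c00} (hy : Blk p y)
    (hN : ∀ s, iwNorm P (y s) ≤ 1) {F : Finset ℕ} {c : ℕ → ℝ}
    (hc : IsScc p (P.n j₀) (η / (4 * P.m j₀)) F c) :
    FamBound P (P.m j₀) η (∑ s ∈ F, c s • y s) := by
  intro W k Q f w hW hWm hfam
  have hm : (0 : ℝ) < P.m j₀ := by
    have := two_le_m (P := P) j₀
    exact_mod_cast (by omega : 0 < P.m j₀)
  have hk := hW.lt hWm
  have hcore := hfam.core hW hy (fun t _ => hN t) hc (by positivity) (by omega)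
    (zero_le_one' ℝ) (by
      intro q hq t _ t' _ h1 _
      exact absurd (((hfam.mem q hq).abs_le_norm (y t)).trans (hN t)) (not_le.2 h1))
  have hle : 4 * (W : ℝ) * (η / (4 * P.m j₀)) ≤ η := by
    have : (W : ℝ) ≤ P.m j₀ := by exact_mod_cast hWm.le
    rw [mul_div_assoc', div_le_iff₀ (by positivity)]
    nlinarith
  refine le_trans ?_ (hcore.trans (by linarith))
  calc ∑ q ∈ Q, |evalPair (f q) (∑ s ∈ F, c s • y s)|
      ≤ ∑ q ∈ Q, ∑ s ∈ F, c s * |evalPair (f q) (y s)| := by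
        refine Finset.sum_le_sum fun q _ => ?_
        rw [evalPair_sum]
        refine (Finset.abs_sum_le_sum_abs _ _).trans (le_of_eq ?_)
        refine Finset.sum_congr rfl fun s _ => ?_
        rw [evalPair_smul, abs_mul, abs_of_nonneg (hc.nonneg s)]
    _ = _ := by
        rw [Finset.sum_comm]
        exact Finset.sum_congr rfl fun s _ => (Finset.mul_sum _ _ _).symm

theorem norm_scc_le {p : ℕ → ℕ} {n : ℕ} {ε : ℝ} {y : ℕ → c00} (hN : ∀ s, iwNorm P (y s) ≤ 1)
    {F : Finset ℕ} {c : ℕ → ℝ} (hc : IsScc p n ε F c) : iwNorm P (∑ s ∈ F, c s • y s) ≤ 1 := by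
  refine (norm_sum_le' _ _).trans ?_
  rw [← hc.sum]
  refine Finset.sum_le_sum fun s _ => ?_
  rw [norm_smul', abs_of_nonneg (hc.nonneg s)]
  exact mul_le_of_le_one_right (hc.nonneg s) (hN s)

/-- Arbitrarily far out there are normalized combinations of the `v t`, supported on sets of level
`(n + 1) * r`, with nonnegative coefficients whose sum is at least `θ ^ r`.  Such vectors arise by
iterating special convex combinations `r` times if each of them loses a factor `θ⁻¹` in norm. -/
def Good (P : IWParams) (p : ℕ → ℕ) (v : ℕ → c00) (n T : ℕ) (θ : ℝ) (r : ℕ) : Prop :=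
  ∀ T₁, T ≤ T₁ → ∃ (T₂ : ℕ) (F : Finset ℕ) (b : ℕ → ℝ), T₁ < T₂ ∧ F ⊆ Finset.Ico T₁ T₂ ∧
    (∀ t, 0 ≤ b t) ∧ (∀ t, t ∉ F → b t = 0) ∧ Sch p ((n + 1) * r) F ∧
    iwNorm P (∑ t ∈ F, b t • v t) = 1 ∧ θ ^ r ≤ ∑ t ∈ F, b t

/-- If every combination satisfying `FamBound` has norm below `1 - η`, then a special convex
combination of vectors from stage `r`, once normalized, is a vector of stage `r + 1`. -/
theorem good_step {p : ℕ → ℕ} {v : ℕ → c00} (hv : Blk p v)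
    {C : ℝ} (hL : LowerEst P p v C) {η θ : ℝ} (hη : 0 < η) (hη1 : η < 1)
    (hθ : θ = 1 / (1 - η)) {j₀ T r : ℕ}
    (hno : ∀ T' > T, ∀ b : ℕ → ℝ, (∀ t, 0 ≤ b t) →
      iwNorm P (∑ k ∈ Finset.Ico T T', b k • v k) ≤ 1 →
      FamBound P (P.m j₀) η (∑ k ∈ Finset.Ico T T', b k • v k) →
      iwNorm P (∑ k ∈ Finset.Ico T T', b k • v k) < 1 - η)
    (hG : Good P p v (P.n j₀) T θ r) : Good P p v (P.n j₀) T θ (r + 1) := by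
  classical
  intro T₁ hT₁
  have hG' : ∀ S, ∃ (T₂ : ℕ) (F : Finset ℕ) (b : ℕ → ℝ), T ≤ S → (S < T₂ ∧
      F ⊆ Finset.Ico S T₂ ∧ (∀ t, 0 ≤ b t) ∧ (∀ t, t ∉ F → b t = 0) ∧
      Sch p ((P.n j₀ + 1) * r) F ∧
      iwNorm P (∑ t ∈ F, b t • v t) = 1 ∧ θ ^ r ≤ ∑ t ∈ F, b t) := by
    intro S
    by_cases hS : T ≤ S
    · obtain ⟨T₂, F, b, h⟩ := hG S hS
      exact ⟨T₂, F, b, fun _ => h⟩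
    · exact ⟨0, ∅, 0, fun h => absurd h hS⟩
  choose nx E b hE using hG'
  let τ : ℕ → ℕ := fun s => Nat.rec T₁ (fun _ S => nx S) s
  have hτs : ∀ s, τ (s + 1) = nx (τ s) := fun s => rfl
  have hτT : ∀ s, T₁ ≤ τ s := by
    intro s
    induction s with
    | zero => exact le_rfl
    | succ s ih =>
      rw [hτs]
      exact ih.trans (hE _ (hT₁.trans ih)).1.le
  have hE' := fun s => hE (τ s) (hT₁.trans (hτT s))
  have hτm : StrictMono τ := strictMono_nat_of_lt_succ fun s => (hE' s).1
  set y : ℕ → c00 := fun s => ∑ t ∈ E (τ s), b (τ s) t • v t with hy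
  have hEm : ∀ s, ∀ k ∈ E (τ s), τ s ≤ k ∧ k < τ (s + 1) := by
    intro s k hk
    exact Finset.mem_Ico.1 ((hE' s).2.1 hk)
  have hyN : ∀ s, iwNorm P (y s) = 1 := fun s => (hE' s).2.2.2.2.2.1
  have hblk : Blk (fun s => p (τ s)) y := by
    refine ⟨hv.mono.comp hτm, hv.one_le' _, ?_⟩
    intro s i hi
    have hi' := Finsupp.support_finsetSum hi
    rw [Finset.mem_biUnion] at hi'
    obtain ⟨k, hk, hik⟩ := hi'
    have h1 := hv.mem k i (Finsupp.support_smul hik)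
    have h2 := hEm s k hk
    exact ⟨(hv.mono.monotone h2.1).trans h1.1, h1.2.trans_le (hv.mono.monotone h2.2)⟩
  have hm : (0 : ℝ) < P.m j₀ := by
    have := two_le_m (P := P) j₀
    exact_mod_cast (by omega : 0 < P.m j₀)
  obtain ⟨d, hd⟩ := scc_exists hblk.mono (P.n j₀) (η / (4 * P.m j₀)) (by positivity)
  obtain ⟨F, c, hF1, hF2, hc⟩ := hd d
  have hFS : Sch (fun s => p (τ s)) (P.n j₀ + 1) F :=
    hF2.sch fun a ha => (hF1 a ha).trans hblk.mono.le_apply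
  set z : c00 := ∑ s ∈ F, c s • y s with hz
  set F' : Finset ℕ := F.biUnion fun s => E (τ s) with hF'
  set b' : ℕ → ℝ := fun k => ∑ s ∈ F, c s * b (τ s) k with hb'
  have hb'0 : ∀ k, 0 ≤ b' k := fun k =>
    Finset.sum_nonneg fun s _ => mul_nonneg (hc.nonneg s) ((hE' s).2.2.1 k)
  have hb'z : ∀ k, k ∉ F' → b' k = 0 := by
    intro k hk
    refine Finset.sum_eq_zero fun s hs => ?_
    rw [(hE' s).2.2.2.1 k, mul_zero]
    exact fun h => hk (Finset.mem_biUnion.2 ⟨s, hs, h⟩)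
  have hEF : ∀ s ∈ F, E (τ s) ⊆ F' := fun s hs =>
    Finset.subset_biUnion_of_mem (fun s => E (τ s)) hs
  have hzF : ∑ k ∈ F', b' k • v k = z := by
    simp only [hb', hz, hy, Finset.sum_smul, Finset.smul_sum, smul_smul]
    rw [Finset.sum_comm]
    refine Finset.sum_congr rfl fun s hs => ?_
    symm
    refine Finset.sum_subset (hEF s hs) ?_
    intro k _ hk
    rw [(hE' s).2.2.2.1 k hk, mul_zero, zero_smul]
  have hsF : θ ^ r ≤ ∑ k ∈ F', b' k := by
    have h1 : ∑ k ∈ F', b' k = ∑ s ∈ F, c s * ∑ k ∈ E (τ s), b (τ s) k := by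
      simp only [hb', Finset.mul_sum]
      rw [Finset.sum_comm]
      refine Finset.sum_congr rfl fun s hs => ?_
      symm
      refine Finset.sum_subset (hEF s hs) ?_
      intro k _ hk
      rw [(hE' s).2.2.2.1 k hk, mul_zero]
    rw [h1]
    calc θ ^ r = ∑ s ∈ F, c s * θ ^ r := by rw [← Finset.sum_mul, hc.sum, one_mul]
      _ ≤ _ := Finset.sum_le_sum fun s _ =>
        mul_le_mul_of_nonneg_left (hE' s).2.2.2.2.2.2 (hc.nonneg s)
  set T₂ := τ (F.sup id + 1) with hT₂
  have hT₂' : T₁ < T₂ := lt_of_le_of_lt (hτT 0) (hτm (Nat.succ_pos _))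
  have hF'sub : F' ⊆ Finset.Ico T₁ T₂ := by
    intro k hk
    obtain ⟨s, hs, hks⟩ := Finset.mem_biUnion.1 hk
    have h1 := hEm s k hks
    have h2 : s ≤ F.sup id := Finset.le_sup (f := id) hs
    rw [Finset.mem_Ico]
    exact ⟨(hτT s).trans h1.1, h1.2.trans_le (hτm.monotone (Nat.succ_le_succ h2))⟩
  have hsch : Sch p ((P.n j₀ + 1) * (r + 1)) F' := by
    have hex : ∀ k, ∃ s, k ∈ F' → s ∈ F ∧ k ∈ E (τ s) := by
      intro k
      by_cases hk : k ∈ F'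
      · obtain ⟨s, hs⟩ := Finset.mem_biUnion.1 hk
        exact ⟨s, fun _ => hs⟩
      · exact ⟨0, fun h => absurd h hk⟩
    choose π hπ using hex
    rw [mul_add, mul_one]
    refine Sch.comp (p' := fun s => p (τ s)) π ?_ ?_ ?_ ?_
    · intro k hk k' hk' hkk
      by_contra hcon
      have h1 := (hEm _ k (hπ k hk).2).1
      have h2 := (hEm _ k' (hπ k' hk').2).2
      have h3 := hτm.monotone (Nat.succ_le_of_lt (not_le.1 hcon))
      have h4 : τ (π k' + 1) ≤ τ (π k) := h3
      omega
    · intro k hk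
      exact hv.mono.monotone (hEm _ k (hπ k hk).2).1
    · refine hFS.subset ?_
      intro s hs
      obtain ⟨k, hk, rfl⟩ := Finset.mem_image.1 hs
      exact (hπ k hk).1
    · intro s
      refine (hE' s).2.2.2.2.1.subset ?_
      intro k hk
      obtain ⟨hkF, rfl⟩ := Finset.mem_filter.1 hk
      exact (hπ k hkF).2
  have hIco : ∑ k ∈ Finset.Ico T T₂, b' k • v k = z := by
    rw [← hzF]
    symm
    refine Finset.sum_subset (hF'sub.trans (Finset.Ico_subset_Ico_left hT₁)) ?_
    intro k _ hk
    rw [hb'z k hk, zero_smul]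
  have hzlt : iwNorm P z < 1 - η := by
    have := hno T₂ (lt_of_le_of_lt hT₁ hT₂') b' hb'0
    rw [hIco] at this
    exact this (norm_scc_le (fun s => (hyN s).le) hc) (famBound_scc hη hblk (fun s => (hyN s).le) hc)
  have hθ0 : 0 < θ := by rw [hθ]; exact div_pos one_pos (by linarith)
  -- the lower estimate on a Schreier family of high enough level rules out `z = 0`
  have hzpos : 0 < iwNorm P z := by
    obtain ⟨j, hj⟩ : ∃ j, (P.n j₀ + 1) * (r + 1) ≤ P.n j := ⟨_, P.n_mono.le_apply⟩
    have h1 := hL j F' b' hb'0 (hsch.mono hj fun a _ => hv.one_le' a)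
    rw [hzF] at h1
    by_contra hcon
    have h0 : iwNorm P z = 0 := le_antisymm (not_lt.1 hcon) (norm_nonneg' z)
    rw [h0, mul_zero] at h1
    have : 0 < θ ^ r := pow_pos hθ0 r
    linarith
  refine ⟨T₂, F', fun k => (iwNorm P z)⁻¹ * b' k, hT₂', hF'sub,
    fun k => mul_nonneg (inv_nonneg.2 hzpos.le) (hb'0 k),
    fun k hk => by simp only [hb'z k hk, mul_zero], hsch, ?_, ?_⟩
  · simp only [← smul_smul]
    rw [← Finset.smul_sum, hzF, norm_smul', abs_inv, abs_of_pos hzpos,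
      inv_mul_cancel₀ hzpos.ne']
  · rw [← Finset.mul_sum, pow_succ, mul_comm]
    have h1 : θ ≤ (iwNorm P z)⁻¹ := by
      rw [hθ, one_div]
      exact inv_anti₀ hzpos hzlt.le
    exact mul_le_mul h1 hsF (pow_pos hθ0 r).le (inv_nonneg.2 hzpos.le)

/-- Beyond any point there is a positive combination of norm almost one satisfying `FamBound`.
Otherwise iterated special convex combinations produce normalized vectors on sets of level `n_j`
whose coefficients sum to about `D ^ n_j` with `D > 1`; since `D ^ n_j / m_j → ∞` this contradicts
the lower estimate. -/
theorem exists_seed {p : ℕ → ℕ} {v : ℕ → c00} (hv : Blk p v) (hN : ∀ k, iwNorm P (v k) = 1)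
    {C : ℝ} (hL : LowerEst P p v C) {η : ℝ} (hη : 0 < η) (hη1 : η < 1) (j₀ T : ℕ) :
    ∃ T' > T, ∃ b : ℕ → ℝ, (∀ t, 0 ≤ b t) ∧
      iwNorm P (∑ k ∈ Finset.Ico T T', b k • v k) ≤ 1 ∧
      1 - η ≤ iwNorm P (∑ k ∈ Finset.Ico T T', b k • v k) ∧
      FamBound P (P.m j₀) η (∑ k ∈ Finset.Ico T T', b k • v k) := by
  classical
  by_contra hcon
  have hno : ∀ T' > T, ∀ b : ℕ → ℝ, (∀ t, 0 ≤ b t) →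
      iwNorm P (∑ k ∈ Finset.Ico T T', b k • v k) ≤ 1 →
      FamBound P (P.m j₀) η (∑ k ∈ Finset.Ico T T', b k • v k) →
      iwNorm P (∑ k ∈ Finset.Ico T T', b k • v k) < 1 - η := by
    intro T' hT' b hb h1 h2
    by_contra h3
    exact hcon ⟨T', hT', b, hb, h1, not_lt.1 h3, h2⟩
  set θ : ℝ := 1 / (1 - η) with hθ
  have hη' : 0 < 1 - η := by linarith
  have hθ1 : 1 < θ := by rw [hθ, lt_div_iff₀ hη']; linarith
  have hgood : ∀ r, Good P p v (P.n j₀) T θ r := by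
    intro r
    induction r with
    | zero =>
      intro T₁ _
      refine ⟨T₁ + 1, {T₁}, fun t => if t = T₁ then 1 else 0, Nat.lt_succ_self _, by simp, ?_, ?_,
        by simp [Sch], by simp [hN], by simp⟩
      · intro t; dsimp only; split_ifs <;> norm_num
      · intro t ht; rw [Finset.mem_singleton] at ht; simp [ht]
    | succ r ih => exact good_step hv hL hη hη1 hθ hno ih
  set n := P.n j₀ with hn
  set D : ℝ := θ ^ ((1 : ℝ) / (n + 1 : ℕ)) with hD
  have hD1 : 1 < D := Real.one_lt_rpow hθ1 (by positivity)
  have hDn : D ^ (n + 1) = θ := by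
    rw [hD, ← Real.rpow_natCast, ← Real.rpow_mul (by linarith), one_div,
      inv_mul_cancel₀ (by positivity), Real.rpow_one]
  obtain ⟨j, hj⟩ := ((P.growth_exp D hD1).eventually_gt_atTop (θ * C)).exists
  obtain ⟨T₂, F, b, _, _, hb, _, hS, hNb, hsum⟩ := hgood (P.n j / (n + 1)) T le_rfl
  have h1 := hL j F b hb (hS.mono (Nat.mul_div_le _ _) fun a _ => hv.one_le' a)
  rw [hNb, mul_one] at h1
  have hm : (0 : ℝ) < P.m j := by
    have := two_le_m (P := P) j
    exact_mod_cast (by omega : 0 < P.m j)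
  rw [lt_div_iff₀ hm] at hj
  have h2 : D ^ P.n j ≤ θ * θ ^ (P.n j / (n + 1)) := by
    rw [← pow_succ', ← hDn, ← pow_mul]
    refine pow_le_pow_right₀ hD1.le ?_
    rw [mul_add, mul_one]
    exact (Nat.lt_mul_div_succ (P.n j) (Nat.succ_pos n)).le
  have h3 : θ * θ ^ (P.n j / (n + 1)) ≤ θ * (C * P.m j) :=
    mul_le_mul_of_nonneg_left (hsum.trans h1) (by linarith)
  linarith

end

end IW

namespace IW

/-! ### Rapidly increasing sequences -/

section
variable {P : IWParams}

/-- `z` is a combination with nonnegative coefficients of the vectors `v k`, `s ≤ k < t`. -/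
def PosComb (v : ℕ → c00) (s t : ℕ) (z : c00) : Prop :=
  ∃ b : ℕ → ℝ, (∀ k, 0 ≤ b k) ∧ z = ∑ k ∈ Finset.Ico s t, b k • v k

theorem PosComb.zero (v : ℕ → c00) (s t : ℕ) : PosComb v s t 0 :=
  ⟨0, fun _ => le_rfl, by simp⟩

theorem PosComb.add {v : ℕ → c00} {s t : ℕ} {z z' : c00} (h : PosComb v s t z)
    (h' : PosComb v s t z') : PosComb v s t (z + z') := by
  obtain ⟨b, hb, rfl⟩ := h
  obtain ⟨b', hb', rfl⟩ := h'
  refine ⟨fun k => b k + b' k, fun k => add_nonneg (hb k) (hb' k), ?_⟩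
  simp only [add_smul, Finset.sum_add_distrib]

theorem PosComb.smul {v : ℕ → c00} {s t : ℕ} {z : c00} (h : PosComb v s t z) {a : ℝ}
    (ha : 0 ≤ a) : PosComb v s t (a • z) := by
  obtain ⟨b, hb, rfl⟩ := h
  refine ⟨fun k => a * b k, fun k => mul_nonneg ha (hb k), ?_⟩
  simp only [Finset.smul_sum, smul_smul]

theorem PosComb.sum {v : ℕ → c00} {s t : ℕ} {ι : Type} {F : Finset ι} {z : ι → c00}
    (h : ∀ i ∈ F, PosComb v s t (z i)) : PosComb v s t (∑ i ∈ F, z i) := by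
  classical
  induction F using Finset.induction_on with
  | empty => simpa using PosComb.zero v s t
  | insert a F ha ih =>
    rw [Finset.sum_insert ha]
    exact (h a (Finset.mem_insert_self _ _)).add
      (ih fun i hi => h i (Finset.mem_insert_of_mem hi))

theorem PosComb.mono {v : ℕ → c00} {s t s' t' : ℕ} {z : c00} (h : PosComb v s t z)
    (hs : s' ≤ s) (ht : t ≤ t') : PosComb v s' t' z := by
  obtain ⟨b, hb, rfl⟩ := h
  refine ⟨fun k => if k ∈ Finset.Ico s t then b k else 0, fun k => ?_, ?_⟩
  · dsimp only; split_ifs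
    exacts [hb k, le_rfl]
  · simp only [ite_smul, zero_smul]
    rw [← Finset.sum_filter]
    refine Finset.sum_congr ?_ fun _ _ => rfl
    ext k
    simp only [Finset.mem_Ico, Finset.mem_filter]
    omega

theorem PosComb.mem {p : ℕ → ℕ} {v : ℕ → c00} (hv : Blk p v) {s t : ℕ} {z : c00}
    (h : PosComb v s t z) {i : ℕ} (hi : i ∈ z.support) : p s ≤ i ∧ i < p t := by
  classical
  obtain ⟨b, hb, rfl⟩ := h
  have hi' := Finsupp.support_finsetSum hi
  rw [Finset.mem_biUnion] at hi'
  obtain ⟨k, hk, hik⟩ := hi'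
  have h1 := hv.mem k i (Finsupp.support_smul hik)
  rw [Finset.mem_Ico] at hk
  exact ⟨(hv.mono.monotone hk.1).trans h1.1, h1.2.trans_le (hv.mono.monotone hk.2)⟩

/-- A rapidly increasing sequence `x`: `x t` is insensitive to families of weight below `J t`, where
`J t` is large compared with everything before `x t`, and it is almost normed by a functional `g t`
of weight at least `J t`. -/
structure Ris (P : IWParams) (K : ℕ) (η : ℝ) (p : ℕ → ℕ) (x : ℕ → c00) (J : ℕ → ℕ)
    (g : ℕ → c00) (w : ℕ → ℕ∞) : Prop where
  blk : Blk p x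
  norm_le : ∀ t, iwNorm P (x t) ≤ 1
  bd : ∀ t, K * p t ≤ J t
  fam : ∀ t, FamBound P (J t) η (x t)
  mem : ∀ t, WIW P (g t) (w t)
  ne : ∀ t, (g t).support.Nonempty
  sub : ∀ t, (g t).support ⊆ (x t).support
  val : ∀ t, 1 - 2 * η ≤ evalPair (g t) (x t)
  wt : ∀ t, (J t : ℕ∞) ≤ w t

theorem FamBound.eval_le {M : ℕ} {η : ℝ} {y : c00} (h : FamBound P M η y) {f : c00} {W : ℕ}
    (hf : WIW P f W) (hW : W < M) : |evalPair f y| ≤ (1 + η) / W := by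
  rcases hf.cases with ⟨i, s, _, _, h⟩ | ⟨W', k, d, g, v, hW', hw, hfam, rfl⟩
  · exact absurd h (ENat.natCast_ne_top W)
  · have : W = W' := by exact_mod_cast hw
    subst this
    refine (abs_avg_le y).trans ?_
    gcongr
    exact h W k _ g v hW' hW hfam

/-- A normalized block sequence with lower estimates has rapidly increasing positive combinations: a
vector of norm almost one satisfying `FamBound` cannot be almost normed by a functional of small
weight, because of the factor `W⁻¹ ≤ 1 / 2`. -/
theorem exists_ris {p : ℕ → ℕ} {v : ℕ → c00} (hv : Blk p v) (hN : ∀ k, iwNorm P (v k) = 1)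
    {C : ℝ} (hL : LowerEst P p v C) {η : ℝ} (hη : 0 < η) (hη1 : η < 1 / 10) (K : ℕ) :
    ∃ (T : ℕ → ℕ) (x : ℕ → c00) (J : ℕ → ℕ) (g : ℕ → c00) (w : ℕ → ℕ∞), StrictMono T ∧
      (∀ t, PosComb v (T t) (T (t + 1)) (x t)) ∧ Ris P K η (fun t => p (T t)) x J g w := by
  have hs := fun T => exists_seed hv hN hL hη (by linarith) (K * p T) T
  choose nx hnx b hb h1 h2 h3 using hs
  let T : ℕ → ℕ := fun s => Nat.rec 0 (fun _ S => nx S) s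
  have hTs : ∀ s, T (s + 1) = nx (T s) := fun s => rfl
  have hT : StrictMono T := strictMono_nat_of_lt_succ fun s => hnx _
  set x : ℕ → c00 := fun t => ∑ k ∈ Finset.Ico (T t) (T (t + 1)), b (T t) k • v k with hx
  have hpos : ∀ t, PosComb v (T t) (T (t + 1)) (x t) := fun t => ⟨b (T t), hb _, rfl⟩
  have hg : ∀ t, ∃ g w, WIW P g w ∧ g.support.Nonempty ∧ g.support ⊆ (x t).support ∧
      1 - 2 * η ≤ evalPair g (x t) ∧ (P.m (K * p (T t)) : ℕ∞) ≤ w := by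
    intro t
    obtain ⟨f, w, hf, hne, hsub, hval⟩ := exists_norming (P := P) (x := x t) (c := 1 - 2 * η)
      (by linarith) (by have : 1 - η ≤ iwNorm P (x t) := h2 (T t)
                        linarith)
    refine ⟨f, w, hf, hne, hsub, hval.le, ?_⟩
    by_contra hcon
    have hlt := not_le.1 hcon
    lift w to ℕ using hlt.ne_top
    have hlt' : w < P.m (K * p (T t)) := by exact_mod_cast hlt
    have hle := (le_abs_self _).trans ((h3 (T t)).eval_le hf hlt')
    have hw2 : 2 ≤ w := by
      rcases hf.cases with ⟨i, s, _, _, h⟩ | ⟨W', k, d, g, v, hW', hw, hfam, _⟩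
      · exact absurd h (ENat.natCast_ne_top w)
      · have : w = W' := by exact_mod_cast hw
        subst this
        exact hW'.two_le
    have hw2' : (2 : ℝ) ≤ w := by exact_mod_cast hw2
    have : (1 + η) / (w : ℝ) ≤ (1 + η) / 2 := by gcongr
    have hval' : 1 - 2 * η < evalPair f (∑ k ∈ Finset.Ico (T t) (nx (T t)), b (T t) k • v k) := hval
    linarith
  choose g w g1 g2 g3 g4 g5 using hg
  refine ⟨T, x, fun t => P.m (K * p (T t)), g, w, hT, hpos, ?_⟩
  refine ⟨⟨hv.mono.comp hT, hv.one_le' _, fun t i hi => (hpos t).mem hv hi⟩, fun t => h1 (T t),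
    fun t => P.m_mono.le_apply, fun t => h3 (T t), g1, g2, g3, g4, g5⟩

variable {K : ℕ} {η : ℝ} {p : ℕ → ℕ} {x : ℕ → c00} {J : ℕ → ℕ} {g : ℕ → c00} {w : ℕ → ℕ∞}

theorem Ris.l1_le (h : Ris P K η p x J g w) {t t' : ℕ} (ht : t < t') :
    K * l1 (x t) ≤ J t' := by
  have h1 : l1 (x t) ≤ p (t + 1) := by
    calc l1 (x t) ≤ ∑ i ∈ (x t).support, (1 : ℝ) :=
          Finset.sum_le_sum fun i _ => (abs_apply_le_norm (P := P) _ i).trans (h.norm_le t)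
      _ = ((x t).support.card : ℝ) := by simp
      _ ≤ p (t + 1) := by
          have : (x t).support ⊆ Finset.range (p (t + 1)) := fun i hi =>
            Finset.mem_range.2 (h.blk.mem t i hi).2
          have := Finset.card_le_card this
          rw [Finset.card_range] at this
          exact_mod_cast this
  have h2 : p (t + 1) ≤ p t' := h.blk.mono.monotone ht
  have h3 : (K : ℝ) * p t' ≤ J t' := by exact_mod_cast h.bd t'
  have h4 : (p (t + 1) : ℝ) ≤ p t' := by exact_mod_cast h2
  refine le_trans ?_ h3
  gcongr
  linarith

/-- A functional of large weight is essentially supported on one member of the sequence. -/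
theorem Ris.resonance (h : Ris P K η p x J g w) (hη1 : η ≤ 1) {B : ℝ} (hB : 0 < B)
    (hBK : 1 ≤ B * K) {M : ℕ} (hBM : 2 ≤ B * M) {f : c00} {u : ℕ∞} (hf : WIW P f u)
    (hu : (M : ℕ∞) < u) {t t' : ℕ} (h1 : B < |evalPair f (x t)|)
    (h2 : B < |evalPair f (x t')|) : t = t' := by
  wlog hlt : t < t' generalizing t t'
  · rcases eq_or_lt_of_le (not_lt.1 hlt) with h' | h'
    · exact h'.symm
    · exact (this h2 h1 h').symm
  exfalso
  have hMp : (0 : ℝ) < M := by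
    by_contra hcon
    have : B * M ≤ 0 := mul_nonpos_of_nonneg_of_nonpos hB.le (not_lt.1 hcon)
    linarith
  induction u with
  | top =>
    rcases hf.cases with ⟨i, s, _, rfl, _⟩ | ⟨W, k, d, g', v, hW, hw, hfam, _⟩
    · rw [evalPair_single] at h1 h2
      have hi : i ∈ (x t).support := Finsupp.mem_support_iff.2 fun h0 => by
        rw [h0, mul_zero, abs_zero] at h1; linarith
      have hi' : i ∈ (x t').support := Finsupp.mem_support_iff.2 fun h0 => by
        rw [h0, mul_zero, abs_zero] at h2; linarith
      exact lt_irrefl _ (h.blk.lt hlt hi hi')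
    · exact ENat.natCast_ne_top W hw.symm
  | coe u =>
    have hu' : (M : ℝ) < u := by exact_mod_cast hu
    have hup : (0 : ℝ) < u := hMp.trans hu'
    by_cases hJ : u < J t'
    · have := h2.trans_le ((h.fam t').eval_le hf hJ)
      rw [lt_div_iff₀ hup] at this
      nlinarith
    · have h3 := h1.trans_le (hf.abs_le_l1_div (x t))
      rw [lt_div_iff₀ hup] at h3
      have h4 := h.l1_le hlt
      have h5 : (J t' : ℝ) ≤ u := by exact_mod_cast not_lt.1 hJ
      have h6 : (0 : ℝ) ≤ K := Nat.cast_nonneg _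
      have h7 := l1_nonneg (x t)
      have h8 : (K : ℝ) * (B * u) ≤ u := by
        rcases h6.eq_or_lt with h0 | h0
        · rw [← h0]; simp
        · nlinarith
      have h9 : 0 < (K : ℝ) := by
        rcases h6.eq_or_lt with h0 | h0
        · rw [← h0] at hBK; linarith [mul_zero B]
        · exact h0
      have h10 : (K : ℝ) * (B * u) < K * l1 (x t) := mul_lt_mul_of_pos_left h3 h9
      nlinarith

/-- The estimate of a family of arbitrary weight on a special convex combination of a rapidly
increasing sequence.  Members `x t` with `J t > W` are controlled by `FamBound`, and of those with
`J t ≤ W` all but the last have small `ℓ₁` norm compared with `W`. -/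
theorem Ris.sum_le (h : Ris P K η p x J g w) (hη : 0 ≤ η) (hK : 0 < K) {n : ℕ} {ε : ℝ}
    (hε : 0 ≤ ε)
    {F : Finset ℕ} {c : ℕ → ℝ} (hc : IsScc p n ε F c) {W k : ℕ} (hW : IsWt P W k)
    {Q : Finset ℕ} {f : ℕ → c00} {u : ℕ → ℕ∞} (hfam : IsFam P k Q f u) :
    ∑ t ∈ F, c t * ∑ q ∈ Q, |evalPair (f q) (x t)| ≤ 1 + η + W / K + W * ε := by
  classical
  have hW0 : (0 : ℝ) ≤ W := Nat.cast_nonneg _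
  have hK0 : (0 : ℝ) < K := by exact_mod_cast hK
  set A : ℕ → ℝ := fun t => ∑ q ∈ Q, |evalPair (f q) (x t)| with hA
  have hAW : ∀ t, A t ≤ W := fun t =>
    (hfam.sum_abs_le hW (x t)).trans (mul_le_of_le_one_right hW0 (h.norm_le t))
  have key : ∃ t₀, ∀ t ∈ F, t ≠ t₀ → A t ≤ 1 + η + W / K := by
    set G := F.filter fun t => J t ≤ W with hG
    have hsmall : ∀ t, W < J t → A t ≤ 1 + η + W / K := by
      intro t ht
      have h1 : A t ≤ 1 + η := h.fam t W k Q f u hW ht hfam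
      have : 0 ≤ (W : ℝ) / K := by positivity
      linarith
    rcases G.eq_empty_or_nonempty with h0 | hne
    · refine ⟨0, fun t ht _ => hsmall t ?_⟩
      by_contra hcon
      have : t ∈ G := Finset.mem_filter.2 ⟨ht, not_lt.1 hcon⟩
      rw [h0] at this
      exact absurd this (Finset.notMem_empty t)
    · refine ⟨G.max' hne, fun t ht hne' => ?_⟩
      by_cases hJ : W < J t
      · exact hsmall t hJ
      have htG : t ∈ G := Finset.mem_filter.2 ⟨ht, not_lt.1 hJ⟩
      have hlt : t < G.max' hne := lt_of_le_of_ne (Finset.le_max' _ _ htG) hne'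
      have hm := (Finset.mem_filter.1 (Finset.max'_mem G hne)).2
      have h1 : A t ≤ l1 (x t) := hfam.sum_abs_le_l1 (x t)
      have h2 := h.l1_le hlt
      have h3 : (J (G.max' hne) : ℝ) ≤ W := by exact_mod_cast hm
      have h4 : l1 (x t) ≤ W / K := by
        rw [le_div_iff₀ hK0]; linarith
      linarith
  obtain ⟨t₀, ht₀⟩ := key
  have hb0 : 0 ≤ 1 + η + (W : ℝ) / K := by positivity
  calc ∑ t ∈ F, c t * A t
      ≤ ∑ t ∈ F, (c t * (1 + η + W / K) + if t = t₀ then W * ε else 0) := by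
        refine Finset.sum_le_sum fun t ht => ?_
        split_ifs with htt
        · have h1 : c t ≤ ε := hc.le hε (h.blk.one_le' t)
          have h2 : c t * A t ≤ ε * W := mul_le_mul h1 (hAW t)
            (Finset.sum_nonneg fun _ _ => abs_nonneg _) hε
          have h3 := mul_nonneg (hc.nonneg t) hb0
          linarith
        · rw [add_zero]
          exact mul_le_mul_of_nonneg_left (ht₀ t ht htt) (hc.nonneg t)
    _ = (1 + η + W / K) + ∑ t ∈ F, (if t = t₀ then W * ε else 0) := by
        rw [Finset.sum_add_distrib, ← Finset.sum_mul, hc.sum, one_mul]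
    _ ≤ _ := by
        rw [Finset.sum_ite_eq']
        have : 0 ≤ W * ε := mul_nonneg hW0 hε
        split_ifs <;> linarith

end

end IW

namespace IW

/-! ### Weighted combinations of special convex combinations -/

section
variable {P : IWParams}

/-- An array of special convex combinations: the `r`-th row consists of `n` successive ones of level
`n_{j_r} - 1`, whose union has level `n_{j_r}`; the `i`-th column lives in `[S i, S (i+1))`. -/
structure Grid (P : IWParams) (p : ℕ → ℕ) (ε : ℝ) (L n R : ℕ) (j : Fin R → ℕ) (S : ℕ → ℕ)
    (F : ℕ → Fin R → Finset ℕ) (c : ℕ → Fin R → ℕ → ℝ) : Prop where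
  mono : StrictMono S
  large : L ≤ p (S 0)
  mem : ∀ i r, ∀ t ∈ F i r, S i ≤ t ∧ t < S (i + 1)
  scc : ∀ i r, IsScc p (P.n (j r) - 1) ε (F i r) (c i r)
  sch : ∀ r, Sch p (P.n (j r)) ((Finset.range n).biUnion fun i => F i r)

/-- Such arrays exist: the number of level-`(n_{j_r} - 1)` pieces in each special convex combination
is known beforehand, so the array can start far enough out for whole rows to have level `n_{j_r}`. -/
theorem exists_grid {p : ℕ → ℕ} (hp : StrictMono p) {ε : ℝ} (hε : 0 < ε) (L n : ℕ) {R : ℕ}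
    (j : Fin R → ℕ) : ∃ S F c, Grid P p ε L n R j S F c := by
  classical
  have h := fun r => scc_exists hp (P.n (j r) - 1) ε hε
  choose d hd using h
  choose F c h1 h2 h3 using hd
  let S : ℕ → ℕ := fun s => Nat.rec (L + ∑ r, n * d r)
    (fun _ T => T + 1 + Finset.univ.sup fun r => (F r T).sup id) s
  have hSs : ∀ s, S (s + 1) = S s + 1 + Finset.univ.sup fun r => (F r (S s)).sup id := fun s => rfl
  have hS : StrictMono S := strictMono_nat_of_lt_succ fun s => by rw [hSs]; omega
  have hmem : ∀ i r, ∀ t ∈ F r (S i), S i ≤ t ∧ t < S (i + 1) := by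
    intro i r t ht
    refine ⟨h1 r (S i) t ht, ?_⟩
    have e1 : t ≤ (F r (S i)).sup id := Finset.le_sup (f := id) ht
    have e2 : (F r (S i)).sup id ≤ Finset.univ.sup fun r => (F r (S i)).sup id :=
      Finset.le_sup (f := fun r => (F r (S i)).sup id) (Finset.mem_univ r)
    rw [hSs]
    omega
  refine ⟨S, fun i r => F r (S i), fun i r => c r (S i), hS, ?_, hmem, fun i r => h3 r _, ?_⟩
  · exact le_trans (Nat.le_add_right _ _) (hp.le_apply (x := S 0))
  · intro r
    have hcol : ∀ i, ColSch p (P.n (j r) - 1) (i * d r)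
        ((Finset.range i).biUnion fun i => F r (S i)) := by
      intro i
      induction i with
      | zero => exact ⟨fun _ => 0, by simp, by simp, fun k => by simpa using Sch.empty _ _⟩
      | succ i ih =>
        have := ih.append (h2 r (S i)) (by
          intro a ha b hb
          obtain ⟨i', hi', ha'⟩ := Finset.mem_biUnion.1 ha
          have e1 := (hmem i' r a ha').2
          have e2 := (hmem i r b hb).1
          have e3 : S (i' + 1) ≤ S i := hS.monotone (Finset.mem_range.1 hi')
          omega)
        rw [Finset.range_add_one, Finset.biUnion_insert, Finset.union_comm]
        rwa [Nat.succ_mul]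
    have h4 : P.n (j r) - 1 + 1 = P.n (j r) := Nat.sub_add_cancel (one_le_n _)
    rw [← h4]
    refine (hcol n).sch ?_
    intro a ha
    obtain ⟨i', hi', ha'⟩ := Finset.mem_biUnion.1 ha
    have e1 := (hmem i' r a ha').1
    have e2 : S 0 ≤ S i' := hS.monotone (Nat.zero_le _)
    have e3 : a ≤ p a := hp.le_apply
    have e4 : n * d r ≤ ∑ r, n * d r :=
      Finset.single_le_sum (f := fun r => n * d r) (fun _ _ => Nat.zero_le _) (Finset.mem_univ r)
    have e5 : S 0 = L + ∑ r, n * d r := rfl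
    omega

variable {K : ℕ} {η : ℝ} {p : ℕ → ℕ} {x : ℕ → c00} {J : ℕ → ℕ} {g : ℕ → c00} {w : ℕ → ℕ∞}
  {ε : ℝ} {L n R : ℕ} {j : Fin R → ℕ} {S : ℕ → ℕ} {F : ℕ → Fin R → Finset ℕ}
  {c : ℕ → Fin R → ℕ → ℝ}

/-- The coefficient of `x t` in the `i`-th column vector with row coefficients `lam`. -/
noncomputable def colCoef (P : IWParams) (j : Fin R → ℕ) (c : ℕ → Fin R → ℕ → ℝ)
    (lam : Fin R → Fin n → ℝ) (i : Fin n) (t : ℕ) : ℝ :=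
  ∑ r, lam r i * P.m (j r) * c i r t

/-- The `i`-th column vector with row coefficients `lam`. -/
noncomputable def colVec (P : IWParams) (x : ℕ → c00) (j : Fin R → ℕ) (S : ℕ → ℕ)
    (c : ℕ → Fin R → ℕ → ℝ) (lam : Fin R → Fin n → ℝ) (i : Fin n) : c00 :=
  ∑ t ∈ Finset.Ico (S 0) (S n), colCoef P j c lam i t • x t

theorem colCoef_nonneg (hG : Grid P p ε L n R j S F c) {lam : Fin R → Fin n → ℝ}
    (hlam : ∀ r i, 0 ≤ lam r i) (i : Fin n) (t : ℕ) : 0 ≤ colCoef P j c lam i t :=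
  Finset.sum_nonneg fun r _ => mul_nonneg (mul_nonneg (hlam r i) (Nat.cast_nonneg _))
    ((hG.scc i r).nonneg t)

theorem colCoef_zero (hG : Grid P p ε L n R j S F c) (lam : Fin R → Fin n → ℝ) (i : Fin n) {t : ℕ}
    (ht : ¬(S i ≤ t ∧ t < S (i + 1))) : colCoef P j c lam i t = 0 :=
  Finset.sum_eq_zero fun r _ => by
    rw [(hG.scc i r).zero t (fun h => ht (hG.mem i r t h)), mul_zero]

theorem sum_colVec (lam : Fin R → Fin n → ℝ) (a : Fin n → ℝ) :
    ∑ i, a i • colVec P x j S c lam i =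
      ∑ t ∈ Finset.Ico (S 0) (S n), (∑ i, a i * colCoef P j c lam i t) • x t := by
  simp only [colVec, Finset.smul_sum, smul_smul, Finset.sum_smul]
  rw [Finset.sum_comm]

theorem Grid.col_sub (hG : Grid P p ε L n R j S F c) (i : Fin n) (r : Fin R) :
    F i r ⊆ Finset.Ico (S 0) (S n) := by
  intro t ht
  have h1 := hG.mem i r t ht
  have h2 : S 0 ≤ S i := hG.mono.monotone (Nat.zero_le _)
  have h3 : S (i + 1) ≤ S n := hG.mono.monotone i.2
  rw [Finset.mem_Ico]
  omega

/-- Different columns have disjoint supports, so the coefficients do not cancel. -/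
theorem abs_coef (hG : Grid P p ε L n R j S F c) {lam : Fin R → Fin n → ℝ}
    (hlam : ∀ r i, 0 ≤ lam r i) (a : Fin n → ℝ) (t : ℕ) :
    |∑ i, a i * colCoef P j c lam i t| = ∑ i, |a i| * colCoef P j c lam i t := by
  by_cases h : ∃ i : Fin n, S i ≤ t ∧ t < S (i + 1)
  · obtain ⟨i, hi⟩ := h
    have h0 : ∀ k ∈ Finset.univ, k ≠ i → colCoef P j c lam k t = 0 := by
      intro k _ hk
      refine colCoef_zero hG lam k fun hk' => ?_
      rcases lt_or_gt_of_ne (Fin.val_ne_of_ne hk) with hlt | hlt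
      · have : S (k + 1) ≤ S i := hG.mono.monotone hlt
        omega
      · have : S (i + 1) ≤ S k := hG.mono.monotone hlt
        omega
    rw [Finset.sum_eq_single_of_mem i (Finset.mem_univ i), Finset.sum_eq_single_of_mem i
      (Finset.mem_univ i), abs_mul, abs_of_nonneg (colCoef_nonneg hG hlam i t)]
    · intro k hk hne
      rw [h0 k hk hne, mul_zero]
    · intro k hk hne
      rw [h0 k hk hne, mul_zero]
  · push Not at h
    have h0 : ∀ k, colCoef P j c lam k t = 0 := fun k =>
      colCoef_zero hG lam k fun hk => absurd hk.2 (not_lt.2 (h k hk.1))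
    simp [h0]

/-- The `r`-th row gives the lower bound: the functionals `g t` almost norming the members `x t` that
occur in it form a very fast growing sequence of level `n_{j_r}`, and the factor `m_{j_r}` in the
coefficients cancels the weight. -/
theorem grid_lower (hx : Ris P K η p x J g w) (hK : 0 < K) (hη : η ≤ 1 / 2)
    (hG : Grid P p ε L n R j S F c)
    {lam : Fin R → Fin n → ℝ} (hlam : ∀ r i, 0 ≤ lam r i) (a : Fin n → ℝ) (r : Fin R) :
    (1 - 2 * η) * ∑ i, lam r i * |a i| ≤ iwNorm P (∑ i, a i • colVec P x j S c lam i) := by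
  classical
  set Q := (Finset.range n).biUnion fun i => F i r with hQ
  have hFQ : ∀ i : Fin n, F i r ⊆ Q := fun i =>
    Finset.subset_biUnion_of_mem (fun i => F i r) (Finset.mem_range.2 i.2)
  have hQsub : Q ⊆ Finset.Ico (S 0) (S n) := by
    intro t ht
    obtain ⟨i, hi, ht'⟩ := Finset.mem_biUnion.1 ht
    exact hG.col_sub ⟨i, Finset.mem_range.1 hi⟩ r ht'
  have hfam : IsFam P (P.n (j r)) Q g w := by
    constructor
    · exact fun t _ => hx.mem t
    · exact fun t _ => hx.ne t
    · intro t _ t' _ htt i hi i' hi'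
      exact hx.blk.lt htt (hx.sub t hi) (hx.sub t' hi')
    · refine (hG.sch r).spread id (fun _ h => h) (fun _ _ _ _ h => h) ?_
      intro t _
      exact (hx.blk.mem t _ (hx.sub t (minSupp_mem (hx.ne t)))).1
    · intro t _ t' _ htt i hi
      have h1 : i < p t' := (hx.blk.mem t i (hx.sub t hi)).2.trans_le (hx.blk.mono.monotone htt)
      have h2 : i < J t' := lt_of_lt_of_le h1 ((Nat.le_mul_of_pos_left _ hK).trans (hx.bd t'))
      exact lt_of_lt_of_le (by exact_mod_cast h2) (hx.wt t')
  have hlow := hfam.lower (isWt_single (j r)) hx.blk id (fun t ht => hQsub ht)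
    (fun t _ => hx.sub t) (fun t => ∑ i, a i * colCoef P j c lam i t)
  rw [← sum_colVec] at hlow
  have hm : (0 : ℝ) < P.m (j r) := by
    have := two_le_m (P := P) (j r)
    exact_mod_cast (by omega : 0 < P.m (j r))
  have h1 : ∑ t ∈ Q, (∑ i, |a i| * (lam r i * P.m (j r) * c i r t)) * (1 - 2 * η) ≤
      ∑ t ∈ Q, |∑ i, a i * colCoef P j c lam i (id t)| * |evalPair (g t) (x (id t))| := by
    refine Finset.sum_le_sum fun t _ => ?_
    rw [id, abs_coef hG hlam]
    refine mul_le_mul ?_ ((hx.val t).trans (le_abs_self _)) (by linarith) ?_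
    · refine Finset.sum_le_sum fun i _ => mul_le_mul_of_nonneg_left ?_ (abs_nonneg _)
      exact Finset.single_le_sum (f := fun r => lam r i * P.m (j r) * c i r t)
        (fun r _ => mul_nonneg (mul_nonneg (hlam r i) (Nat.cast_nonneg _))
          ((hG.scc i r).nonneg t)) (Finset.mem_univ r)
    · exact Finset.sum_nonneg fun i _ => mul_nonneg (abs_nonneg _) (colCoef_nonneg hG hlam i t)
  have h2 : ∑ t ∈ Q, (∑ i, |a i| * (lam r i * P.m (j r) * c i r t)) * (1 - 2 * η) =
      P.m (j r) * ((1 - 2 * η) * ∑ i, lam r i * |a i|) := by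
    rw [← Finset.sum_mul, Finset.sum_comm]
    have : ∀ i : Fin n, ∑ t ∈ Q, |a i| * (lam r i * P.m (j r) * c i r t) =
        P.m (j r) * (lam r i * |a i|) := by
      intro i
      have hs : ∑ t ∈ Q, c i r t = 1 := by
        rw [← (hG.scc i r).sum]
        symm
        exact Finset.sum_subset (hFQ i) fun t _ ht => (hG.scc i r).zero t ht
      rw [← Finset.mul_sum, ← Finset.mul_sum, hs]
      ring
    rw [Finset.sum_congr rfl fun i _ => this i, ← Finset.mul_sum]
    ring
  rw [h2] at h1
  exact le_of_mul_le_mul_left (h1.trans hlow) hm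

/-- The value of a functional on a combination of columns, split over the cells of the array. -/
theorem eval_colVec_le (hG : Grid P p ε L n R j S F c)
    {lam : Fin R → Fin n → ℝ} (hlam : ∀ r i, 0 ≤ lam r i) (a : Fin n → ℝ) (f : c00) :
    |evalPair f (∑ i, a i • colVec P x j S c lam i)| ≤
      ∑ r, ∑ i, lam r i * |a i| * (P.m (j r) * ∑ t ∈ F i r, c i r t * |evalPair f (x t)|) := by
  rw [sum_colVec, evalPair_sum]
  calc |∑ t ∈ Finset.Ico (S 0) (S n), evalPair f ((∑ i, a i * colCoef P j c lam i t) • x t)|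
      ≤ ∑ t ∈ Finset.Ico (S 0) (S n),
          (∑ i, |a i| * colCoef P j c lam i t) * |evalPair f (x t)| := by
        refine (Finset.abs_sum_le_sum_abs _ _).trans (le_of_eq ?_)
        refine Finset.sum_congr rfl fun t _ => ?_
        rw [evalPair_smul, abs_mul, abs_coef hG hlam]
    _ = ∑ t ∈ Finset.Ico (S 0) (S n), ∑ r, ∑ i,
          lam r i * |a i| * (P.m (j r) * (c i r t * |evalPair f (x t)|)) := by
        refine Finset.sum_congr rfl fun t _ => ?_
        simp only [colCoef, Finset.sum_mul, Finset.mul_sum]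
        rw [Finset.sum_comm]
        refine Finset.sum_congr rfl fun r _ => Finset.sum_congr rfl fun i _ => ?_
        ring
    _ = ∑ r, ∑ i, ∑ t ∈ Finset.Ico (S 0) (S n),
          lam r i * |a i| * (P.m (j r) * (c i r t * |evalPair f (x t)|)) := by
        rw [Finset.sum_comm]
        refine Finset.sum_congr rfl fun r _ => ?_
        rw [Finset.sum_comm]
    _ = _ := by
        refine Finset.sum_congr rfl fun r _ => Finset.sum_congr rfl fun i _ => ?_
        rw [← Finset.mul_sum, ← Finset.mul_sum]
        congr 2
        symm
        refine Finset.sum_subset (hG.col_sub i r) fun t _ ht => ?_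
        rw [(hG.scc i r).zero t ht, zero_mul]

end

end IW

namespace IW

/-! ### Blocks representing maxima of weighted `ℓ₁` norms -/

section
variable {P : IWParams}
variable {K : ℕ} {η : ℝ} {p : ℕ → ℕ} {x : ℕ → c00} {J : ℕ → ℕ} {g : ℕ → c00} {w : ℕ → ℕ∞}
  {L n R : ℕ} {j : Fin R → ℕ} {S : ℕ → ℕ} {F : ℕ → Fin R → Finset ℕ}
  {c : ℕ → Fin R → ℕ → ℝ}

theorem Grid.support_ge {ε : ℝ} (hG : Grid P p ε L n R j S F c) (hx : Blk p x)
    (lam : Fin R → Fin n → ℝ) (a : Fin n → ℝ) {i : ℕ}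
    (hi : i ∈ (∑ i, a i • colVec P x j S c lam i).support) : L ≤ i := by
  classical
  rw [sum_colVec] at hi
  have hi' := Finsupp.support_finsetSum hi
  rw [Finset.mem_biUnion] at hi'
  obtain ⟨k, hk, hik⟩ := hi'
  have h1 := hx.mem k i (Finsupp.support_smul hik)
  rw [Finset.mem_Ico] at hk
  exact hG.large.trans ((hx.mono.monotone hk.1).trans h1.1)

/-- A very fast growing family all of whose weights are large contributes on the `(i, r)`-cell
essentially `m_{j_r}` if its weight is at least `m_{j_r}`, and essentially nothing otherwise. -/
theorem cell_le (hx : Ris P K η p x J g w) (hK : 0 < K) (hη : 0 ≤ η) {δ : ℝ} (hδ : 0 < δ)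
    (hδ1 : δ ≤ 1) (hηδ : η ≤ δ / 8) (hKδ : ∀ r, 8 * (P.m (j r) : ℝ) ≤ δ * K) (hL : 2 * K ≤ L)
    (hG : Grid P p (K : ℝ)⁻¹ L n R j S F c) {W k : ℕ} (hW : IsWt P W k) {Q : Finset ℕ}
    {f : ℕ → c00} {u : ℕ → ℕ∞} (hfam : IsFam P k Q f u) (hu : ∀ q ∈ Q, (L : ℕ∞) < u q)
    (i : ℕ) (r : Fin R) :
    (P.m (j r) : ℝ) * ∑ t ∈ F i r, c i r t * ∑ q ∈ Q, |evalPair (f q) (x t)| ≤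
      (if P.m (j r) ≤ W then (P.m (j r) : ℝ) else 0) + δ * W := by
  have hK0 : (0 : ℝ) < K := by exact_mod_cast hK
  have hW1 : (2 : ℝ) ≤ W := by exact_mod_cast hW.two_le
  have hm0 : (0 : ℝ) ≤ P.m (j r) := Nat.cast_nonneg _
  have hmK : (P.m (j r) : ℝ) * (K : ℝ)⁻¹ ≤ δ / 8 := by
    rw [← div_eq_mul_inv, div_le_iff₀ hK0]
    linarith [hKδ r]
  have hmK0 : 0 ≤ (P.m (j r) : ℝ) * (K : ℝ)⁻¹ := by positivity
  split_ifs with h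
  · have hmW : (P.m (j r) : ℝ) ≤ W := by exact_mod_cast h
    have h1 := hx.sum_le hη hK (inv_nonneg.2 hK0.le) (hG.scc i r) hW hfam
    have h2 := mul_le_mul_of_nonneg_left h1 hm0
    refine h2.trans ?_
    have e : (P.m (j r) : ℝ) * (1 + η + W / K + W * (K : ℝ)⁻¹) =
        P.m (j r) + P.m (j r) * η + 2 * (W * (P.m (j r) * (K : ℝ)⁻¹)) := by
      rw [div_eq_mul_inv]; ring
    rw [e]
    have e1 : (P.m (j r) : ℝ) * η ≤ W * (δ / 8) := mul_le_mul hmW hηδ hη (by linarith)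
    have e2 : (W : ℝ) * (P.m (j r) * (K : ℝ)⁻¹) ≤ W * (δ / 8) :=
      mul_le_mul_of_nonneg_left hmK (by linarith)
    nlinarith
  · have hk := hW.lt (not_le.1 h)
    have h1 := hfam.core hW hx.blk (fun t _ => hx.norm_le t) (hG.scc i r) (inv_nonneg.2 hK0.le)
      (by omega) (inv_nonneg.2 hK0.le) (by
        intro q hq t _ t' _ ht ht'
        refine hx.resonance (by linarith) (inv_pos.2 hK0) (inv_mul_cancel₀ hK0.ne').ge
          (M := L) ?_ (hfam.mem q hq) (hu q hq) ht ht'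
        have : (2 : ℝ) * K ≤ L := by exact_mod_cast hL
        rw [inv_mul_eq_div, le_div_iff₀ hK0]
        exact this)
    have h2 := mul_le_mul_of_nonneg_left h1 hm0
    refine h2.trans ?_
    have e : (P.m (j r) : ℝ) * ((K : ℝ)⁻¹ + 4 * W * (K : ℝ)⁻¹) =
        (P.m (j r) * (K : ℝ)⁻¹) * (1 + 4 * W) := by ring
    rw [e, zero_add]
    have e2 := mul_le_mul_of_nonneg_right hmK (by linarith : (0 : ℝ) ≤ 1 + 4 * W)
    nlinarith

/-- Signed unit functionals are small on combinations of columns, since all coefficients of the special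
convex combinations are small. -/
theorem grid_upper_single (hx : Ris P K η p x J g w) (hK : 0 < K) {δ : ℝ} (hδ : 0 < δ)
    (hKδ : ∀ r, 8 * (P.m (j r) : ℝ) ≤ δ * K) (hG : Grid P p (K : ℝ)⁻¹ L n R j S F c)
    {lam : Fin R → Fin n → ℝ} (hlam : ∀ r i, 0 ≤ lam r i) (a : Fin n → ℝ)
    {M : ℝ} (hM : ∀ r, ∑ i, lam r i * |a i| ≤ M) (i₀ : ℕ) {s : ℝ}
    (hs : s = 1 ∨ s = -1) :
    |evalPair (Finsupp.single i₀ s) (∑ i, a i • colVec P x j S c lam i)| ≤ R * δ * M := by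
  classical
  have hK0 : (0 : ℝ) < K := by exact_mod_cast hK
  set f : c00 := Finsupp.single i₀ s with hf
  have hfW : WIW P f ⊤ := WIW.unit i₀ s hs
  refine (eval_colVec_le hG hlam a f).trans ?_
  have h1 : ∀ r : Fin R, ∑ i, lam r i * |a i| *
      (P.m (j r) * ∑ t ∈ F i r, c i r t * |evalPair f (x t)|) ≤ δ * M := by
    intro r
    have hcell : ∀ i : Fin n, (P.m (j r) : ℝ) * ∑ t ∈ F i r, c i r t * |evalPair f (x t)| ≤ δ := by
      intro i
      have hle : ∑ t ∈ F i r, c i r t * |evalPair f (x t)| ≤ (K : ℝ)⁻¹ := by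
        by_cases hex : ∃ t ∈ F i r, evalPair f (x t) ≠ 0
        · obtain ⟨t, ht, hne⟩ := hex
          rw [Finset.sum_eq_single_of_mem t ht]
          · have e1 : c i r t ≤ (K : ℝ)⁻¹ := (hG.scc i r).le (inv_nonneg.2 hK0.le)
              (hx.blk.one_le' t)
            have e2 := (hfW.abs_le_norm (x t)).trans (hx.norm_le t)
            exact (mul_le_of_le_one_right ((hG.scc i r).nonneg t) e2).trans e1
          · intro t' _ htt
            have : evalPair f (x t') = 0 := by
              by_contra hne'
              obtain ⟨i1, hi1, hi1'⟩ := exists_mem_of_evalPair_ne_zero hne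
              obtain ⟨i2, hi2, hi2'⟩ := exists_mem_of_evalPair_ne_zero hne'
              have e1 := Finset.mem_singleton.1 (Finsupp.support_single_subset hi1)
              have e2 := Finset.mem_singleton.1 (Finsupp.support_single_subset hi2)
              rw [e1] at hi1'
              rw [e2] at hi2'
              rcases lt_or_gt_of_ne htt with h | h
              · exact lt_irrefl _ (hx.blk.lt h hi2' hi1')
              · exact lt_irrefl _ (hx.blk.lt h hi1' hi2')
            rw [this, abs_zero, mul_zero]
        · push Not at hex
          rw [Finset.sum_eq_zero fun t ht => by rw [hex t ht, abs_zero, mul_zero]]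
          exact inv_nonneg.2 hK0.le
      have h2 := mul_le_mul_of_nonneg_left hle (Nat.cast_nonneg (α := ℝ) (P.m (j r)))
      refine h2.trans ?_
      rw [← div_eq_mul_inv, div_le_iff₀ hK0]
      have h3 := hKδ r
      have h4 : (0 : ℝ) ≤ P.m (j r) := Nat.cast_nonneg _
      linarith
    calc _ ≤ ∑ i, lam r i * |a i| * δ := Finset.sum_le_sum fun i _ =>
          mul_le_mul_of_nonneg_left (hcell i) (mul_nonneg (hlam r i) (abs_nonneg _))
      _ ≤ _ := by
          rw [← Finset.sum_mul, mul_comm]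
          exact mul_le_mul_of_nonneg_left (hM r) hδ.le
  refine (Finset.sum_le_sum fun r _ => h1 r).trans (le_of_eq ?_)
  rw [Finset.sum_const, Finset.card_univ, Fintype.card_fin, nsmul_eq_mul]
  ring

/-- The upper bound for the norm `V` of a combination of columns, in self-improving form.  For a
functional of weight `W`, the first member acting nontrivially contributes at most `V / W`; the
weights of the others are large, and `cell_le` bounds their contribution by the rows with
`m_{j_r} ≤ W`, of which only the last one matters. -/
theorem grid_upper (hx : Ris P K η p x J g w) (hK : 0 < K) (hη : 0 ≤ η) {δ : ℝ} (hδ : 0 < δ)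
    (hδ1 : δ ≤ 1) (hηδ : η ≤ δ / 8) (hKδ : ∀ r, 8 * (P.m (j r) : ℝ) ≤ δ * K) (hL : 2 * K ≤ L)
    (hm1 : ∀ r, 1 ≤ δ * P.m (j r)) (hm2 : ∀ r r', r < r' → (P.m (j r) : ℝ) ≤ δ * P.m (j r'))
    (hG : Grid P p (K : ℝ)⁻¹ L n R j S F c)
    {lam : Fin R → Fin n → ℝ} (hlam : ∀ r i, 0 ≤ lam r i) (a : Fin n → ℝ)
    {M : ℝ} (hM0 : 0 ≤ M) (hM : ∀ r, ∑ i, lam r i * |a i| ≤ M) {V : ℝ}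
    (hV : V = iwNorm P (∑ i, a i • colVec P x j S c lam i)) :
    V ≤ max (V / 2 + R * δ * M) (δ * V + (1 + 2 * R * δ) * M) := by
  classical
  set X := ∑ i, a i • colVec P x j S c lam i with hX
  have hV0 : 0 ≤ V := by rw [hV]; exact norm_nonneg' _
  have hRδM : 0 ≤ R * δ * M := by positivity
  refine hV.le.trans (norm_le ?_)
  intro f u hf
  rcases hf.cases with ⟨i, s, hs, rfl, _⟩ | ⟨W, k, d, h, v, hW, _, hfam, rfl⟩
  · refine le_max_of_le_left ?_
    have := (le_abs_self _).trans (grid_upper_single hx hK hδ hKδ hG hlam a hM i hs)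
    linarith
  have hW2 : (2 : ℝ) ≤ W := by exact_mod_cast hW.two_le
  have hWp : (0 : ℝ) < W := by linarith
  by_cases hex : ∃ q, q ∈ Finset.range d ∧ evalPair (h q) X ≠ 0
  swap
  · push Not at hex
    refine le_max_of_le_left ?_
    rw [smul_evalPair, sum_evalPair, Finset.sum_eq_zero fun q hq => hex q hq, mul_zero]
    linarith
  -- the first member acting nontrivially; the weights of the later ones exceed its support, hence `L`
  set q₀ := Nat.find hex with hq₀
  obtain ⟨hq₀d, hq₀ne⟩ := Nat.find_spec hex
  have hq₀min : ∀ q ∈ Finset.range d, q < q₀ → evalPair (h q) X = 0 := by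
    intro q hq hlt
    by_contra hne
    exact Nat.find_min hex hlt ⟨hq, hne⟩
  set Q := (Finset.range d).filter fun q => q₀ < q with hQ
  have hfQ := hfam.subset (Finset.filter_subset (fun q => q₀ < q) (Finset.range d))
  have hQu : ∀ q ∈ Q, (L : ℕ∞) < v q := by
    intro q hq
    obtain ⟨hqd, hlt⟩ := Finset.mem_filter.1 hq
    obtain ⟨i, hi, hi'⟩ := exists_mem_of_evalPair_ne_zero hq₀ne
    have e1 := hG.support_ge hx.blk lam a hi'
    exact lt_of_le_of_lt (by exact_mod_cast e1) (hfam.vfg q₀ hq₀d q hqd hlt i hi)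
  have hsplit : ∑ q ∈ Finset.range d, |evalPair (h q) X| ≤ V + ∑ q ∈ Q, |evalPair (h q) X| := by
    calc ∑ q ∈ Finset.range d, |evalPair (h q) X|
        ≤ ∑ q ∈ Finset.range d, ((if q = q₀ then V else 0) +
            if q₀ < q then |evalPair (h q) X| else 0) := by
          refine Finset.sum_le_sum fun q hq => ?_
          rcases lt_trichotomy q q₀ with hlt | heq | hlt
          · rw [hq₀min q hq hlt, if_neg hlt.ne, if_neg hlt.le.not_gt]; simp
          · rw [if_pos heq, if_neg heq.le.not_gt, add_zero, hV]
            exact (hfam.mem q hq).abs_le_norm X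
          · rw [if_neg hlt.ne', if_pos hlt, zero_add]
      _ = V + ∑ q ∈ Q, |evalPair (h q) X| := by
          rw [Finset.sum_add_distrib, Finset.sum_ite_eq', if_pos hq₀d, ← Finset.sum_filter]
  have hQsum : ∑ q ∈ Q, |evalPair (h q) X| ≤
      M * ∑ r, ((if P.m (j r) ≤ W then (P.m (j r) : ℝ) else 0) + δ * W) := by
    calc ∑ q ∈ Q, |evalPair (h q) X|
        ≤ ∑ q ∈ Q, ∑ r, ∑ i, lam r i * |a i| *
            (P.m (j r) * ∑ t ∈ F i r, c i r t * |evalPair (h q) (x t)|) :=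
          Finset.sum_le_sum fun q _ => eval_colVec_le hG hlam a (h q)
      _ = ∑ r, ∑ i, lam r i * |a i| *
            (P.m (j r) * ∑ t ∈ F i r, c i r t * ∑ q ∈ Q, |evalPair (h q) (x t)|) := by
          rw [Finset.sum_comm]
          refine Finset.sum_congr rfl fun r _ => ?_
          rw [Finset.sum_comm]
          refine Finset.sum_congr rfl fun i _ => ?_
          rw [← Finset.mul_sum, ← Finset.mul_sum, Finset.sum_comm]
          congr 2
          exact Finset.sum_congr rfl fun t _ => (Finset.mul_sum _ _ _).symm
      _ ≤ ∑ r, M * ((if P.m (j r) ≤ W then (P.m (j r) : ℝ) else 0) + δ * W) := by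
          refine Finset.sum_le_sum fun r _ => ?_
          have hnn : 0 ≤ (if P.m (j r) ≤ W then (P.m (j r) : ℝ) else 0) + δ * W := by
            split_ifs <;> positivity
          refine le_trans ?_ (mul_le_mul_of_nonneg_right (hM r) hnn)
          rw [Finset.sum_mul]
          exact Finset.sum_le_sum fun i _ => mul_le_mul_of_nonneg_left
            (cell_le hx hK hη hδ hδ1 hηδ hKδ hL hG hW hfQ hQu i r)
            (mul_nonneg (hlam r i) (abs_nonneg _))
      _ = _ := (Finset.mul_sum _ _ _).symm
  have hf1 : evalPair ((W : ℝ)⁻¹ • ∑ q ∈ Finset.range d, h q) X ≤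
      (V + M * ∑ r, ((if P.m (j r) ≤ W then (P.m (j r) : ℝ) else 0) + δ * W)) / W := by
    refine (le_abs_self _).trans ((abs_avg_le X).trans ?_)
    gcongr
    linarith
  refine hf1.trans ?_
  have hconst : ∑ _r : Fin R, δ * (W : ℝ) = R * δ * W := by
    rw [Finset.sum_const, Finset.card_univ, Fintype.card_fin, nsmul_eq_mul]
    ring
  by_cases hr : ∃ r, P.m (j r) ≤ W
  · refine le_max_of_le_right ?_
    -- the last row whose weight does not exceed `W` dominates all previous ones
    set G := Finset.univ.filter fun r => P.m (j r) ≤ W with hGdef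
    have hGne : G.Nonempty := by
      obtain ⟨r, hr⟩ := hr
      exact ⟨r, Finset.mem_filter.2 ⟨Finset.mem_univ r, hr⟩⟩
    set s := G.max' hGne with hsdef
    have hsW : P.m (j s) ≤ W := (Finset.mem_filter.1 (Finset.max'_mem G hGne)).2
    have hsW' : (P.m (j s) : ℝ) ≤ W := by exact_mod_cast hsW
    have hterm : ∀ r, (if P.m (j r) ≤ W then (P.m (j r) : ℝ) else 0) ≤
        (if r = s then (W : ℝ) else 0) + δ * W := by
      intro r
      have hδW : 0 ≤ δ * W := by positivity
      by_cases h1 : P.m (j r) ≤ W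
      · rw [if_pos h1]
        by_cases h2 : r = s
        · rw [if_pos h2, h2]
          linarith
        · rw [if_neg h2, zero_add]
          have hle : r ≤ s := Finset.le_max' G r (Finset.mem_filter.2 ⟨Finset.mem_univ r, h1⟩)
          exact (hm2 r s (lt_of_le_of_ne hle h2)).trans (mul_le_mul_of_nonneg_left hsW' hδ.le)
      · rw [if_neg h1]
        split_ifs <;> positivity
    have hsum : ∑ r, ((if P.m (j r) ≤ W then (P.m (j r) : ℝ) else 0) + δ * W) ≤
        W + 2 * (R * δ * W) := by
      rw [Finset.sum_add_distrib, hconst]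
      have := Finset.sum_le_sum fun r (_ : r ∈ Finset.univ) => hterm r
      rw [Finset.sum_add_distrib, hconst, Finset.sum_ite_eq', if_pos (Finset.mem_univ s)] at this
      linarith
    have hδW : 1 ≤ δ * W := (hm1 s).trans (mul_le_mul_of_nonneg_left hsW' hδ.le)
    rw [div_le_iff₀ hWp]
    have h1 := mul_le_mul_of_nonneg_left hsum hM0
    have h2 : V ≤ δ * W * V := le_mul_of_one_le_left hV0 hδW
    nlinarith
  · refine le_max_of_le_left ?_
    push Not at hr
    have hsum : ∑ r, ((if P.m (j r) ≤ W then (P.m (j r) : ℝ) else 0) + δ * W) = R * δ * W := by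
      rw [← hconst]
      refine Finset.sum_congr rfl fun r _ => ?_
      rw [if_neg (not_le.2 (hr r)), zero_add]
    rw [hsum, div_le_iff₀ hWp]
    nlinarith

end

section
variable {P : IWParams}

/-- Every norm on `ℝⁿ` of the form `max_r ∑ i, lam r i * |a i|` is represented, up to `1 ± ε`, by
nonnegative successive combinations of a given normalized block sequence with lower estimates. -/
theorem exists_blocks_aux {p : ℕ → ℕ} {v : ℕ → c00} (hv : Blk p v) (hN : ∀ k, iwNorm P (v k) = 1)
    {C : ℝ} (hLE : LowerEst P p v C) {n R : ℕ} (lam : Fin R → Fin n → ℝ)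
    (hlam : ∀ r i, 0 ≤ lam r i) {ε : ℝ} (hε : 0 < ε) (hε1 : ε ≤ 1) :
    ∃ (T : ℕ → ℕ) (z : Fin n → c00), StrictMono T ∧
      (∀ i : Fin n, PosComb v (T i) (T (i + 1)) (z i)) ∧
      ∀ a : Fin n → ℝ, (∀ r, (1 - ε) * ∑ i, lam r i * |a i| ≤ iwNorm P (∑ i, a i • z i)) ∧
        ∀ M, 0 ≤ M → (∀ r, ∑ i, lam r i * |a i| ≤ M) →
          iwNorm P (∑ i, a i • z i) ≤ (1 + ε) * M := by
  classical
  set δ : ℝ := ε / (4 * (R + 1)) with hδdef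
  have hR0 : (0 : ℝ) ≤ R := Nat.cast_nonneg _
  have hδ : 0 < δ := by positivity
  have hδR : δ * (4 * (R + 1)) = ε := div_mul_cancel₀ _ (by positivity)
  have hδε : 4 * δ ≤ ε := by nlinarith
  obtain ⟨j₀, hj₀⟩ : ∃ j₀, ∀ j ≥ j₀, (P.m j : ℝ) / P.m (j + 1) < δ ∧ 1 / δ ≤ P.m j := by
    have h1 := P.growth_ratio.eventually_lt_const hδ
    have h2 : ∀ᶠ j in atTop, 1 / δ ≤ (P.m j : ℝ) :=
      (tendsto_natCast_atTop_atTop.comp P.m_mono.tendsto_atTop).eventually_ge_atTop _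
    exact eventually_atTop.1 (h1.and h2)
  have hmpos : ∀ i, (0 : ℝ) < P.m i := fun i => by
    have := two_le_m (P := P) i
    exact_mod_cast (by omega : 0 < P.m i)
  set j : Fin R → ℕ := fun r => j₀ + r with hj
  have hm1 : ∀ r, 1 ≤ δ * P.m (j r) := by
    intro r
    have := (hj₀ (j r) (Nat.le_add_right _ _)).2
    rw [div_le_iff₀ hδ] at this
    linarith
  have hm2 : ∀ r r', r < r' → (P.m (j r) : ℝ) ≤ δ * P.m (j r') := by
    intro r r' hrr
    have h1 := (hj₀ (j r) (Nat.le_add_right _ _)).1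
    rw [div_lt_iff₀ (hmpos _)] at h1
    have h2 : P.m (j r + 1) ≤ P.m (j r') := P.m_mono.monotone (by
      simp only [hj]; have : (r : ℕ) < r' := hrr
      omega)
    have h3 : (P.m (j r + 1) : ℝ) ≤ P.m (j r') := by exact_mod_cast h2
    exact h1.le.trans (mul_le_mul_of_nonneg_left h3 hδ.le)
  obtain ⟨K, hK⟩ := exists_nat_ge (8 * (P.m (j₀ + R) : ℝ) / δ)
  rw [div_le_iff₀ hδ] at hK
  have hK0 : 0 < K := by
    rcases Nat.eq_zero_or_pos K with rfl | h
    · simp only [Nat.cast_zero, zero_mul] at hK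
      linarith [hmpos (j₀ + R)]
    · exact h
  have hKδ : ∀ r, 8 * (P.m (j r) : ℝ) ≤ δ * K := by
    intro r
    have h2 : P.m (j r) ≤ P.m (j₀ + R) := P.m_mono.monotone (by
      simp only [hj]; have := r.2; omega)
    have h3 : (P.m (j r) : ℝ) ≤ P.m (j₀ + R) := by exact_mod_cast h2
    linarith
  obtain ⟨T, x, J, g, w, hT, hpos, hx⟩ := exists_ris hv hN hLE (η := δ / 8) (by linarith)
    (by linarith) K
  obtain ⟨S, F, c, hG⟩ := exists_grid (P := P) hx.blk.mono (ε := (K : ℝ)⁻¹)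
    (inv_pos.2 (by exact_mod_cast hK0)) (2 * K) n j
  refine ⟨fun i => T (S i), colVec P x j S c lam, hT.comp hG.mono, ?_, ?_⟩
  · intro i
    refine PosComb.sum fun t _ => ?_
    by_cases ht : S i ≤ t ∧ t < S (i + 1)
    · exact ((hpos t).mono (hT.monotone ht.1) (hT.monotone ht.2)).smul
        (colCoef_nonneg hG hlam i t)
    · rw [colCoef_zero hG lam i ht, zero_smul]
      exact PosComb.zero _ _ _
  · intro a
    refine ⟨fun r => ?_, fun M hM0 hM => ?_⟩
    · refine le_trans ?_ (grid_lower hx hK0 (by linarith) hG hlam a r)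
      refine mul_le_mul_of_nonneg_right (by linarith) ?_
      exact Finset.sum_nonneg fun i _ => mul_nonneg (hlam r i) (abs_nonneg _)
    · have h := grid_upper hx hK0 (by linarith) hδ (by linarith) le_rfl hKδ le_rfl hm1 hm2 hG hlam a
        hM0 hM rfl
      set V := iwNorm P (∑ i, a i • colVec P x j S c lam i) with hV
      have hV0 : 0 ≤ V := norm_nonneg' _
      have hRδ : R * δ ≤ ε / 4 := by nlinarith
      rcases le_max_iff.1 h with h1 | h1
      · have h2 : R * δ * M ≤ ε / 4 * M := mul_le_mul_of_nonneg_right hRδ hM0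
        nlinarith
      · have h2 : (1 + 2 * R * δ) * M ≤ (1 + ε) * (1 - δ) * M := by
          refine mul_le_mul_of_nonneg_right ?_ hM0
          nlinarith
        have h3 : (1 - δ) * V ≤ (1 - δ) * ((1 + ε) * M) := by nlinarith
        exact le_of_mul_le_mul_left h3 (by linarith)

/-- The same for every normalized block sequence, lower estimates being available after passing to a
subsequence. -/
theorem exists_blocks {p : ℕ → ℕ} {v : ℕ → c00} (hv : Blk p v) (hN : ∀ k, iwNorm P (v k) = 1)
    {n R : ℕ} (lam : Fin R → Fin n → ℝ)
    (hlam : ∀ r i, 0 ≤ lam r i) {ε : ℝ} (hε : 0 < ε) (hε1 : ε ≤ 1) :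
    ∃ (T : ℕ → ℕ) (z : Fin n → c00), StrictMono T ∧
      (∀ i : Fin n, PosComb v (T i) (T (i + 1)) (z i)) ∧
      ∀ a : Fin n → ℝ, (∀ r, (1 - ε) * ∑ i, lam r i * |a i| ≤ iwNorm P (∑ i, a i • z i)) ∧
        ∀ M, 0 ≤ M → (∀ r, ∑ i, lam r i * |a i| ≤ M) →
          iwNorm P (∑ i, a i • z i) ≤ (1 + ε) * M := by
  obtain ⟨C, σ, _, hσ, hL⟩ := exists_lowerEst hv hN
  obtain ⟨T, z, hT, hz, h⟩ := exists_blocks_aux (hv.comp hσ) (fun k => hN _) hL lam hlam hε hε1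
  refine ⟨fun i => σ (T i), z, hσ.comp hT, fun i => ?_, h⟩
  obtain ⟨b, hb, h⟩ := hz i
  rw [h]
  refine PosComb.sum fun k hk => PosComb.smul ?_ (hb k)
  rw [Finset.mem_Ico] at hk
  have h1 : PosComb v (σ k) (σ k + 1) (v (σ k)) := ⟨fun _ => 1, fun _ => zero_le_one, by simp⟩
  exact h1.mono (hσ.monotone hk.1) (hσ hk.2)

end

end IW

namespace IW

/-! ### Approximating the `ℓ_q` norms by maxima of finitely many weighted `ℓ₁` norms -/

/-- `lam` is a nonnegative functional dominated by the norm `ν`. -/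
def DualPos {n : ℕ} (ν : (Fin n → ℝ) → ℝ) (lam : Fin n → ℝ) : Prop :=
  (∀ i, 0 ≤ lam i) ∧ ∀ a : Fin n → ℝ, ∑ i, lam i * |a i| ≤ ν a

/-- A norm dominating the coordinates and normed by positive functionals is, up to `1 - δ`, the
maximum of finitely many of these. -/
theorem exists_net {n : ℕ} {ν : (Fin n → ℝ) → ℝ} (hc : ∀ a i, |a i| ≤ ν a)
    (hd : ∀ a, ∃ lam, DualPos ν lam ∧ ∑ i, lam i * |a i| = ν a) {δ : ℝ} (hδ : 0 < δ) :
    ∃ (R : ℕ) (lam : Fin R → Fin n → ℝ), (∀ r, DualPos ν (lam r)) ∧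
      ∀ a, ∃ r, (1 - δ) * ν a ≤ ∑ i, lam r i * |a i| := by
  classical
  have hν0 : ∀ a, 0 ≤ ν a := by
    intro a
    obtain ⟨lam, h1, h2⟩ := hd a
    rw [← h2]
    exact Finset.sum_nonneg fun i _ => mul_nonneg (h1.1 i) (abs_nonneg _)
  have htb : TotallyBounded {lam : Fin n → ℝ | DualPos ν lam} := by
    refine TotallyBounded.subset ?_
      (isCompact_Icc (a := (0 : Fin n → ℝ)) (b := fun i => ν (Pi.single i 1))).totallyBounded
    intro lam h
    refine ⟨fun i => h.1 i, fun i => ?_⟩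
    have := h.2 (Pi.single i 1)
    rw [Finset.sum_eq_single_of_mem i (Finset.mem_univ i)] at this
    · simpa using this
    · intro k _ hk
      simp [hk]
  obtain ⟨t, hts, htf, hcov⟩ := Metric.finite_approx_of_totallyBounded htb (δ / (n + 1))
    (by positivity)
  obtain ⟨R, e, -, rfl⟩ := htf.fin_param
  refine ⟨R, e, fun r => hts (Set.mem_range_self r), ?_⟩
  intro a
  obtain ⟨lam, h1, h2⟩ := hd a
  obtain ⟨y, hy, hlam⟩ := Set.mem_iUnion₂.1 (hcov h1)
  obtain ⟨r, rfl⟩ := hy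
  refine ⟨r, ?_⟩
  have hclose : ∀ i, lam i - e r i ≤ δ / (n + 1) := by
    intro i
    have h3 : dist (lam i) (e r i) < δ / (n + 1) := lt_of_le_of_lt (dist_le_pi_dist _ _ i) hlam
    rw [Real.dist_eq] at h3
    exact (le_abs_self _).trans h3.le
  have h4 : ν a - ∑ i, e r i * |a i| ≤ ∑ _i : Fin n, δ / (n + 1) * ν a := by
    rw [← h2, ← Finset.sum_sub_distrib, h2]
    refine Finset.sum_le_sum fun i _ => ?_
    rw [← sub_mul]
    calc (lam i - e r i) * |a i| ≤ δ / (n + 1) * |a i| :=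
          mul_le_mul_of_nonneg_right (hclose i) (abs_nonneg _)
      _ ≤ _ := mul_le_mul_of_nonneg_left (hc a i) (by positivity)
  rw [Finset.sum_const, Finset.card_univ, Fintype.card_fin, nsmul_eq_mul] at h4
  have h5 : (n : ℝ) * (δ / (n + 1) * ν a) ≤ δ * ν a := by
    have : (n : ℝ) * (δ / (n + 1)) ≤ δ := by
      rw [mul_div_assoc', div_le_iff₀ (by positivity)]
      nlinarith
    rw [← mul_assoc]
    exact mul_le_mul_of_nonneg_right this (hν0 a)
  linarith

/-- The hypotheses of `exists_net` hold for the sup norm. -/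
theorem supNorm_props (n : ℕ) : (∀ a i, |a i| ≤ supNorm n a) ∧
    ∀ a, ∃ lam, DualPos (supNorm n) lam ∧ ∑ i, lam i * |a i| = supNorm n a := by
  classical
  have hc : ∀ (a : Fin n → ℝ) i, |a i| ≤ supNorm n a := fun a i =>
    le_ciSup (f := fun i => |a i|) (Set.finite_range _).bddAbove i
  refine ⟨hc, fun a => ?_⟩
  rcases isEmpty_or_nonempty (Fin n) with h | h
  · refine ⟨0, ⟨fun i => le_rfl, fun b => ?_⟩, ?_⟩ <;> simp [supNorm]
  · obtain ⟨i, hi⟩ := exists_eq_ciSup_of_finite (f := fun i => |a i|)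
    have hs : ∀ b : Fin n → ℝ, ∑ k, (Pi.single i 1 : Fin n → ℝ) k * |b k| = |b i| := by
      intro b
      rw [Finset.sum_eq_single_of_mem i (Finset.mem_univ i)]
      · simp
      · intro k _ hk
        simp [hk]
    refine ⟨Pi.single i 1, ⟨fun k => ?_, fun b => ?_⟩, ?_⟩
    · rw [Pi.single_apply]; split_ifs <;> norm_num
    · rw [hs]; exact hc b i
    · rw [hs]; exact hi

/-- The hypotheses of `exists_net` hold for the `ℓ_q` norm, by the equality case of Hölder. -/
theorem lpNormFin_props {q : ℝ} (hq : 1 ≤ q) (n : ℕ) : (∀ a i, |a i| ≤ lpNormFin q n a) ∧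
    ∀ a, ∃ lam, DualPos (lpNormFin q n) lam ∧ ∑ i, lam i * |a i| = lpNormFin q n a := by
  have hq0 : 0 < q := by linarith
  constructor
  · intro a i
    have h1 : |a i| ^ q ≤ ∑ i, |a i| ^ q :=
      Finset.single_le_sum (f := fun i => |a i| ^ q)
        (fun i _ => Real.rpow_nonneg (abs_nonneg _) _) (Finset.mem_univ i)
    have h2 := Real.rpow_le_rpow (Real.rpow_nonneg (abs_nonneg _) _) h1
      (by positivity : 0 ≤ 1 / q)
    rwa [one_div, Real.rpow_rpow_inv (abs_nonneg _) hq0.ne', ← one_div] at h2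
  · intro a
    rcases hq.eq_or_lt with rfl | hq1
    · refine ⟨fun _ => 1, ⟨fun _ => zero_le_one, fun b => ?_⟩, ?_⟩ <;> simp [lpNormFin]
    · have hconj := Real.HolderConjugate.conjExponent hq1
      have hcast : ∀ (b : Fin n → ℝ),
          (((∑ i, ‖b i‖₊ ^ q) ^ (1 / q) : NNReal) : ℝ) = lpNormFin q n b := by
        intro b
        push_cast
        simp [lpNormFin, Real.norm_eq_abs]
      have hsum : ∀ (b : Fin n → ℝ) (g : Fin n → NNReal),
          ((∑ i, ‖b i‖₊ * g i : NNReal) : ℝ) = ∑ i, (g i : ℝ) * |b i| := by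
        intro b g
        push_cast
        refine Finset.sum_congr rfl fun i _ => ?_
        rw [Real.norm_eq_abs, mul_comm]
      obtain ⟨g, hg, hgv⟩ := (NNReal.isGreatest_Lp Finset.univ (fun i => ‖a i‖₊) hconj).1
      refine ⟨fun i => g i, ⟨fun i => (g i).2, fun b => ?_⟩, ?_⟩
      · have := (NNReal.isGreatest_Lp Finset.univ (fun i => ‖b i‖₊) hconj).2 ⟨g, hg, rfl⟩
        rw [← hcast, ← hsum]
        exact_mod_cast this
      · rw [← hcast, ← hsum]
        exact congrArg _ hgv

theorem finLqNorm_net {q : ℝ≥0∞} (hq : 1 ≤ q) (n : ℕ) {δ : ℝ} (hδ : 0 < δ) :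
    (∀ a i, |a i| ≤ finLqNorm q n a) ∧
    ∃ (R : ℕ) (lam : Fin R → Fin n → ℝ), (∀ r, DualPos (finLqNorm q n) (lam r)) ∧
      ∀ a, ∃ r, (1 - δ) * finLqNorm q n a ≤ ∑ i, lam r i * |a i| := by
  by_cases h : q = ⊤
  · have e : finLqNorm q n = supNorm n := by funext a; simp [finLqNorm, h]
    rw [e]
    obtain ⟨h1, h2⟩ := supNorm_props n
    exact ⟨h1, exists_net h1 h2 hδ⟩
  · have e : finLqNorm q n = lpNormFin q.toReal n := by funext a; simp [finLqNorm, h]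
    rw [e]
    have hq' : 1 ≤ q.toReal := by
      rw [← ENNReal.toReal_one]
      exact (ENNReal.toReal_le_toReal ENNReal.one_ne_top h).2 hq
    obtain ⟨h1, h2⟩ := lpNormFin_props hq' n
    exact ⟨h1, exists_net h1 h2 hδ⟩

end IW

namespace IW

/-! ### Reflexive spaces contain neither `ℓ₁` nor `c₀` -/

section Abstract

variable {X : Type*} [NormedAddCommGroup X] [NormedSpace ℝ X]

/-- A linear functional on coefficient sequences which is bounded with respect to the norm of the
corresponding combinations of `x` is induced by an element of the dual. -/
theorem exists_dual_extension (x : ℕ → X) (h : c00 →ₗ[ℝ] ℝ) {A : ℝ} (hA : 0 ≤ A)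
    (hh : ∀ a, |h a| ≤ A * ‖Finsupp.linearCombination ℝ x a‖) :
    ∃ g : X →L[ℝ] ℝ, ‖g‖ ≤ A ∧ ∀ a, g (Finsupp.linearCombination ℝ x a) = h a := by
  set ψ := Finsupp.linearCombination ℝ x with hψ
  obtain ⟨s, hs⟩ := ψ.rangeRestrict.exists_rightInverse_of_surjective
    (LinearMap.range_rangeRestrict ψ)
  have hs' : ∀ y : LinearMap.range ψ, ψ (s y) = y := by
    intro y
    have := congrArg (fun f => ((f y : LinearMap.range ψ) : X)) hs
    simpa using this
  let f : LinearMap.range ψ →L[ℝ] ℝ := (h ∘ₗ s).mkContinuous A (by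
    intro y
    have := hh (s y)
    rw [hs' y] at this
    simpa using this)
  obtain ⟨g, hg, hgn⟩ := exists_extension_norm_eq (LinearMap.range ψ) f
  refine ⟨g, ?_, fun a => ?_⟩
  · rw [hgn]
    exact LinearMap.mkContinuous_norm_le _ hA _
  · have h1 := hg ⟨ψ a, LinearMap.mem_range_self ψ a⟩
    have h2 : f ⟨ψ a, LinearMap.mem_range_self ψ a⟩ = h (s ⟨ψ a, LinearMap.mem_range_self ψ a⟩) :=
      rfl
    rw [h2] at h1
    refine h1.trans ?_
    have h3 := hh (s ⟨ψ a, LinearMap.mem_range_self ψ a⟩ - a)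
    rw [map_sub, map_sub, hs', sub_self, norm_zero, mul_zero] at h3
    exact sub_eq_zero.1 (abs_eq_zero.1 (le_antisymm h3 (abs_nonneg _)))

/-- In a reflexive space every bounded sequence has a weak limit along a free ultrafilter. -/
theorem exists_weak_limit (hr : Function.Surjective (NormedSpace.inclusionInDoubleDual ℝ X))
    {s : ℕ → X} {M : ℝ} (hs : ∀ k, ‖s k‖ ≤ M) :
    ∃ x : X, ∀ g : X →L[ℝ] ℝ,
      Tendsto (fun k => g (s k)) (hyperfilter ℕ : Filter ℕ) (𝓝 (g x)) := by
  have hM : 0 ≤ M := (norm_nonneg _).trans (hs 0)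
  have hb : ∀ (g : X →L[ℝ] ℝ) k, g (s k) ∈ Set.Icc (-(M * ‖g‖)) (M * ‖g‖) := by
    intro g k
    refine abs_le.1 ?_
    calc |g (s k)| ≤ ‖g‖ * ‖s k‖ := g.le_opNorm _
      _ ≤ ‖g‖ * M := mul_le_mul_of_nonneg_left (hs k) (norm_nonneg _)
      _ = M * ‖g‖ := mul_comm _ _
  have hlim : ∀ g : X →L[ℝ] ℝ, ∃ l, l ∈ Set.Icc (-(M * ‖g‖)) (M * ‖g‖) ∧
      Tendsto (fun k => g (s k)) (hyperfilter ℕ : Filter ℕ) (𝓝 l) := by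
    intro g
    obtain ⟨l, hl, hl'⟩ := isCompact_Icc.ultrafilter_le_nhds
      ((hyperfilter ℕ).map fun k => g (s k)) (by
        rw [le_principal_iff]
        exact Filter.mem_map.2 (Filter.univ_mem' (hb g)))
    exact ⟨l, hl, hl'⟩
  choose L hL hLt using hlim
  let Λ : (X →L[ℝ] ℝ) →ₗ[ℝ] ℝ :=
    { toFun := L
      map_add' := fun g g' => tendsto_nhds_unique (hLt (g + g')) ((hLt g).add (hLt g'))
      map_smul' := fun c g => tendsto_nhds_unique (hLt (c • g)) ((hLt g).const_mul c) }
  obtain ⟨x, hx⟩ := hr (Λ.mkContinuous M fun g => abs_le.2 (hL g))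
  refine ⟨x, fun g => ?_⟩
  have h1 : g x = L g := by
    have := congrArg (fun F => F g) hx
    simp only [NormedSpace.dual_def, LinearMap.mkContinuous_apply] at this
    exact this
  rw [h1]
  exact hLt g

/-- In a reflexive space no bounded sequence admits uniformly bounded functionals `g_K` taking the
value `α` on the terms up to `K` and another value `β` on all later ones: a weak limit point `x` has
`g_K x = β`, while `x` is approximated by convex combinations, on which some `g_K` equals `α`. -/
theorem not_separated (hr : Function.Surjective (NormedSpace.inclusionInDoubleDual ℝ X))
    {s : ℕ → X} {M A α β : ℝ} (hs : ∀ k, ‖s k‖ ≤ M) (hαβ : α ≠ β)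
    (hg : ∀ K : ℕ, ∃ g : X →L[ℝ] ℝ, ‖g‖ ≤ A ∧ (∀ k ≤ K, g (s k) = α) ∧ ∀ k, K < k → g (s k) = β) :
    False := by
  obtain ⟨x, hx⟩ := exists_weak_limit hr hs
  have hA : 0 ≤ A := by
    obtain ⟨g, h, -⟩ := hg 0
    exact (norm_nonneg _).trans h
  have hmem : x ∈ closure (convexHull ℝ (Set.range s)) := by
    by_contra hn
    obtain ⟨f, u, hf, hu⟩ := geometric_hahn_banach_closed_point
      (convex_convexHull ℝ (Set.range s)).closure isClosed_closure hn
    exact absurd hu (not_lt.2 (le_of_tendsto (hx f) (Filter.univ_mem' fun k =>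
      (hf _ (subset_closure (subset_convexHull ℝ _ (Set.mem_range_self k)))).le)))
  have hpos : 0 < |α - β| := abs_pos.2 (sub_ne_zero.2 hαβ)
  obtain ⟨y, hy, hxy⟩ := Metric.mem_closure_iff.1 hmem (|α - β| / (A + 1)) (by positivity)
  have hdir : Directed (· ⊆ ·) fun K : ℕ => convexHull ℝ (s '' Set.Iic K) :=
    Monotone.directed_le fun K K' h => convexHull_mono (Set.image_mono (Set.Iic_subset_Iic.2 h))
  have hy' : y ∈ ⋃ K : ℕ, convexHull ℝ (s '' Set.Iic K) := by
    refine convexHull_min ?_ (hdir.convex_iUnion fun K => convex_convexHull ℝ _) hy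
    rintro _ ⟨k, rfl⟩
    exact Set.mem_iUnion.2 ⟨k, subset_convexHull ℝ _ ⟨k, Set.mem_Iic.2 le_rfl, rfl⟩⟩
  obtain ⟨K, hK⟩ := Set.mem_iUnion.1 hy'
  obtain ⟨g, hgA, hα, hβ⟩ := hg K
  have h1 : g y = α := by
    have hc : Convex ℝ {z : X | g z = α} := convex_hyperplane g.toLinearMap.isLinear α
    refine convexHull_min ?_ hc hK
    rintro _ ⟨k, hk, rfl⟩
    exact hα k hk
  have h2 : g x = β := by
    refine tendsto_nhds_unique (hx g) (tendsto_const_nhds.congr' ?_)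
    have : ∀ᶠ k in (hyperfilter ℕ : Filter ℕ), K < k :=
      (Nat.hyperfilter_le_atTop) (eventually_gt_atTop K)
    filter_upwards [this] with k hk
    exact (hβ k hk).symm
  have h3 : |α - β| ≤ A * dist x y := by
    rw [← h1, ← h2, ← map_sub, dist_comm, dist_eq_norm]
    exact (g.le_opNorm _).trans (mul_le_mul_of_nonneg_right hgA (norm_nonneg _))
  have h4 : A * dist x y ≤ A * (|α - β| / (A + 1)) := mul_le_mul_of_nonneg_left hxy.le hA
  have h5 : A * (|α - β| / (A + 1)) < |α - β| := by
    rw [mul_div_assoc', div_lt_iff₀ (by positivity)]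
    nlinarith
  linarith

/-- Combinations along `c00` as sums over `Fin m`. -/
theorem exists_fin_sum (x : ℕ → X) (a : c00) : ∃ m : ℕ, (∀ i ∈ a.support, i < m) ∧
    Finsupp.linearCombination ℝ x a = ∑ i : Fin m, a i • x i := by
  refine ⟨a.support.sup id + 1, fun i hi => Nat.lt_succ_of_le (Finset.le_sup (f := id) hi), ?_⟩
  rw [Finsupp.linearCombination_apply, Finset.sum_range (fun i => a i • x i) |>.symm]
  refine Finsupp.sum_of_support_subset _ ?_ _ (by simp)
  intro i hi
  exact Finset.mem_range.2 (Nat.lt_succ_of_le (Finset.le_sup (f := id) hi))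

/-- Functionals separating the tail of an `ℓ₁` sequence from its beginning are uniformly bounded. -/
theorem not_l1 (hr : Function.Surjective (NormedSpace.inclusionInDoubleDual ℝ X)) :
    ¬ ∃ x : ℕ → X, ∃ A B : ℝ, 0 < A ∧ 0 < B ∧ ∀ (m : ℕ) (a : Fin m → ℝ),
      (1 / A) * l1Norm m a ≤ ‖∑ i, a i • x i‖ ∧ ‖∑ i, a i • x i‖ ≤ B * l1Norm m a := by
  rintro ⟨x, A, B, hA, hB, h⟩
  refine not_separated hr (s := x) (M := B) (A := A) (α := 1) (β := 0) ?_ one_ne_zero ?_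
  · intro k
    have := (h (k + 1) (Pi.single (Fin.last k) 1)).2
    rw [Finset.sum_eq_single (Fin.last k) (by intro i _ hi; simp [hi]) (by simp), l1Norm,
      Finset.sum_eq_single (Fin.last k) (by intro i _ hi; simp [hi]) (by simp)] at this
    simpa using this
  · intro K
    obtain ⟨g, hg, hgx⟩ := exists_dual_extension x
      (∑ i ∈ Finset.range (K + 1), Finsupp.lapply (R := ℝ) (M := ℝ) i) hA.le (by
        intro a
        obtain ⟨m, hm, ha⟩ := exists_fin_sum x a
        rw [ha]
        have h1 := (h m fun i => a i).1
        rw [one_div, inv_mul_le_iff₀ hA] at h1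
        refine le_trans ?_ h1
        simp only [LinearMap.sum_apply, Finsupp.lapply_apply, l1Norm]
        rw [← Finset.sum_range (fun i => |a i|)]
        refine (Finset.abs_sum_le_sum_abs _ _).trans ?_
        have h0 : ∀ i, i ∉ Finset.range m → |a i| = 0 := by
          intro i hi
          rw [abs_eq_zero]
          by_contra h0
          exact hi (Finset.mem_range.2 (hm i (Finsupp.mem_support_iff.2 h0)))
        rw [← Finset.sum_subset (Finset.inter_subset_left (s₂ := Finset.range m))
          (fun i hi hi' => h0 i fun h => hi' (Finset.mem_inter.2 ⟨hi, h⟩))]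
        exact Finset.sum_le_sum_of_subset_of_nonneg Finset.inter_subset_right
          fun i _ _ => abs_nonneg _)
    have hk : ∀ k, g (x k) = if k < K + 1 then 1 else 0 := by
      intro k
      have := hgx (Finsupp.single k 1)
      simpa [Finsupp.single_apply] using this
    refine ⟨g, hg, fun k hkK => ?_, fun k hkK => ?_⟩
    · rw [hk, if_pos (by omega)]
    · rw [hk, if_neg (by omega)]

/-- The partial sums of a `c₀` sequence are bounded, and the coordinate functionals separate them. -/
theorem not_c0 (hr : Function.Surjective (NormedSpace.inclusionInDoubleDual ℝ X)) :
    ¬ ∃ x : ℕ → X, ∃ A B : ℝ, 0 < A ∧ 0 < B ∧ ∀ (m : ℕ) (a : Fin m → ℝ),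
      (1 / A) * supNorm m a ≤ ‖∑ i, a i • x i‖ ∧ ‖∑ i, a i • x i‖ ≤ B * supNorm m a := by
  rintro ⟨x, A, B, hA, hB, h⟩
  refine not_separated hr (s := fun k => ∑ i ∈ Finset.range (k + 1), x i) (M := B) (A := A)
    (α := 0) (β := 1) ?_ zero_ne_one ?_
  · intro k
    have := (h (k + 1) fun _ => 1).2
    simp only [one_smul, supNorm, abs_one, ciSup_const, mul_one] at this
    rwa [Finset.sum_range]
  · intro K
    obtain ⟨g, hg, hgx⟩ := exists_dual_extension x
      (Finsupp.lapply (R := ℝ) (M := ℝ) (K + 1)) hA.le (by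
        intro a
        obtain ⟨m, hm, ha⟩ := exists_fin_sum x a
        rw [ha]
        have h1 := (h m fun i => a i).1
        rw [one_div, inv_mul_le_iff₀ hA] at h1
        refine le_trans ?_ h1
        rw [Finsupp.lapply_apply]
        by_cases hK : K + 1 < m
        · exact le_ciSup (f := fun i : Fin m => |a i|) (Set.finite_range _).bddAbove ⟨K + 1, hK⟩
        · have h0 : a (K + 1) = 0 := by
            by_contra h0
            exact hK (hm _ (Finsupp.mem_support_iff.2 h0))
          rw [h0, abs_zero]
          exact Real.iSup_nonneg fun i => abs_nonneg _)
    have hk : ∀ k, g (x k) = if k = K + 1 then 1 else 0 := by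
      intro k
      have := hgx (Finsupp.single k 1)
      simpa [Finsupp.single_apply] using this
    refine ⟨g, hg, fun k hkK => ?_, fun k hkK => ?_⟩
    · rw [map_sum]
      refine Finset.sum_eq_zero fun i hi => ?_
      rw [hk, if_neg (by have := Finset.mem_range.1 hi; omega)]
    · rw [map_sum]
      simp only [hk]
      rw [Finset.sum_ite_eq', if_pos (Finset.mem_range.2 (by omega))]

end Abstract

end IW

namespace IW

/-! ### Reflexivity -/

/-- Vectors with a given property supported arbitrarily far out can be strung into a block
sequence. -/
theorem exists_blk {Q : c00 → Prop} (h : ∀ N : ℕ, ∃ u : c00, Q u ∧ ∀ i ∈ u.support, N ≤ i) :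
    ∃ (p : ℕ → ℕ) (v : ℕ → c00), Blk p v ∧ ∀ k, Q (v k) := by
  choose u hQ hu using h
  let p : ℕ → ℕ := fun k => Nat.rec 1 (fun _ r => r + 1 + (u r).support.sup id) k
  have hp : ∀ k, p (k + 1) = p k + 1 + (u (p k)).support.sup id := fun k => rfl
  refine ⟨p, fun k => u (p k), ⟨strictMono_nat_of_lt_succ fun k => ?_, le_rfl, ?_⟩,
    fun k => hQ _⟩
  · rw [hp]; omega
  · intro t i hi
    refine ⟨hu _ i hi, ?_⟩
    have : i ≤ (u (p t)).support.sup id := Finset.le_sup (f := id) hi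
    rw [hp]; omega

theorem Blk.le_apply {p : ℕ → ℕ} {x : ℕ → c00} (h : Blk p x) (t : ℕ) : t + 1 ≤ p t := by
  induction t with
  | zero => exact h.one_le
  | succ t ih => have := h.mono (Nat.lt_add_one t); omega

/-- Each coordinate belongs to the support of at most one block. -/
theorem Blk.eq_of_mem {p : ℕ → ℕ} {x : ℕ → c00} (h : Blk p x) {s t i : ℕ}
    (hs : i ∈ (x s).support) (ht : i ∈ (x t).support) : s = t := by
  have h1 := h.mem s i hs
  have h2 := h.mem t i ht
  rcases lt_trichotomy s t with h3 | h3 | h3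
  · have := h.mono.monotone (Nat.succ_le_of_lt h3); simp only [Nat.succ_eq_add_one] at this; omega
  · exact h3
  · have := h.mono.monotone (Nat.succ_le_of_lt h3); simp only [Nat.succ_eq_add_one] at this; omega

variable {P : IWParams}

/-- The vector with coordinates `b i` for `i < n`. -/
noncomputable def trunc (b : ℕ → ℝ) (n : ℕ) : c00 := ∑ i ∈ Finset.range n, Finsupp.single i (b i)

theorem trunc_apply (b : ℕ → ℝ) (n i : ℕ) : trunc b n i = if i < n then b i else 0 := by
  simp [trunc, Finsupp.finsetSum_apply, Finsupp.single_apply]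

/-- The unit vector basis of `X_iw` is boundedly complete: otherwise the partial sums contain
successive blocks of norm at least `δ`, and by the lower estimate on `S_{n_1}` the sum of `r` of them
has norm at least a fixed multiple of `r δ`. -/
theorem boundedly_complete {b : ℕ → ℝ} {M : ℝ} (hM : ∀ n, iwNorm P (trunc b n) ≤ M) {δ : ℝ}
    (hδ : 0 < δ) : ∃ N, ∀ n, N ≤ n → iwNorm P (trunc b n - trunc b N) < δ := by
  classical
  by_contra! hcon
  obtain ⟨p, v, hv, hQ⟩ := exists_blk
    (Q := fun u => iwNorm P u = 1 ∧ ∃ c, δ ≤ c ∧ ∀ i, c * u i = b i ∨ c * u i = 0) (by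
      intro N
      obtain ⟨n, hn, hw⟩ := hcon N
      set w := trunc b n - trunc b N with hwdef
      set c := iwNorm P w with hc
      have hc0 : 0 < c := hδ.trans_le hw
      have hwi : ∀ i, (w i = b i ∨ w i = 0) ∧ (i < N → w i = 0) := by
        intro i
        rw [hwdef, Finsupp.sub_apply, trunc_apply, trunc_apply]
        by_cases h1 : i < N
        · have h2 : i < n := by omega
          simp [h1, h2]
        · by_cases h2 : i < n <;> simp [h1, h2]
      refine ⟨c⁻¹ • w, ⟨?_, c, hw, fun i => ?_⟩, fun i hi => ?_⟩
      · rw [norm_smul', abs_of_pos (inv_pos.2 hc0), ← hc, inv_mul_cancel₀ hc0.ne']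
      · rw [Finsupp.smul_apply, smul_eq_mul, mul_inv_cancel_left₀ hc0.ne']
        exact (hwi i).1
      · by_contra hlt
        have := (hwi i).2 (by omega)
        rw [Finsupp.mem_support_iff, Finsupp.smul_apply, this] at hi
        simp at hi)
  choose hN c hc hcv using hQ
  obtain ⟨C, σ, hC, hσ, hlow⟩ := exists_lowerEst (P := P) hv hN
  have hv' := hv.comp hσ
  obtain ⟨r, hr⟩ := exists_nat_gt (C * P.m 0 * M / δ)
  have hsch : Sch (fun t => p (σ t)) (P.n 0) (Finset.Ico r (2 * r)) := by
    refine Sch.mono (n := 1) ?_ (one_le_n (P := P) 0) fun a _ => hv.one_le' _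
    refine ⟨fun a => a - r, fun a _ b _ hab => Nat.sub_le_sub_right hab r, ?_, ?_⟩
    · intro a ha b hb
      rw [Finset.mem_Ico] at ha hb
      have h1 := hv.le_apply (σ b)
      have h2 := hσ.id_le b
      simp only [id_eq] at h2
      show a - r < p (σ b)
      omega
    · intro k
      refine Finset.card_le_one.2 ?_
      intro a ha b hb
      simp only [Finset.mem_filter, Finset.mem_Ico] at ha hb
      omega
  have h1 := hlow 0 _ (fun t => c (σ t)) (fun t => hδ.le.trans (hc _)) hsch
  have h2 : (r : ℝ) * δ ≤ ∑ t ∈ Finset.Ico r (2 * r), c (σ t) := by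
    have := Finset.card_nsmul_le_sum (Finset.Ico r (2 * r)) (fun t => c (σ t)) δ fun t _ => hc _
    rwa [Nat.card_Ico, show 2 * r - r = r by omega, nsmul_eq_mul] at this
  set S : c00 := ∑ t ∈ Finset.Ico r (2 * r), c (σ t) • v (σ t) with hS
  have hSi : ∀ i, S i = b i ∨ S i = 0 := by
    intro i
    rw [hS, Finsupp.finsetSum_apply]
    by_cases h : ∃ t ∈ Finset.Ico r (2 * r), i ∈ (v (σ t)).support
    · obtain ⟨t, ht, hi⟩ := h
      rw [Finset.sum_eq_single_of_mem t ht]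
      · exact hcv (σ t) i
      · intro s _ hst
        rw [Finsupp.smul_apply]
        by_cases h0 : v (σ s) i = 0
        · rw [h0, smul_zero]
        · exact absurd (hσ.injective (hv.eq_of_mem (Finsupp.mem_support_iff.2 h0) hi)) hst
    · right
      push Not at h
      refine Finset.sum_eq_zero fun t ht => ?_
      rw [Finsupp.smul_apply, Finsupp.notMem_support_iff.1 (h t ht), smul_zero]
  have h3 : iwNorm P S ≤ M := by
    have h4 : S = mulv (fun i => if S i = b i then 1 else 0) (trunc b (S.support.sup id + 1)) := by
      ext i
      rw [mulv_apply, trunc_apply]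
      by_cases hi : S i = 0
      · rcases eq_or_ne (b i) 0 with hb | hb
        · simp [hi, hb]
        · simp [hi, hb.symm]
      · have hb := (hSi i).resolve_right hi
        have : i ≤ S.support.sup id := Finset.le_sup (f := id) (Finsupp.mem_support_iff.2 hi)
        rw [if_pos hb, if_pos (by omega), one_mul, hb]
    rw [h4]
    refine (norm_mulv_le (fun i => ?_) _).trans (hM _)
    by_cases h : S i = b i <;> simp [h]
  have h5 : C * P.m 0 * iwNorm P S ≤ C * P.m 0 * M := mul_le_mul_of_nonneg_left h3 (by positivity)
  rw [div_lt_iff₀ hδ] at hr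
  linarith

section Realization

variable {X : Type*} [NormedAddCommGroup X] [NormedSpace ℝ X] {e : ℕ → X}

theorem norm_phi (hX : IsIWRealization P X e) (a : c00) :
    ‖Finsupp.linearCombination ℝ e a‖ = iwNorm P a := hX.norm_eq a

theorem dense_phi (hX : IsIWRealization P X e) :
    DenseRange (Finsupp.linearCombination ℝ e : c00 → X) := hX.dense

/-- The coordinate functionals of the basis. -/
theorem exists_coord (hX : IsIWRealization P X e) : ∃ f : ℕ → X →L[ℝ] ℝ,
    ∀ i a, f i (Finsupp.linearCombination ℝ e a) = a i := by
  have : ∀ i, ∃ g : X →L[ℝ] ℝ, ‖g‖ ≤ 1 ∧ ∀ a, g (Finsupp.linearCombination ℝ e a) =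
      Finsupp.lapply (R := ℝ) (M := ℝ) i a := fun i =>
    exists_dual_extension e _ zero_le_one fun a => by
      rw [norm_phi hX, one_mul]
      exact abs_apply_le_norm a i
  choose f _ hf using this
  exact ⟨f, hf⟩

/-- A functional which does not become small on tails takes large values on a normalized block
sequence; the blocks spanning `ℓ_∞^n` almost isometrically, built by positive combinations,
contradict this. -/
theorem shrinking (hX : IsIWRealization P X e) (g : X →L[ℝ] ℝ) {δ : ℝ} (hδ : 0 < δ) :
    ∃ N, ∀ u : c00, (∀ i ∈ u.support, N ≤ i) →
      |g (Finsupp.linearCombination ℝ e u)| ≤ δ * iwNorm P u := by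
  by_contra! hcon
  obtain ⟨p, v, hv, hQ⟩ := exists_blk
    (Q := fun u => iwNorm P u = 1 ∧ δ ≤ g (Finsupp.linearCombination ℝ e u)) (by
      intro N
      obtain ⟨u, hu, hgu⟩ := hcon N
      have hu0 : u ≠ 0 := by
        rintro rfl
        simp [norm_zero'] at hgu
      have hc0 : 0 < iwNorm P u := norm_pos' hu0
      set c := iwNorm P u with hc
      obtain ⟨s, hs, hsg⟩ : ∃ s : ℝ, |s| = 1 ∧
          s * g (Finsupp.linearCombination ℝ e u) = |g (Finsupp.linearCombination ℝ e u)| := by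
        rcases abs_cases (g (Finsupp.linearCombination ℝ e u)) with h | h
        · exact ⟨1, by simp, by rw [h.1, one_mul]⟩
        · exact ⟨-1, by simp, by rw [h.1]; ring⟩
      refine ⟨(c⁻¹ * s) • u, ⟨?_, ?_⟩, fun i hi => hu i (Finsupp.support_smul hi)⟩
      · rw [norm_smul', abs_mul, hs, abs_of_pos (inv_pos.2 hc0), mul_one, ← hc,
          inv_mul_cancel₀ hc0.ne']
      · rw [map_smul, map_smul, smul_eq_mul, mul_assoc, hsg, ← div_eq_inv_mul, le_div_iff₀ hc0]
        exact hgu.le)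
  obtain ⟨n, hn⟩ := exists_nat_gt (4 * ‖g‖ / δ)
  obtain ⟨T, z, -, hz, hza⟩ := exists_blocks (P := P) hv (fun k => (hQ k).1)
    (fun r i : Fin n => if r = i then (1 : ℝ) else 0) (by intro r i; split_ifs <;> norm_num)
    (ε := 1 / 2) (by norm_num) (by norm_num)
  have hzg : ∀ i, δ / 2 ≤ g (Finsupp.linearCombination ℝ e (z i)) := by
    intro i
    have h1 := (hza (Pi.single i 1)).1 i
    rw [Finset.sum_eq_single_of_mem i (Finset.mem_univ i)
        (by intro k _ hk; simp [hk]),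
      Finset.sum_eq_single_of_mem i (Finset.mem_univ i)
        (by intro k _ hk; simp [hk])] at h1
    simp only [if_true, Pi.single_eq_same, abs_one, mul_one, one_smul] at h1
    obtain ⟨b, hb, hzb⟩ := hz i
    have h2 : iwNorm P (z i) ≤ ∑ k ∈ Finset.Ico (T i) (T (i + 1)), b k := by
      rw [hzb]
      refine (norm_sum_le' _ _).trans (Finset.sum_le_sum fun k _ => ?_)
      rw [norm_smul', (hQ k).1, mul_one, abs_of_nonneg (hb k)]
    rw [hzb, map_sum, map_sum]
    calc δ / 2 ≤ δ * ∑ k ∈ Finset.Ico (T i) (T (i + 1)), b k := by nlinarith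
      _ ≤ _ := by
        rw [Finset.mul_sum]
        refine Finset.sum_le_sum fun k _ => ?_
        rw [map_smul, map_smul, smul_eq_mul, mul_comm]
        exact mul_le_mul_of_nonneg_left (hQ k).2 (hb k)
  have h1 := (hza fun _ => 1).2 1 zero_le_one (by intro r; simp)
  simp only [one_smul] at h1
  have h2 : g (Finsupp.linearCombination ℝ e (∑ i, z i)) ≤ ‖g‖ * (3 / 2) := by
    refine (le_abs_self _).trans ((g.le_opNorm _).trans ?_)
    rw [norm_phi hX]
    exact mul_le_mul_of_nonneg_left (by linarith) (norm_nonneg _)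
  rw [map_sum, map_sum] at h2
  have h3 : (n : ℝ) * (δ / 2) ≤ ∑ i, g (Finsupp.linearCombination ℝ e (z i)) := by
    have := Finset.card_nsmul_le_sum Finset.univ
      (fun i => g (Finsupp.linearCombination ℝ e (z i))) (δ / 2) fun i _ => hzg i
    rwa [Finset.card_univ, Fintype.card_fin, nsmul_eq_mul] at this
  rw [div_lt_iff₀ hδ] at hn
  have := norm_nonneg g
  linarith

/-- `X_iw` is reflexive, its basis being shrinking and boundedly complete: `Φ` in the bidual is
evaluation at `∑ Φ (e_i^*) e_i`. -/
theorem reflexive (hX : IsIWRealization P X e) :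
    Function.Surjective (NormedSpace.inclusionInDoubleDual ℝ X) := by
  classical
  have := hX.complete
  obtain ⟨f, hf⟩ := exists_coord hX
  set φ := Finsupp.linearCombination ℝ e with hφ
  have hφe : ∀ i, φ (Finsupp.single i 1) = e i := by intro i; simp [hφ]
  intro Φ
  set b : ℕ → ℝ := fun i => Φ (f i) with hb
  have hφt : ∀ (c : ℕ → ℝ) n, φ (trunc c n) = ∑ i ∈ Finset.range n, c i • e i := by
    intro c n
    simp [trunc, hφ]
  -- the basis projections, composed with a functional
  let Q : (X →L[ℝ] ℝ) → ℕ → X →L[ℝ] ℝ := fun g n => ∑ i ∈ Finset.range n, g (e i) • f i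
  have hQa : ∀ g n a, Q g n (φ a) = g (φ (trunc (fun i => a i) n)) := by
    intro g n a
    simp only [Q, _root_.sum_apply, _root_.smul_apply, hf, hφt, map_sum,
      map_smul, smul_eq_mul]
    exact Finset.sum_congr rfl fun i _ => mul_comm _ _
  have hmul : ∀ (a : c00) n, trunc (fun i => a i) n = mulv (fun i => if i < n then 1 else 0) a := by
    intro a n
    ext i
    rw [trunc_apply, mulv_apply]
    by_cases h : i < n <;> simp [h]
  have hmul' : ∀ (a : c00) n,
      a - trunc (fun i => a i) n = mulv (fun i => if i < n then 0 else 1) a := by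
    intro a n
    ext i
    rw [Finsupp.sub_apply, trunc_apply, mulv_apply]
    by_cases h : i < n <;> simp [h]
  have hext : ∀ (g : X →L[ℝ] ℝ) {D : ℝ}, 0 ≤ D → (∀ a, |g (φ a)| ≤ D * iwNorm P a) → ‖g‖ ≤ D := by
    intro g D hD h
    refine g.opNorm_le_bound hD fun x => ?_
    refine (dense_phi hX).induction_on (p := fun x => ‖g x‖ ≤ D * ‖x‖) x
      (isClosed_le (by fun_prop) (by fun_prop)) fun a => ?_
    rw [norm_phi hX]
    exact h a
  have hQn : ∀ g n, ‖Q g n‖ ≤ ‖g‖ := by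
    intro g n
    refine hext _ (norm_nonneg _) fun a => ?_
    rw [hQa]
    refine (g.le_opNorm _).trans (mul_le_mul_of_nonneg_left ?_ (norm_nonneg _))
    rw [norm_phi hX, hmul]
    exact norm_mulv_le (fun i => by by_cases h : i < n <;> simp [h]) a
  have hQt : ∀ g, Tendsto (Q g) atTop (𝓝 g) := by
    intro g
    rw [Metric.tendsto_atTop]
    intro ε hε
    obtain ⟨N, hN⟩ := shrinking hX g (half_pos hε)
    refine ⟨N, fun n hn => ?_⟩
    rw [dist_comm, dist_eq_norm]
    refine lt_of_le_of_lt (hext _ (half_pos hε).le fun a => ?_) (half_lt_self hε)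
    rw [_root_.sub_apply, hQa, ← map_sub, ← map_sub, hmul']
    refine (hN _ ?_).trans (mul_le_mul_of_nonneg_left ?_ (half_pos hε).le)
    · intro i hi
      rw [Finsupp.mem_support_iff, mulv_apply] at hi
      by_contra hlt
      rw [if_pos (by omega), zero_mul] at hi
      exact hi rfl
    · exact norm_mulv_le (fun i => by by_cases h : i < n <;> simp [h]) a
  have hΦQ : ∀ g n, g (φ (trunc b n)) = Φ (Q g n) := by
    intro g n
    rw [hφt, map_sum]
    simp only [Q, map_sum, map_smul, smul_eq_mul, hb]
    exact Finset.sum_congr rfl fun i _ => mul_comm _ _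
  have hbd : ∀ n, iwNorm P (trunc b n) ≤ ‖Φ‖ := by
    intro n
    rw [← norm_phi hX]
    refine NormedSpace.norm_le_dual_bound ℝ _ Φ.opNorm_nonneg fun g => ?_
    have h1 : g (φ (trunc b n)) = Φ (Q g n) := hΦQ g n
    rw [h1]
    exact (Φ.le_opNorm _).trans (mul_le_mul_of_nonneg_left (hQn g n) (norm_nonneg _))
  have hcau : CauchySeq fun n => φ (trunc b n) := by
    rw [Metric.cauchySeq_iff']
    intro ε hε
    obtain ⟨N, hN⟩ := boundedly_complete hbd hε
    refine ⟨N, fun n hn => ?_⟩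
    rw [dist_eq_norm, ← map_sub, norm_phi hX]
    exact hN n hn
  obtain ⟨x, hx⟩ := cauchySeq_tendsto_of_complete hcau
  refine ⟨x, ?_⟩
  ext g
  rw [NormedSpace.dual_def]
  have h1 : Tendsto (fun n => g (φ (trunc b n))) atTop (𝓝 (g x)) := (g.continuous.tendsto x).comp hx
  have h2 : Tendsto (fun n => Φ (Q g n)) atTop (𝓝 (Φ g)) := (Φ.continuous.tendsto g).comp (hQt g)
  simp only [hΦQ] at h1
  exact tendsto_nhds_unique h1 h2

/-! ### Block representability -/

/-- The representing blocks come from `exists_blocks`, applied to finitely many functionals that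
norm `ℓ_q^n` up to `1 - δ`. -/
theorem krivine (hX : IsIWRealization P X e) {Y : Set X} (hY : IsBlockSubspace e Y) {q : ℝ≥0∞}
    (hq : 1 ≤ q) (n : ℕ) : BlockRepresentableIn e Y (finLqNorm q n) := by
  classical
  obtain ⟨y, ⟨F, -, hFlt, hFy⟩, hnorm, rfl⟩ := hY
  have hu : ∀ k, ∃ u : c00, (∀ i ∈ u.support, i ∈ F k) ∧ Finsupp.linearCombination ℝ e u = y k := by
    intro k
    obtain ⟨u, hu, huy⟩ := (Finsupp.mem_span_image_iff_linearCombination ℝ).1 (hFy k).2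
    refine ⟨u, fun i hi => ?_, huy⟩
    exact_mod_cast (Finsupp.mem_supported ℝ u).1 hu hi
  choose u huF huy using hu
  have huN : ∀ k, iwNorm P (u k) = 1 := by
    intro k
    rw [← norm_phi hX, huy]
    exact hnorm k
  have hune : ∀ k, (u k).support.Nonempty := by
    intro k
    rw [Finsupp.support_nonempty_iff]
    intro h
    have := huN k
    rw [h, norm_zero'] at this
    exact zero_ne_one this
  have hlt : ∀ k l, k < l → ∀ i ∈ (u k).support, ∀ j ∈ (u l).support, i < j :=
    fun k l hkl i hi j hj => hFlt k l hkl i (huF k i hi) j (huF l j hj)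
  -- the first block is dropped so that all supports avoid the index `0`
  have hv : Blk (fun k => minSupp (u (k + 1))) (fun k => u (k + 1)) := by
    refine ⟨strictMono_nat_of_lt_succ fun k => ?_, ?_, fun t i hi => ⟨minSupp_le hi, ?_⟩⟩
    · exact hlt _ _ (Nat.lt_succ_self _) _ (minSupp_mem (hune _)) _ (minSupp_mem (hune _))
    · exact Nat.one_le_of_lt (hlt 0 1 one_pos _ (minSupp_mem (hune 0)) _ (minSupp_mem (hune 1)))
    · exact hlt _ _ (Nat.lt_succ_self _) _ hi _ (minSupp_mem (hune _))
  intro ε hε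
  -- `(1 + δ) / ((1 - δ) * (1 - δ)) ≤ 1 + ε`
  obtain ⟨δ, hδ0, hδ1, hδε⟩ : ∃ δ : ℝ, 0 < δ ∧ δ ≤ 1 / 2 ∧
      1 + δ ≤ (1 + ε) * ((1 - δ) * (1 - δ)) := by
    refine ⟨min ε 1 / 8, by positivity, ?_, ?_⟩
    · have := min_le_right ε 1
      linarith
    · have h1 := min_le_left ε 1
      have h2 := min_le_right ε 1
      have h3 : 0 < min ε 1 := by positivity
      set μ := min ε 1
      have h4 : 1 + μ / 8 ≤ (1 + μ) * ((1 - μ / 8) * (1 - μ / 8)) := by nlinarith [mul_pos h3 h3]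
      exact h4.trans (mul_le_mul_of_nonneg_right (by linarith) (mul_self_nonneg _))
  obtain ⟨hcoord, R, lam, hlam, hnet⟩ := finLqNorm_net hq n hδ0
  obtain ⟨T, z, hT, hz, hza⟩ := exists_blocks (P := P) hv (fun k => huN (k + 1)) lam
    (fun r i => (hlam r).1 i) hδ0 (by linarith)
  set ν := finLqNorm q n with hν
  have hup : ∀ a, iwNorm P (∑ i, a i • z i) ≤ (1 + δ) * ν a := by
    intro a
    obtain ⟨r, -⟩ := hnet a
    refine (hza a).2 _ ?_ fun r => (hlam r).2 a
    exact (Finset.sum_nonneg fun i _ => mul_nonneg ((hlam r).1 i) (abs_nonneg _)).trans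
      ((hlam r).2 a)
  have hlo : ∀ a, ((1 - δ) * (1 - δ)) * ν a ≤ iwNorm P (∑ i, a i • z i) := by
    intro a
    obtain ⟨r, hr⟩ := hnet a
    rw [mul_assoc]
    exact (mul_le_mul_of_nonneg_left hr (by linarith)).trans ((hza a).1 r)
  have hpos : 0 < (1 - δ) * (1 - δ) := by
    have : 0 < 1 - δ := by linarith
    positivity
  have hz0 : ∀ i, z i ≠ 0 := by
    intro i hi
    have h1 := hlo (Pi.single i 1)
    rw [Finset.sum_eq_single_of_mem i (Finset.mem_univ i) (by intro k _ hk; simp [hk]), hi,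
      smul_zero, norm_zero'] at h1
    have h2 := hcoord (Pi.single i 1) i
    rw [Pi.single_eq_same, abs_one] at h2
    nlinarith
  refine ⟨fun i => Finsupp.linearCombination ℝ e (z i), fun i => ?_, ?_, ?_⟩
  · refine subset_closure ?_
    obtain ⟨b, -, hb⟩ := hz i
    show Finsupp.linearCombination ℝ e (z i) ∈ Submodule.span ℝ (Set.range y)
    rw [hb, map_sum]
    refine Submodule.sum_mem _ fun k _ => ?_
    rw [map_smul, huy]
    exact Submodule.smul_mem _ _ (Submodule.subset_span ⟨_, rfl⟩)
  · refine ⟨fun i => (z i).support, fun i => Finsupp.support_nonempty_iff.2 (hz0 i), ?_, ?_⟩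
    · intro k l hkl i hi j hj
      have h1 := (PosComb.mem hv (hz k) hi).2
      have h2 := (PosComb.mem hv (hz l) hj).1
      have h3 : T (k + 1) ≤ T l := hT.monotone (by simpa using Nat.succ_le_of_lt hkl)
      exact lt_of_lt_of_le h1 ((hv.mono.monotone h3).trans h2)
    · intro k
      refine ⟨fun h => hz0 k ?_, ?_⟩
      · by_contra hne
        have h1 := norm_pos' (P := P) hne
        rw [← norm_phi hX, show Finsupp.linearCombination ℝ e (z k) = 0 from h, norm_zero] at h1
        exact lt_irrefl _ h1
      · exact (Finsupp.mem_span_image_iff_linearCombination ℝ).2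
          ⟨z k, (Finsupp.mem_supported ℝ (z k)).2 subset_rfl, rfl⟩
  · refine ⟨((1 - δ) * (1 - δ))⁻¹, 1 + δ, inv_pos.2 hpos, by linarith, ?_, fun a => ?_⟩
    · rw [inv_mul_le_iff₀ hpos, mul_comm]
      exact hδε
    · have h1 : ∑ i, a i • Finsupp.linearCombination ℝ e (z i) =
          Finsupp.linearCombination ℝ e (∑ i, a i • z i) := by
        rw [map_sum]
        exact Finset.sum_congr rfl fun i _ => (map_smul _ _ _).symm
      rw [h1, norm_phi hX, one_div, inv_inv]
      exact ⟨hlo a, hup a⟩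

end Realization

end IW

/-- The space `X_iw` is reflexive, contains no isomorphic copy of ℓ₁
or of c₀, and for every block subspace `Y` of `X_iw` and every `p ∈ [1,∞]` the unit
vector basis of ℓ_p (of c₀ when `p = ∞`) is finitely block representable in `Y`; i.e.
the Krivine set of every block subspace of `X_iw` equals `[1,∞]`. -/
theorem statement14 (P : IWParams) (X : Type*) [NormedAddCommGroup X] [NormedSpace ℝ X]
    (e : ℕ → X) (hX : IsIWRealization P X e) :
    Function.Surjective (NormedSpace.inclusionInDoubleDual ℝ X) ∧
    (¬ ∃ x : ℕ → X, ∃ A B : ℝ, 0 < A ∧ 0 < B ∧ ∀ (m : ℕ) (a : Fin m → ℝ),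
      (1 / A) * l1Norm m a ≤ ‖∑ i, a i • x i‖ ∧ ‖∑ i, a i • x i‖ ≤ B * l1Norm m a) ∧
    (¬ ∃ x : ℕ → X, ∃ A B : ℝ, 0 < A ∧ 0 < B ∧ ∀ (m : ℕ) (a : Fin m → ℝ),
      (1 / A) * supNorm m a ≤ ‖∑ i, a i • x i‖ ∧ ‖∑ i, a i • x i‖ ≤ B * supNorm m a) ∧
    (∀ Y : Set X, IsBlockSubspace e Y → ∀ q : ℝ≥0∞, 1 ≤ q →
      ∀ n : ℕ, BlockRepresentableIn e Y (finLqNorm q n)) := by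
  have hr := IW.reflexive hX
  exact ⟨hr, IW.not_l1 hr, IW.not_c0 hr, fun _ hY _ hq n => IW.krivine hX hY hq n⟩
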